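/- Let c be a negative integer. The equation L_n − 2^x · 3^y = c has at least three pairwise distinct solutions (n, x, y) in nonnegative integers if and only if c ∈ {−133, −97, −61, −52, −25, −21, −20, −17, −14, −9, −7, −6, −5, −3, −2, −1}. -/

import Mathlib

/-- The Lucas sequence: L 0 = 2, L 1 = 1, L (n+2) = L (n+1) + L n. -/
def lucas : ℕ → ℤ
  | 0 => 2
  | 1 => 1
  | n + 2 => lucas (n + 1) + lucas n

theorem lucas_eq_fib (n : ℕ) : lucas n = 2 * (Nat.fib (n + 1) : ℤ) - Nat.fib n := by
  induction n using Nat.strong_induction_on with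
  | _ n ih =>
    match n with
    | 0 => simp [lucas]
    | 1 => simp [lucas]
    | n + 2 =>
      rw [lucas, ih (n + 1) (by omega), ih n (by omega), Nat.fib_add_two (n := n + 1),
        Nat.fib_add_two (n := n)]
      push_cast
      ring

namespace Sieve

/-- Evaluates `n` to a literal before passing it on; the recursor makes kernel reduction strict. -/
noncomputable def force {α : Type} (n : ℕ) (f : ℕ → α) : α :=
  Nat.rec (f 0) (fun k _ => f (Nat.succ k)) n

theorem force_eq {α : Type} (n : ℕ) (f : ℕ → α) : force n f = f n := by
  cases n <;> rfl

noncomputable def fold {α β : Type} (f : α → β → β) (acc : β) (l : List α) : β :=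
  List.rec acc (fun a _ ih => f a ih) l

theorem fold_mem {α β : Type} (P : β → Prop) {f : α → β → β} {a : α}
    (hf : ∀ a b, P b → P (f a b)) (ha : ∀ b, P (f a b)) (acc : β) {l : List α} (h : a ∈ l) :
    P (fold f acc l) := by
  induction l with
  | nil => simp at h
  | cons b l ih =>
    rcases List.mem_cons.1 h with rfl | h
    · exact ha _
    · exact hf _ _ (ih h)

theorem fold_acc {α β : Type} (P : β → Prop) {f : α → β → β}
    (hf : ∀ a b, P b → P (f a b)) {acc : β} (h : P acc) (l : List α) : P (fold f acc l) := by
  induction l with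
  | nil => exact h
  | cons b l ih => exact hf _ _ ih

/-- Folds `f` over `r, r + T, …, r + (q - 1) T`. -/
noncomputable def sweep {β : Type} (T q r : ℕ) (f : ℕ → β → β) (acc : β) : β :=
  Nat.rec (fun _ => acc) (fun _ ih r => f r (force (Nat.add r T) ih)) q r

theorem sweep_succ {β : Type} (T q r : ℕ) (f : ℕ → β → β) (acc : β) :
    sweep T (q + 1) r f acc = f r (sweep T q (r + T) f acc) :=
  congrArg (f r) (force_eq _ _)

theorem sweep_acc {β : Type} (P : β → Prop) {f : ℕ → β → β} (hf : ∀ a b, P b → P (f a b))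
    {acc : β} (h : P acc) (T q r : ℕ) : P (sweep T q r f acc) := by
  induction q generalizing r with
  | zero => exact h
  | succ q ih => rw [sweep_succ]; exact hf _ _ (ih _)

theorem sweep_mem {β : Type} (P : β → Prop) {f : ℕ → β → β} (hf : ∀ a b, P b → P (f a b))
    {T q r i : ℕ} (hi : i < q) (ha : ∀ b, P (f (r + i * T) b)) (acc : β) :
    P (sweep T q r f acc) := by
  induction q generalizing r i with
  | zero => omega
  | succ q ih =>
    rw [sweep_succ]
    rcases i with _ | i
    · exact (by simpa using ha : ∀ b, P (f r b)) _
    · refine hf _ _ (ih (i := i) (by omega) ?_)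
      rwa [show r + T + i * T = r + (i + 1) * T by ring]

noncomputable def sweepRes {β : Type} (k T q r : ℕ) (f : ℕ → β → β) (acc : β) : β :=
  Bool.rec (sweep T q r f acc) (f r acc) (Nat.blt r k)

/-- Folds `f` over the residues refining the class of `r` when the threshold moves from `k` to `k'`
and the modulus from `T` to `q T`. -/
noncomputable def sweepExp {β : Type} (k k' T q r : ℕ) (f : ℕ → β → β) (acc : β) : β :=
  Bool.rec (sweepRes k' T q r f acc)
    (f r (force (Nat.add r T) fun s => sweepRes k' T q s f acc))
    (Bool.rec false (Nat.blt r k') (Nat.beq r k))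

/-- The class of `x` is `r`: either `x = r` is below the threshold `k`, or `x ≥ r ≥ k` and
`x ≡ r` modulo `T`. -/
def InExp (k T r x : ℕ) : Prop := (r < k ∧ x = r) ∨ (k ≤ r ∧ ∃ i, x = r + i * T)

theorem sweepRes_acc {β : Type} (P : β → Prop) {f : ℕ → β → β} (hf : ∀ a b, P b → P (f a b))
    {acc : β} (h : P acc) (k T q r : ℕ) : P (sweepRes k T q r f acc) := by
  unfold sweepRes
  cases Nat.blt r k
  · exact sweep_acc P hf h _ _ _
  · exact hf _ _ h

theorem sweepExp_acc {β : Type} (P : β → Prop) {f : ℕ → β → β} (hf : ∀ a b, P b → P (f a b))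
    {acc : β} (h : P acc) (k k' T q r : ℕ) : P (sweepExp k k' T q r f acc) := by
  unfold sweepExp
  rw [force_eq]
  generalize (Bool.rec false (Nat.blt r k') (Nat.beq r k) : Bool) = b
  cases b
  · exact sweepRes_acc P hf h _ _ _ _
  · exact hf _ _ (sweepRes_acc P hf h _ _ _ _)

theorem blt_eq (a b : ℕ) : Nat.blt a b = decide (a < b) := by
  rw [Bool.eq_iff_iff]; simp [Nat.blt]

theorem beq_eq (a b : ℕ) : Nat.beq a b = decide (a = b) := by
  rw [Bool.eq_iff_iff]; simp

theorem sweepRes_mem {k T T' r x : ℕ} (hT : T ∣ T') (hT' : 0 < T') (hx : InExp k T r x) :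
    ∃ r', InExp k T' r' x ∧ ∀ {β : Type} (P : β → Prop) (f : ℕ → β → β) (acc : β),
      (∀ a b, P b → P (f a b)) → (∀ b, P (f r' b)) → P (sweepRes k T (T' / T) r f acc) := by
  obtain ⟨q, rfl⟩ := hT
  have hT0 : 0 < T := Nat.pos_of_mul_pos_right hT'
  have hq : 0 < q := Nat.pos_of_mul_pos_left hT'
  rcases hx with ⟨h1, h2⟩ | ⟨h1, i, h2⟩
  · refine ⟨r, Or.inl ⟨h1, h2⟩, fun P f acc _ h => ?_⟩
    simpa [sweepRes, blt_eq, h1] using h acc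
  · refine ⟨r + i % q * T, Or.inr ⟨by omega, i / q, ?_⟩, fun P f acc hf h => ?_⟩
    · rw [h2, add_assoc, add_right_inj]
      nth_rw 1 [← Nat.mod_add_div i q]
      ring
    · have : ¬ r < k := by omega
      simpa [sweepRes, blt_eq, this, Nat.mul_div_cancel_left q hT0]
        using sweep_mem P hf (Nat.mod_lt i hq) h acc

theorem sweepExp_mem {k k' T T' r x : ℕ} (hk : k ≤ k') (hk' : k' ≤ k + 1) (hT : T ∣ T')
    (hT' : 0 < T') (hx : InExp k T r x) :
    ∃ r', InExp k' T' r' x ∧ ∀ {β : Type} (P : β → Prop) (f : ℕ → β → β) (acc : β),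
      (∀ a b, P b → P (f a b)) → (∀ b, P (f r' b)) → P (sweepExp k k' T (T' / T) r f acc) := by
  have hT0 : 0 < T := Nat.pos_of_dvd_of_pos hT hT'
  by_cases hr : r = k ∧ r < k'
  · have hb : (Bool.rec false (Nat.blt r k') (Nat.beq r k) : Bool) = true := by
      simp [blt_eq, hr.1, hr.1 ▸ hr.2]
    obtain ⟨-, i, hi⟩ : k ≤ r ∧ ∃ i, x = r + i * T := hx.resolve_left (by omega)
    rcases i with _ | i
    · refine ⟨r, Or.inl ⟨hr.2, by simpa using hi⟩, fun P f acc _ h => ?_⟩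
      rw [sweepExp, hb]; exact h _
    · obtain ⟨r', h1, h2⟩ := sweepRes_mem (k := k') (r := r + T) (x := x) hT hT'
        (Or.inr ⟨by omega, i, by rw [hi]; ring⟩)
      refine ⟨r', h1, fun P f acc hf h => ?_⟩
      rw [sweepExp, hb, force_eq]; exact hf _ _ (h2 P f acc hf h)
  · have hb : (Bool.rec false (Nat.blt r k') (Nat.beq r k) : Bool) = false := by
      by_cases h : r = k
      · have : ¬ r < k' := fun h' => hr ⟨h, h'⟩
        simp [blt_eq, ← h, this]
      · simp [beq_eq, h]
    obtain ⟨r', h1, h2⟩ := sweepRes_mem (k := k') (r := r) (x := x) hT hT' (by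
      rcases hx with ⟨h1, h2⟩ | ⟨h1, i, hi⟩
      · exact Or.inl ⟨by omega, h2⟩
      · exact Or.inr ⟨by omega, i, hi⟩)
    refine ⟨r', h1, fun P f acc hf h => ?_⟩
    rw [sweepExp, hb]; exact h2 P f acc hf h

/-- Fast doubling for Fibonacci pairs modulo `m`. -/
noncomputable def fibPair (m fuel : ℕ) : ℕ → ℕ × ℕ :=
  Nat.rec (fun _ => (0, 1)) (fun _ ih n => force (Nat.div n 2) fun h =>
    Prod.rec (fun a b =>
      force (Nat.mod (Nat.mul a (Nat.add (Nat.mul 2 b) (Nat.sub m a))) m) fun c =>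
      force (Nat.mod (Nat.add (Nat.mul a a) (Nat.mul b b)) m) fun d =>
      Bool.rec (c, d) (force (Nat.mod (Nat.add c d) m) fun e => (d, e))
        (Nat.beq (Nat.mod n 2) 1)) (Bool.rec (ih h) (0, 1) (Nat.beq n 0))) fuel

noncomputable def lucasMod (m n : ℕ) : ℕ :=
  Prod.rec (fun a b => Nat.mod (Nat.add (Nat.mul 2 b) (Nat.sub m a)) m) (fibPair m 40 n)

theorem fibPair_succ (m fuel n : ℕ) : fibPair m (fuel + 1) n =
    let p := if n = 0 then (0, 1) else fibPair m fuel (n / 2)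
    let c := p.1 * (2 * p.2 + (m - p.1)) % m
    let d := (p.1 * p.1 + p.2 * p.2) % m
    if n % 2 = 1 then (d, (c + d) % m) else (c, d) := by
  have : fibPair m (fuel + 1) n = force (Nat.div n 2) fun h =>
    Prod.rec (fun a b =>
      force (Nat.mod (Nat.mul a (Nat.add (Nat.mul 2 b) (Nat.sub m a))) m) fun c =>
      force (Nat.mod (Nat.add (Nat.mul a a) (Nat.mul b b)) m) fun d =>
      Bool.rec (c, d) (force (Nat.mod (Nat.add c d) m) fun e => (d, e))
        (Nat.beq (Nat.mod n 2) 1)) (Bool.rec (fibPair m fuel h) (0, 1) (Nat.beq n 0)) := rfl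
  rw [this]
  simp only [force_eq, beq_eq]
  have e : Nat.mod n 2 = n % 2 := rfl
  rw [e]
  by_cases h0 : n = 0 <;> by_cases h1 : n % 2 = 1 <;> simp only [h0, h1] <;> rfl

theorem fibPair_spec {m : ℕ} (hm : 0 < m) (fuel n : ℕ) (hn : n < 2 ^ fuel) :
    (fibPair m fuel n).1 ≤ m ∧ (fibPair m fuel n).1 ≡ Nat.fib n [MOD m] ∧
      (fibPair m fuel n).2 ≡ Nat.fib (n + 1) [MOD m] := by
  induction fuel generalizing n with
  | zero =>
    obtain rfl : n = 0 := by simpa using hn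
    exact ⟨Nat.zero_le _, Nat.ModEq.refl _, Nat.ModEq.refl _⟩
  | succ fuel ih =>
    rw [fibPair_succ]
    obtain ⟨p, hp, h1, h2, h3⟩ : ∃ p : ℕ × ℕ, p = (if n = 0 then (0, 1) else fibPair m fuel (n / 2))
        ∧ p.1 ≤ m ∧ p.1 ≡ Nat.fib (n / 2) [MOD m] ∧ p.2 ≡ Nat.fib (n / 2 + 1) [MOD m] := by
      refine ⟨_, rfl, ?_⟩
      split_ifs with h
      · subst h; exact ⟨Nat.zero_le _, Nat.ModEq.refl _, Nat.ModEq.refl _⟩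
      · exact ih _ (by rw [pow_succ] at hn; omega)
    rw [← hp]
    have hc : p.1 * (2 * p.2 + (m - p.1)) % m ≡ Nat.fib (2 * (n / 2)) [MOD m] := by
      refine (Nat.mod_modEq _ _).trans ?_
      rw [Nat.fib_two_mul]
      have hle : Nat.fib (n / 2) ≤ 2 * Nat.fib (n / 2 + 1) := by
        have := Nat.fib_le_fib_succ (n := n / 2); omega
      refine h2.mul ?_
      rw [← Int.natCast_modEq_iff] at *
      push_cast [hle, h1]
      have := (h3.mul_left 2).add ((Int.modEq_zero_iff_dvd.2 (dvd_refl (m : ℤ))).sub h2)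
      simpa [sub_eq_add_neg] using this
    have hd : (p.1 * p.1 + p.2 * p.2) % m ≡ Nat.fib (2 * (n / 2) + 1) [MOD m] := by
      refine (Nat.mod_modEq _ _).trans ?_
      rw [Nat.fib_two_mul_add_one, sq, sq, add_comm]
      exact (h3.mul h3).add (h2.mul h2)
    dsimp only
    split_ifs with h
    · have e : n = 2 * (n / 2) + 1 := by omega
      refine ⟨(Nat.mod_lt _ hm).le, by rw [← e] at hd; exact hd, (Nat.mod_modEq _ _).trans ?_⟩
      rw [show n + 1 = 2 * (n / 2) + 2 by omega, Nat.fib_add_two]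
      exact hc.add hd
    · have e : 2 * (n / 2) = n := by omega
      rw [e] at hc hd
      exact ⟨(Nat.mod_lt _ hm).le, hc, hd⟩

theorem lucasMod_spec {m n : ℕ} (hm : 0 < m) (hn : n < 2 ^ 40) :
    (lucasMod m n : ℤ) ≡ lucas n [ZMOD m] := by
  obtain ⟨h1, h2, h3⟩ := fibPair_spec hm 40 n hn
  have : lucasMod m n = (2 * (fibPair m 40 n).2 + (m - (fibPair m 40 n).1)) % m := rfl
  rw [this, lucas_eq_fib]
  push_cast [h1]
  refine (Int.mod_modEq _ _).trans ?_
  rw [← Int.natCast_modEq_iff] at h2 h3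
  have := (h3.mul_left 2).add ((Int.modEq_zero_iff_dvd.2 (dvd_refl (m : ℤ))).sub h2)
  simpa [sub_eq_add_neg] using this

theorem lucas_periodic {m T : ℕ} (h0 : lucas T ≡ 2 [ZMOD m]) (h1 : lucas (T + 1) ≡ 1 [ZMOD m])
    (r i : ℕ) : lucas (r + i * T) ≡ lucas r [ZMOD m] := by
  have key : ∀ r, lucas (r + T) ≡ lucas r [ZMOD m] ∧ lucas (r + 1 + T) ≡ lucas (r + 1) [ZMOD m] := by
    intro r
    induction r with
    | zero => simpa [lucas, add_comm] using ⟨h0, h1⟩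
    | succ r ih =>
      refine ⟨ih.2, ?_⟩
      have := ih.2.add ih.1
      rw [show r + 1 + 1 + T = r + T + 2 by ring, lucas, lucas]
      rwa [show r + T + 1 = r + 1 + T by ring]
  induction i with
  | zero => simp
  | succ i ih =>
    rw [show r + (i + 1) * T = r + i * T + T by ring]
    exact (key _).1.trans ih

/-- Residue of `b ^ x` modulo `m` for `x` in the class of `r`. -/
noncomputable def powMod (b m k o r : ℕ) : ℕ :=
  Nat.mod (Nat.pow b (Bool.rec (Nat.add k (Nat.mod (Nat.sub r k) o)) r (Nat.blt r k))) m

theorem pow_add_mul_modEq {b m k o : ℕ} (h : b ^ (k + o) ≡ b ^ k [MOD m]) (d i : ℕ) :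
    b ^ (k + d + i * o) ≡ b ^ (k + d) [MOD m] := by
  induction i with
  | zero => simp [Nat.ModEq.refl]
  | succ i ih =>
    refine Nat.ModEq.trans ?_ ih
    rw [show k + d + (i + 1) * o = k + o + (d + i * o) by ring,
      show k + d + i * o = k + (d + i * o) by ring, pow_add b (k + o), pow_add b k (d + _)]
    exact h.mul_right _

theorem powMod_modEq {b m k o T r x : ℕ} (h : b ^ (k + o) ≡ b ^ k [MOD m]) (ho : o ∣ T)
    (hx : InExp k T r x) : powMod b m k o r ≡ b ^ x [MOD m] := by
  have e : powMod b m k o r = b ^ (if r < k then r else k + (r - k) % o) % m := by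
    by_cases hr : r < k
    · simp only [powMod, blt_eq, hr, decide_true, if_true]; rfl
    · simp only [powMod, blt_eq, hr, decide_false, if_false]; rfl
  rw [e]
  refine (Nat.mod_modEq _ _).trans ?_
  rcases hx with ⟨h1, rfl⟩ | ⟨h1, i, rfl⟩
  · simp [h1, Nat.ModEq.refl]
  · obtain ⟨q, rfl⟩ := ho
    rw [if_neg (by omega)]
    have : r + i * (o * q) = k + (r - k) % o + ((r - k) / o + i * q) * o := by
      have := Nat.mod_add_div (r - k) o
      calc r + i * (o * q) = k + (r - k) + i * (o * q) := by omega
        _ = k + ((r - k) % o + o * ((r - k) / o)) + i * (o * q) := by rw [this]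
        _ = _ := by ring
    rw [this]
    exact (pow_add_mul_modEq h _ _).symm

/-- A level of the sieve: indices are known modulo `n`; exponents of `2` exactly below `k` and
modulo `x` from there on; exponents of `3` exactly below `j` and modulo `y` from there on. -/
structure Grid where
  n : ℕ
  x : ℕ
  y : ℕ
  k : ℕ
  j : ℕ

/-- A sieve step: refine to the level `g`, then compare modulo `m`; `o₂` and `o₃` are the eventual
periods of the powers of `2` and `3` modulo `m`. -/
structure Op where
  m : ℕ
  o₂ : ℕ
  o₃ : ℕ
  g : Grid

structure Cls where
  n : ℕ
  x : ℕ
  y : ℕ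

def InCls (g : Grid) (c : Cls) (n x y : ℕ) : Prop :=
  (c.n < g.n ∧ ∃ i, n = c.n + i * g.n) ∧ InExp g.k g.x c.x x ∧ InExp g.j g.y c.y y

/-- Folds `f` over the classes refining `c`, together with the residue of `L n - 2 ^ x * 3 ^ y`. -/
noncomputable def side {β : Type} (g : Grid) (t : Op) (c : Cls) (f : ℕ → Cls → β → β) (acc : β) :
    β :=
  sweep g.n (Nat.div t.g.n g.n) c.n (fun n => force (lucasMod t.m n) fun u =>
    sweepExp g.k t.g.k g.x (Nat.div t.g.x g.x) c.x fun x =>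
      force (Nat.sub t.m (powMod 2 t.m t.g.k t.o₂ x)) fun a =>
    sweepExp g.j t.g.j g.y (Nat.div t.g.y g.y) c.y fun y =>
      force (Nat.mod (Nat.add u (Nat.mul a (powMod 3 t.m t.g.j t.o₃ y))) t.m) fun v =>
    f v ⟨n, x, y⟩) acc

def Valid (g : Grid) (t : Op) : Prop :=
  (0 < t.m ∧ 0 < t.g.n ∧ t.g.n < 549755813887 ∧ 0 < t.g.x ∧ 0 < t.g.y) ∧
  (Nat.mod t.g.n g.n = 0 ∧ Nat.mod t.g.x g.x = 0 ∧ Nat.mod t.g.y g.y = 0) ∧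
  (Nat.mod t.g.x t.o₂ = 0 ∧ Nat.mod t.g.y t.o₃ = 0) ∧
  (g.k ≤ t.g.k ∧ t.g.k ≤ g.k + 1 ∧ g.j ≤ t.g.j ∧ t.g.j ≤ g.j + 1) ∧
  Nat.mod (lucasMod t.m t.g.n) t.m = Nat.mod 2 t.m ∧
  Nat.mod (lucasMod t.m (t.g.n + 1)) t.m = Nat.mod 1 t.m ∧
  Nat.mod (Nat.pow 2 (Nat.add t.g.k t.o₂)) t.m = Nat.mod (Nat.pow 2 t.g.k) t.m ∧
  Nat.mod (Nat.pow 3 (Nat.add t.g.j t.o₃)) t.m = Nat.mod (Nat.pow 3 t.g.j) t.m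

noncomputable instance (g : Grid) (t : Op) : Decidable (Valid g t) := by unfold Valid; infer_instance

noncomputable def residue (m n x y : ℕ) : ℕ := ((lucas n - 2 ^ x * 3 ^ y) % m).toNat

theorem side_acc {β : Type} (P : β → Prop) {g : Grid} {t : Op} {c : Cls} {f : ℕ → Cls → β → β}
    (hf : ∀ v c b, P b → P (f v c b)) {acc : β} (h : P acc) : P (side g t c f acc) := by
  unfold side
  refine sweep_acc P (fun n b hb => ?_) h _ _ _
  rw [force_eq]
  refine sweepExp_acc P (fun x b hb => ?_) hb _ _ _ _ _
  rw [force_eq]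
  refine sweepExp_acc P (fun y b hb => ?_) hb _ _ _ _ _
  rw [force_eq]
  exact hf _ _ _ hb

theorem side_mem {g : Grid} {t : Op} (ht : Valid g t) {c : Cls} {n x y : ℕ}
    (h : InCls g c n x y) :
    ∃ c', InCls t.g c' n x y ∧ ∀ {β : Type} (P : β → Prop) (f : ℕ → Cls → β → β) (acc : β),
      (∀ v c b, P b → P (f v c b)) → (∀ b, P (f (residue t.m n x y) c' b)) →
      P (side g t c f acc) := by
  obtain ⟨⟨hm, hn0, hn1, hx0, hy0⟩, ⟨hn, hx, hy⟩, ⟨ho₂, ho₃⟩, ⟨hk, hk', hj, hj'⟩, hl0, hl1, h2, h3⟩ :=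
    ht
  obtain ⟨⟨hlt, i, hi⟩, hcx, hcy⟩ := h
  obtain ⟨x', hx1, hx2⟩ := sweepExp_mem hk hk' (Nat.dvd_of_mod_eq_zero hx) hx0 hcx
  obtain ⟨y', hy1, hy2⟩ := sweepExp_mem hj hj' (Nat.dvd_of_mod_eq_zero hy) hy0 hcy
  obtain ⟨q, hq⟩ := Nat.dvd_of_mod_eq_zero hn
  have hgn : 0 < g.n := by omega
  have hq0 : 0 < q := by rw [hq] at hn0; exact Nat.pos_of_mul_pos_left hn0
  have hdiv : Nat.div t.g.n g.n = q := by
    change t.g.n / g.n = q; rw [hq, Nat.mul_div_cancel_left q hgn]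
  set r := c.n + i % q * g.n with hr
  have hrlt : r < t.g.n := by
    have : (i % q + 1) * g.n ≤ q * g.n := Nat.mul_le_mul_right _ (Nat.mod_lt i hq0)
    rw [hq, hr, mul_comm g.n q]; linarith
  have hnr : n = r + i / q * t.g.n := by
    rw [hi, hr, hq, add_assoc, add_right_inj]
    nth_rw 1 [← Nat.mod_add_div i q]
    ring
  refine ⟨⟨r, x', y'⟩, ⟨⟨hrlt, _, hnr⟩, hx1, hy1⟩, fun P f acc hf h => ?_⟩
  have hl : (lucasMod t.m r : ℤ) ≡ lucas n [ZMOD t.m] := by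
    have h0 : lucas t.g.n ≡ 2 [ZMOD t.m] :=
      (lucasMod_spec hm (by omega)).symm.trans
        (by exact_mod_cast Int.natCast_modEq_iff.2 hl0)
    have h1 : lucas (t.g.n + 1) ≡ 1 [ZMOD t.m] :=
      (lucasMod_spec hm (by omega)).symm.trans
        (by exact_mod_cast Int.natCast_modEq_iff.2 hl1)
    rw [hnr]
    exact (lucasMod_spec hm (by omega)).trans (lucas_periodic h0 h1 _ _).symm
  have ha := powMod_modEq (b := 2) h2 (Nat.dvd_of_mod_eq_zero ho₂) hx1
  have hb := powMod_modEq (b := 3) h3 (Nat.dvd_of_mod_eq_zero ho₃) hy1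
  have hale : powMod 2 t.m t.g.k t.o₂ x' ≤ t.m := (Nat.mod_lt _ hm).le
  have hv : Nat.mod (Nat.add (lucasMod t.m r) (Nat.mul (Nat.sub t.m (powMod 2 t.m t.g.k t.o₂ x'))
      (powMod 3 t.m t.g.j t.o₃ y'))) t.m = residue t.m n x y := by
    change (lucasMod t.m r + (t.m - powMod 2 t.m t.g.k t.o₂ x') * powMod 3 t.m t.g.j t.o₃ y') % t.m
      = _
    rw [residue, ← Int.toNat_natCast (_ % _)]
    congr 1
    push_cast [hale]
    rw [← Int.natCast_modEq_iff] at ha hb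
    push_cast at ha hb
    have := hl.add ((((Int.modEq_zero_iff_dvd.2 (dvd_refl (t.m : ℤ))).sub ha)).mul hb)
    simpa [sub_eq_add_neg, Int.ModEq] using this
  unfold side
  rw [hdiv]
  refine sweep_mem P (fun n b hb => ?_) (Nat.mod_lt i hq0) (fun b => ?_) acc
  · rw [force_eq]
    refine sweepExp_acc P (fun x b hb => ?_) hb _ _ _ _ _
    rw [force_eq]
    refine sweepExp_acc P (fun y b hb => ?_) hb _ _ _ _ _
    rw [force_eq]
    exact hf _ _ _ hb
  · rw [← hr, force_eq]
    refine hx2 P _ _ (fun x b hb => ?_) (fun b => ?_)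
    · rw [force_eq]
      refine sweepExp_acc P (fun y b hb => ?_) hb _ _ _ _ _
      rw [force_eq]
      exact hf _ _ _ hb
    · rw [force_eq]
      refine hy2 P _ _ (fun y b hb => ?_) (fun b => ?_)
      · rw [force_eq]
        exact hf _ _ _ hb
      · rw [force_eq, hv]
        exact h _

theorem bit_eq (I v : ℕ) : Nat.beq (Nat.land 1 (Nat.shiftRight I v)) 1 = I.testBit v := by
  change Nat.beq (1 &&& (I >>> v)) 1 = _
  rw [Bool.eq_iff_iff, Nat.testBit, Nat.one_and_eq_mod_two]
  simp

/-- If both exponents in the class are exact, tests `ok (L n) (2 ^ x * 3 ^ y)` for all indices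
`n < 48` in the class. -/
noncomputable def settled (ok : ℕ → ℕ → Bool) (g : Grid) (c : Cls) : Bool :=
  Bool.rec false (Bool.rec false
    (force (Nat.mul (Nat.pow 2 c.x) (Nat.pow 3 c.y)) fun N =>
      Bool.rec false
        (sweep g.n (Nat.succ (Nat.div 48 g.n)) c.n (fun n acc =>
          Bool.rec acc (Bool.rec false acc (ok (lucasMod 18446744073709551616 n) N))
            (Nat.blt n 48)) true)
        (Nat.ble N 10749957122)) (Nat.blt c.y g.j)) (Nat.blt c.x g.k)

theorem lucas_pos (n : ℕ) : 0 < lucas n := by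
  rw [lucas_eq_fib]
  have h1 := Nat.fib_le_fib_succ (n := n)
  have h2 : 0 < Nat.fib (n + 1) := Nat.fib_pos.2 n.succ_pos
  omega

theorem lucas_mono {m n : ℕ} (h0 : 0 < m) (h : m ≤ n) : lucas m ≤ lucas n := by
  induction n, h using Nat.le_induction with
  | base => exact le_rfl
  | succ n hn ih =>
    obtain ⟨n, rfl⟩ : ∃ k, n = k + 1 := ⟨n - 1, by omega⟩
    rw [lucas]
    have := lucas_pos n
    omega

theorem settled_spec {ok : ℕ → ℕ → Bool} {g : Grid} {c : Cls} {n x y : ℕ}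
    (hs : settled ok g c = true) (h : InCls g c n x y) (hlt : lucas n < 2 ^ x * 3 ^ y) :
    ok (lucas n).toNat (2 ^ x * 3 ^ y) = true := by
  unfold settled at hs
  rw [blt_eq, blt_eq, force_eq] at hs
  by_cases hk : c.x < g.k
  swap
  · simp [hk] at hs
  by_cases hj : c.y < g.j
  swap
  · simp [hk, hj] at hs
  obtain ⟨⟨hcn, i, hi⟩, hx, hy⟩ := h
  obtain rfl : x = c.x := by rcases hx with ⟨-, h⟩ | ⟨h, -⟩ <;> omega
  obtain rfl : y = c.y := by rcases hy with ⟨-, h⟩ | ⟨h, -⟩ <;> omega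
  simp only [hk, hj, decide_true] at hs
  change (Bool.rec false _ (Nat.ble (2 ^ c.x * 3 ^ c.y) 10749957122) : Bool) = true at hs
  by_cases hN : 2 ^ c.x * 3 ^ c.y ≤ 10749957122
  swap
  · rw [Bool.eq_false_iff.2 (fun h' => hN (Nat.le_of_ble_eq_true h'))] at hs
    simp at hs
  rw [Nat.ble_eq_true_of_le hN] at hs
  have hn : n < 48 := by
    by_contra hn
    have h1 := lucas_mono (m := 48) (by norm_num) (not_lt.1 hn)
    have h2 : lucas 48 = 10749957122 := by rw [lucas_eq_fib]; norm_num [Nat.fib]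
    have : ((2 ^ c.x * 3 ^ c.y : ℕ) : ℤ) ≤ 10749957122 := by exact_mod_cast hN
    push_cast at this
    omega
  have hlm : lucasMod 18446744073709551616 n = (lucas n).toNat := by
    have h1 := lucasMod_spec (m := 18446744073709551616) (by norm_num) (n := n) (by omega)
    have h2 := lucas_pos n
    have h3 : lucas n < 18446744073709551616 := by
      have := lucas_mono (m := n + 1) (n := 48) (by norm_num) (by omega)
      have h48 : lucas 48 = 10749957122 := by rw [lucas_eq_fib]; norm_num [Nat.fib]
      have : ((2 ^ c.x * 3 ^ c.y : ℕ) : ℤ) ≤ 10749957122 := by exact_mod_cast hN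
      push_cast at this
      omega
    have h4 : lucasMod 18446744073709551616 n < 18446744073709551616 :=
      Nat.mod_lt _ (by norm_num)
    rw [Int.ModEq, Int.emod_eq_of_lt (by positivity) (by exact_mod_cast h4),
      Int.emod_eq_of_lt h2.le (by exact_mod_cast h3)] at h1
    omega
  have hq : i < Nat.succ (Nat.div 48 g.n) := by
    change i < 48 / g.n + 1
    rw [Nat.lt_succ_iff, Nat.le_div_iff_mul_le (by omega)]
    omega
  refine sweep_mem (P := fun b => b = true → ok (lucas n).toNat (2 ^ c.x * 3 ^ c.y) = true)
    (fun r b hb hr => hb ?_) hq (fun b hb => ?_) true hs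
  · change (Bool.rec b (Bool.rec false b (ok _ (2 ^ c.x * 3 ^ c.y))) _ : Bool) = true at hr
    revert hr
    cases Nat.blt r 48
    · exact id
    · cases ok (lucasMod 18446744073709551616 r) (2 ^ c.x * 3 ^ c.y)
      · simp
      · exact id
  · rw [← hi, blt_eq, hlm] at hb
    change (Bool.rec b (Bool.rec false b (ok _ (2 ^ c.x * 3 ^ c.y))) _ : Bool) = true at hb
    simp only [hn, decide_true] at hb
    revert hb
    cases ok (lucas n).toNat (2 ^ c.x * 3 ^ c.y)
    · simp
    · simp

noncomputable def forceCls {α : Type} (c : Cls) (f : Cls → α) : α :=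
  force c.n fun n => force c.x fun x => force c.y fun y => f ⟨n, x, y⟩

theorem forceCls_eq {α : Type} (c : Cls) (f : Cls → α) : forceCls c f = f c := by
  simp [forceCls, force_eq]

noncomputable def isNil {α : Type} (l : List α) : Bool := List.rec true (fun _ _ _ => false) l

theorem isNil_iff {α : Type} {l : List α} : isNil l = true ↔ l = [] := by
  cases l <;> simp [isNil]

theorem and_of_rec {a b : Bool} (h : (Bool.rec false b a : Bool) = true) : a = true ∧ b = true := by
  cases a <;> simp_all

/-- The refinements of `c` on which `L n + C - 2 ^ x * 3 ^ y` vanishes modulo `t.m`. -/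
noncomputable def singleStep (ok : ℕ → ℕ → Bool) (C : ℕ) (g : Grid) (t : Op) (c : Cls)
    (acc : List Cls) : List Cls :=
  force (Nat.mod (Nat.sub t.m (Nat.mod C t.m)) t.m) fun w =>
    side g t c (fun v c ih => Bool.rec ih (Bool.rec (List.cons c ih) ih (settled ok t.g c))
      (Nat.beq v w)) acc

noncomputable def runSingle (ok : ℕ → ℕ → Bool) (C : ℕ) (ops : List Op) : Grid → List Cls → Bool :=
  List.rec (fun _ l => isNil l) (fun t _ ih g l => Bool.rec false
    (ih t.g (fold (fun c acc => forceCls c fun c => singleStep ok C g t c acc) [] l))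
    (decide (Valid g t))) ops

theorem residue_single {m n x y C : ℕ} (hm : 0 < m) (h : lucas n + C = 2 ^ x * 3 ^ y) :
    residue m n x y = (m - C % m) % m := by
  have h1 : C % m ≤ m := (Nat.mod_lt _ hm).le
  rw [residue, show lucas n - 2 ^ x * 3 ^ y = -(C : ℤ) by omega, ← Int.toNat_natCast (_ % m)]
  congr 1
  push_cast [h1]
  have := (Int.modEq_zero_iff_dvd.2 (dvd_refl (m : ℤ))).sub (Int.mod_modEq (C : ℤ) m)
  simpa [Int.ModEq] using this.symm

theorem runSingle_spec {ok : ℕ → ℕ → Bool} {C : ℕ} (hC : 0 < C) {n x y : ℕ}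
    (h : lucas n + C = 2 ^ x * 3 ^ y) (ops : List Op) (g : Grid) (l : List Cls)
    (hr : runSingle ok C ops g l = true) {c : Cls} (hc : c ∈ l) (hin : InCls g c n x y) :
    ok (lucas n).toNat (2 ^ x * 3 ^ y) = true := by
  have hlt : lucas n < 2 ^ x * 3 ^ y := by omega
  induction ops generalizing g l c with
  | nil =>
    have := isNil_iff.1 hr
    simp [this] at hc
  | cons t ops ih =>
    obtain ⟨hv, hr⟩ := and_of_rec hr
    have ht : Valid g t := of_decide_eq_true hv
    obtain ⟨c', hc', hmem⟩ := side_mem ht hin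
    by_cases hs : settled ok t.g c' = true
    · exact settled_spec hs hc' hlt
    refine ih t.g _ hr (c := c') ?_ hc'
    have hcons : ∀ (v : ℕ) (c'' : Cls) (b : List Cls), c' ∈ b →
        c' ∈ (Bool.rec b (Bool.rec (c'' :: b) b (settled ok t.g c''))
          (Nat.beq v ((t.m - C % t.m) % t.m)) : List Cls) := by
      intro v c'' b hb
      cases Nat.beq v ((t.m - C % t.m) % t.m)
      · exact hb
      · cases settled ok t.g c''
        · exact List.mem_cons_of_mem _ hb
        · exact hb
    refine fold_mem (P := fun l => c' ∈ l) (fun a b hb => ?_) (fun b => ?_) _ hc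
    · rw [forceCls_eq, singleStep, force_eq]
      exact side_acc (P := fun l => c' ∈ l) hcons hb
    · rw [forceCls_eq, singleStep, force_eq]
      refine hmem (P := fun l => c' ∈ l) _ _ hcons (fun b => ?_)
      have e : Nat.beq (residue t.m n x y) ((t.m - C % t.m) % t.m) = true := by
        rw [beq_eq, residue_single ht.1.1 h, decide_eq_true rfl]
      change c' ∈ (Bool.rec b (Bool.rec (c' :: b) b (settled ok t.g c'))
          (Nat.beq (residue t.m n x y) ((t.m - C % t.m) % t.m)) : List Cls)
      rw [e, Bool.eq_false_iff.2 hs]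
      exact List.mem_cons_self ..

structure Ent where
  v : ℕ
  c : Cls

structure PairCls where
  c : Cls
  d : Cls

noncomputable def mask (g : Grid) (t : Op) (c : Cls) : ℕ :=
  side g t c (fun v _ ih => Nat.lor (Nat.shiftLeft 1 (Nat.mod v 4096)) ih) 0

noncomputable def hits (g : Grid) (t : Op) (c : Cls) (I : ℕ) : List Ent :=
  side g t c (fun v c ih => Bool.rec ih (List.cons ⟨v, c⟩ ih)
    (Nat.beq (Nat.land 1 (Nat.shiftRight I (Nat.mod v 4096))) 1)) []

/-- The pairs of refinements of `s.c` and `s.d` with equal residues of `L n - 2 ^ x * 3 ^ y`. -/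
noncomputable def pairStep (ok : ℕ → ℕ → Bool) (g : Grid) (t : Op) (s : PairCls)
    (acc : List PairCls) : List PairCls :=
  force (Nat.land (mask g t s.c) (mask g t s.d)) fun I =>
    Bool.rec
      (fold (fun a acc => fold (fun b ih => Bool.rec ih
        (Bool.rec (Bool.rec (List.cons ⟨a.c, b.c⟩ ih) ih (settled ok t.g b.c)) ih
          (settled ok t.g a.c)) (Nat.beq a.v b.v)) acc (hits g t s.d I)) acc (hits g t s.c I))
      acc (Nat.beq I 0)

noncomputable def runPair (ok : ℕ → ℕ → Bool) (ops : List Op) : Grid → List PairCls → Bool :=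
  List.rec (fun _ l => isNil l) (fun t _ ih g l => Bool.rec false
    (ih t.g (fold (fun s acc => forceCls s.c fun c => forceCls s.d fun d =>
      pairStep ok g t ⟨c, d⟩ acc) [] l))
    (decide (Valid g t))) ops

theorem runPair_spec {ok : ℕ → ℕ → Bool} {n x y n' x' y' : ℕ} (hlt : lucas n < 2 ^ x * 3 ^ y)
    (h : lucas n - 2 ^ x * 3 ^ y = lucas n' - 2 ^ x' * 3 ^ y') (ops : List Op) (g : Grid)
    (l : List PairCls) (hr : runPair ok ops g l = true) {s : PairCls} (hs : s ∈ l)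
    (hin : InCls g s.c n x y) (hin' : InCls g s.d n' x' y') :
    ok (lucas n).toNat (2 ^ x * 3 ^ y) = true ∨ ok (lucas n').toNat (2 ^ x' * 3 ^ y') = true := by
  have hlt' : lucas n' < 2 ^ x' * 3 ^ y' := by omega
  induction ops generalizing g l s with
  | nil =>
    have := isNil_iff.1 hr
    simp [this] at hs
  | cons t ops ih =>
    obtain ⟨hv, hr⟩ := and_of_rec hr
    have ht : Valid g t := of_decide_eq_true hv
    obtain ⟨c, hc, hcm⟩ := side_mem ht hin
    obtain ⟨d, hd, hdm⟩ := side_mem ht hin'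
    by_cases hsc : settled ok t.g c = true
    · exact Or.inl (settled_spec hsc hc hlt)
    by_cases hsd : settled ok t.g d = true
    · exact Or.inr (settled_spec hsd hd hlt')
    set v := residue t.m n x y with hv'
    have hvd : residue t.m n' x' y' = v := by rw [hv', residue, residue, h]
    have hlor : ∀ (w : ℕ) (_ : Cls) (b : ℕ), b.testBit (v % 4096) = true →
        (Nat.lor (Nat.shiftLeft 1 (Nat.mod w 4096)) b).testBit (v % 4096) = true := fun w _ b hb => by
      change ((1 <<< (w % 4096)) ||| b).testBit (v % 4096) = true
      simp [hb]
    have hlor' : ∀ b : ℕ, (Nat.lor (Nat.shiftLeft 1 (Nat.mod v 4096)) b).testBit (v % 4096) = true := fun b => by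
      change ((1 <<< (v % 4096)) ||| b).testBit (v % 4096) = true
      simp
    have hmc : (mask g t s.c).testBit (v % 4096) = true :=
      hcm (P := fun b : ℕ => b.testBit (v % 4096) = true) _ _ hlor hlor'
    have hmd : (mask g t s.d).testBit (v % 4096) = true :=
      hdm (P := fun b : ℕ => b.testBit (v % 4096) = true) _ _ hlor (by rw [hvd]; exact hlor')
    set I := Nat.land (mask g t s.c) (mask g t s.d) with hI
    have hIv : I.testBit (v % 4096) = true := by
      change (mask g t s.c &&& mask g t s.d).testBit (v % 4096) = true
      simp [hmc, hmd]
    have hI0 : Nat.beq I 0 = false := by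
      rw [beq_eq, decide_eq_false]
      intro h0
      simp [h0] at hIv
    have hcons : ∀ (e : Ent) (w : ℕ) (c'' : Cls) (b : List Ent), e ∈ b →
        e ∈ (Bool.rec b (⟨w, c''⟩ :: b) (Nat.beq (Nat.land 1 (Nat.shiftRight I (Nat.mod w 4096))) 1) :
          List Ent) := by
      intro e w c'' b hb
      cases Nat.beq (Nat.land 1 (Nat.shiftRight I (Nat.mod w 4096))) 1
      · exact hb
      · exact List.mem_cons_of_mem _ hb
    have hcons' : ∀ (c'' : Cls) (b : List Ent), (⟨v, c''⟩ : Ent) ∈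
        (Bool.rec b (⟨v, c''⟩ :: b) (Nat.beq (Nat.land 1 (Nat.shiftRight I (Nat.mod v 4096))) 1) :
          List Ent) := by
      intro c'' b
      have e : (Nat.beq (Nat.land 1 (Nat.shiftRight I (Nat.mod v 4096))) 1) = true := by
        rw [bit_eq]; exact hIv
      rw [e]
      exact List.mem_cons_self ..
    have hhc : (⟨v, c⟩ : Ent) ∈ hits g t s.c I :=
      hcm (P := fun l => (⟨v, c⟩ : Ent) ∈ l) _ _ (hcons _) (hcons' c)
    have hhd : (⟨v, d⟩ : Ent) ∈ hits g t s.d I :=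
      hdm (P := fun l => (⟨v, d⟩ : Ent) ∈ l) _ _ (hcons _) (by rw [hvd]; exact hcons' d)
    refine ih t.g _ hr (s := ⟨c, d⟩) ?_ hc hd
    have hinner : ∀ (a b : Ent) (l : List PairCls), (⟨c, d⟩ : PairCls) ∈ l →
        (⟨c, d⟩ : PairCls) ∈ (Bool.rec l (Bool.rec (Bool.rec (⟨a.c, b.c⟩ :: l) l
          (settled ok t.g b.c)) l (settled ok t.g a.c)) (Nat.beq a.v b.v) : List PairCls) := by
      intro a b l hl
      cases Nat.beq a.v b.v
      · exact hl
      cases settled ok t.g a.c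
      · cases settled ok t.g b.c
        · exact List.mem_cons_of_mem _ hl
        · exact hl
      · exact hl
    refine fold_mem (P := fun l => (⟨c, d⟩ : PairCls) ∈ l) (fun s' b hb => ?_) (fun b => ?_) _ hs
    · rw [forceCls_eq, forceCls_eq, pairStep, force_eq]
      generalize Nat.land (mask g t s'.c) (mask g t s'.d) = J
      cases Nat.beq J 0
      · exact fold_acc (P := fun l => (⟨c, d⟩ : PairCls) ∈ l) (fun a b hb =>
          fold_acc (P := fun l => (⟨c, d⟩ : PairCls) ∈ l) (fun a' b' hb' => hinner _ _ _ hb') hb _)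
          hb _
      · exact hb
    · rw [forceCls_eq, forceCls_eq, pairStep, force_eq]
      simp only [← hI, hI0]
      refine fold_mem (P := fun l => (⟨c, d⟩ : PairCls) ∈ l) (fun a b hb =>
          fold_acc (P := fun l => (⟨c, d⟩ : PairCls) ∈ l) (fun a' b' hb' => hinner _ _ _ hb') hb _)
          (fun b => ?_) _ hhc
      refine fold_mem (P := fun l => (⟨c, d⟩ : PairCls) ∈ l) (fun a' b' hb' => hinner _ _ _ hb')
        (fun b => ?_) _ hhd
      rw [beq_eq, decide_eq_true rfl, Bool.eq_false_iff.2 hsc, Bool.eq_false_iff.2 hsd]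
      exact List.mem_cons_self ..

/-- Contains the values of `-c` for which solutions with indices of both parities exist. -/
def mixedValues : List ℕ :=
  [1, 2, 3, 4, 5, 6, 7, 9, 10, 11, 13, 14, 15, 16, 17, 20, 21, 22, 25, 29, 33, 36, 45, 47, 52,
   57, 61, 63, 65, 70, 79, 89, 93, 94, 97, 110, 115, 125, 129, 133, 137, 181, 185, 196, 214, 254,
   277, 285, 317, 377, 385, 483, 525, 569, 711, 1289, 1529, 1534, 5177, 6590, 15541]

noncomputable def mixedMask : ℕ := fold (fun c ih => Nat.lor (Nat.shiftLeft 1 c) ih) 0 mixedValues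

noncomputable def mixedOk (L N : ℕ) : Bool :=
  Bool.rec true (Nat.beq (Nat.land 1 (Nat.shiftRight mixedMask (Nat.sub N L))) 1) (Nat.blt L N)

def pairOps : List Op :=
  [⟨2, 1, 1, ⟨6, 1, 1, 1, 0⟩⟩, ⟨4, 1, 2, ⟨6, 1, 2, 2, 0⟩⟩, ⟨8, 1, 2, ⟨12, 1, 2, 3, 0⟩⟩,
   ⟨240, 4, 4, ⟨24, 4, 4, 4, 1⟩⟩, ⟨9, 6, 1, ⟨24, 12, 4, 4, 2⟩⟩,
   ⟨671, 60, 10, ⟨120, 60, 20, 4, 2⟩⟩, ⟨41, 20, 8, ⟨120, 60, 40, 4, 2⟩⟩,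
   ⟨31, 5, 30, ⟨120, 60, 120, 4, 2⟩⟩, ⟨1687, 24, 120, ⟨240, 120, 120, 4, 2⟩⟩,
   ⟨32, 1, 8, ⟨240, 120, 120, 5, 2⟩⟩, ⟨3439, 180, 90, ⟨720, 360, 360, 5, 2⟩⟩,
   ⟨27, 18, 1, ⟨720, 360, 360, 5, 3⟩⟩, ⟨271, 135, 30, ⟨2160, 1080, 360, 5, 3⟩⟩,
   ⟨81, 54, 1, ⟨2160, 1080, 360, 5, 4⟩⟩, ⟨109, 36, 27, ⟨2160, 1080, 1080, 5, 4⟩⟩,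
   ⟨64, 1, 16, ⟨4320, 1080, 2160, 6, 4⟩⟩, ⟨3403322163, 3240, 216, ⟨12960, 3240, 2160, 6, 5⟩⟩,
   ⟨69248, 540, 4320, ⟨25920, 3240, 4320, 7, 5⟩⟩,
   ⟨14172489, 4860, 54, ⟨77760, 9720, 4320, 7, 6⟩⟩, ⟨17, 8, 16, ⟨77760, 9720, 4320, 7, 6⟩⟩,
   ⟨3889, 648, 81, ⟨77760, 9720, 12960, 7, 6⟩⟩,
   ⟨2654464, 1296, 5184, ⟨155520, 19440, 25920, 8, 6⟩⟩,
   ⟨18897867, 116640, 2160, ⟨466560, 116640, 25920, 8, 7⟩⟩,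
   ⟨2488832, 972, 155520, ⟨933120, 116640, 155520, 9, 7⟩⟩,
   ⟨3306282833871, 349920, 103680, ⟨2799360, 349920, 311040, 9, 8⟩⟩,
   ⟨12616803, 419904, 640, ⟨8398080, 2099520, 311040, 9, 9⟩⟩,
   ⟨787456, 384, 768, ⟨16796160, 4199040, 311040, 10, 9⟩⟩,
   ⟨31459328, 3840, 2560, ⟨33592320, 8398080, 622080, 11, 9⟩⟩]

set_option maxRecDepth 1000000 in
theorem runPair_pairOps :
    runPair mixedOk pairOps ⟨2, 1, 1, 0, 0⟩ [⟨⟨0, 0, 0⟩, ⟨1, 0, 0⟩⟩] = true := by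
  decide +kernel

def singleOps : List Op :=
  [⟨2, 1, 1, ⟨3, 1, 1, 1, 0⟩⟩, ⟨4, 1, 2, ⟨6, 1, 2, 2, 0⟩⟩, ⟨8, 1, 2, ⟨12, 1, 2, 3, 0⟩⟩,
   ⟨3, 2, 1, ⟨24, 2, 2, 3, 1⟩⟩, ⟨5, 4, 4, ⟨24, 4, 4, 3, 1⟩⟩, ⟨16, 1, 4, ⟨24, 4, 4, 4, 1⟩⟩,
   ⟨9, 6, 1, ⟨24, 12, 4, 4, 2⟩⟩, ⟨32, 1, 8, ⟨48, 12, 8, 5, 2⟩⟩, ⟨7, 3, 6, ⟨48, 12, 24, 5, 2⟩⟩,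
   ⟨17, 8, 16, ⟨144, 24, 48, 5, 2⟩⟩, ⟨19, 18, 18, ⟨144, 72, 144, 5, 2⟩⟩,
   ⟨109, 36, 27, ⟨432, 72, 432, 5, 2⟩⟩, ⟨241, 24, 120, ⟨2160, 72, 2160, 5, 2⟩⟩,
   ⟨181, 180, 45, ⟨2160, 360, 2160, 5, 2⟩⟩, ⟨61, 60, 10, ⟨2160, 360, 2160, 5, 2⟩⟩,
   ⟨27, 18, 1, ⟨2160, 360, 2160, 5, 3⟩⟩, ⟨41, 20, 8, ⟨2160, 360, 2160, 5, 3⟩⟩,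
   ⟨64, 1, 16, ⟨4320, 360, 2160, 6, 3⟩⟩, ⟨31, 5, 30, ⟨4320, 360, 2160, 6, 3⟩⟩,
   ⟨81, 54, 1, ⟨4320, 1080, 2160, 6, 4⟩⟩, ⟨2161, 1080, 216, ⟨4320, 1080, 2160, 6, 4⟩⟩,
   ⟨541, 540, 135, ⟨4320, 1080, 2160, 6, 4⟩⟩, ⟨128, 1, 32, ⟨8640, 1080, 4320, 7, 4⟩⟩,
   ⟨271, 135, 30, ⟨8640, 1080, 4320, 7, 4⟩⟩, ⟨243, 162, 1, ⟨25920, 3240, 4320, 7, 5⟩⟩,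
   ⟨6481, 810, 24, ⟨25920, 3240, 4320, 7, 5⟩⟩, ⟨1621, 1620, 45, ⟨25920, 3240, 4320, 7, 5⟩⟩,
   ⟨256, 1, 64, ⟨51840, 3240, 8640, 8, 5⟩⟩, ⟨11, 10, 5, ⟨51840, 3240, 8640, 8, 5⟩⟩,
   ⟨729, 486, 1, ⟨155520, 9720, 8640, 8, 6⟩⟩, ⟨19441, 4860, 54, ⟨155520, 9720, 8640, 8, 6⟩⟩,
   ⟨3889, 648, 81, ⟨155520, 9720, 25920, 8, 6⟩⟩, ⟨811, 270, 810, ⟨155520, 9720, 25920, 8, 6⟩⟩,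
   ⟨512, 1, 128, ⟨311040, 9720, 51840, 9, 6⟩⟩, ⟨10369, 1296, 5184, ⟨311040, 19440, 51840, 9, 6⟩⟩,
   ⟨8641, 4320, 2160, ⟨311040, 38880, 51840, 9, 6⟩⟩,
   ⟨2187, 1458, 1, ⟨933120, 116640, 51840, 9, 7⟩⟩,
   ⟨23041, 480, 11520, ⟨933120, 116640, 103680, 9, 7⟩⟩,
   ⟨641, 64, 640, ⟨933120, 233280, 103680, 9, 7⟩⟩,
   ⟨1024, 1, 256, ⟨1866240, 233280, 103680, 10, 7⟩⟩,
   ⟨769, 384, 48, ⟨1866240, 466560, 103680, 10, 7⟩⟩,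
   ⟨6561, 4374, 1, ⟨5598720, 1399680, 103680, 10, 8⟩⟩,
   ⟨21871, 10935, 810, ⟨5598720, 1399680, 103680, 10, 8⟩⟩,
   ⟨15361, 3840, 640, ⟨5598720, 2799360, 103680, 10, 8⟩⟩,
   ⟨2048, 1, 512, ⟨11197440, 2799360, 207360, 11, 8⟩⟩,
   ⟨7681, 3840, 640, ⟨11197440, 2799360, 207360, 11, 8⟩⟩,
   ⟨4096, 1, 1024, ⟨22394880, 2799360, 414720, 12, 8⟩⟩,
   ⟨9721, 810, 4860, ⟨22394880, 2799360, 1244160, 12, 8⟩⟩,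
   ⟨8192, 1, 2048, ⟨44789760, 2799360, 2488320, 13, 8⟩⟩,
   ⟨4861, 972, 1215, ⟨44789760, 2799360, 2488320, 13, 8⟩⟩,
   ⟨16384, 1, 4096, ⟨89579520, 2799360, 4976640, 14, 8⟩⟩,
   ⟨58321, 29160, 729, ⟨89579520, 2799360, 14929920, 14, 8⟩⟩,
   ⟨1459, 486, 1458, ⟨89579520, 2799360, 14929920, 14, 8⟩⟩,
   ⟨32768, 1, 8192, ⟨179159040, 2799360, 29859840, 15, 8⟩⟩,
   ⟨36451, 7290, 12150, ⟨179159040, 2799360, 149299200, 15, 8⟩⟩,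
   ⟨65536, 1, 16384, ⟨358318080, 2799360, 298598400, 16, 8⟩⟩,
   ⟨32401, 3240, 8100, ⟨1791590400, 2799360, 298598400, 16, 8⟩⟩,
   ⟨12289, 6144, 512, ⟨1791590400, 22394880, 298598400, 16, 8⟩⟩,
   ⟨61441, 5120, 30720, ⟨1791590400, 22394880, 298598400, 16, 8⟩⟩,
   ⟨163841, 81920, 163840, ⟨1791590400, 179159040, 597196800, 16, 8⟩⟩,
   ⟨19683, 13122, 1, ⟨5374771200, 537477120, 597196800, 16, 9⟩⟩,
   ⟨52489, 13122, 2187, ⟨5374771200, 537477120, 1791590400, 16, 9⟩⟩,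
   ⟨131221, 131220, 13122, ⟨5374771200, 537477120, 5374771200, 16, 9⟩⟩,
   ⟨139969, 5832, 972, ⟨5374771200, 537477120, 5374771200, 16, 9⟩⟩,
   ⟨466561, 46656, 23328, ⟨5374771200, 537477120, 5374771200, 16, 9⟩⟩,
   ⟨921601, 11520, 25600, ⟨5374771200, 537477120, 5374771200, 16, 9⟩⟩,
   ⟨184321, 92160, 15360, ⟨5374771200, 537477120, 5374771200, 16, 9⟩⟩]

/-- The `C` in `mixedValues` such that `L n + C` takes at most two values of the form
`2 ^ x * 3 ^ y`, with those values. -/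
def singleValues : List (ℕ × ℕ × ℕ) :=
  [(4, 6, 8), (10, 12, 12), (11, 12, 18), (13, 16, 24), (15, 16, 18), (16, 18, 27), (22, 24, 24),
   (29, 32, 36), (33, 36, 36), (36, 54, 54), (45, 48, 48), (47, 48, 54), (57, 64, 256),
   (63, 64, 81), (65, 72, 72), (70, 72, 81), (79, 81, 108), (89, 96, 288), (93, 96, 216),
   (94, 96, 1458), (110, 128, 432), (115, 144, 162), (125, 128, 324), (129, 972, 972),
   (137, 144, 144), (181, 192, 1024), (185, 192, 384), (196, 243, 243), (214, 216, 243),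
   (254, 256, 576), (277, 288, 324), (285, 288, 288), (317, 324, 3888), (377, 384, 576),
   (385, 432, 2592), (483, 486, 512), (525, 648, 4096), (569, 576, 768), (711, 729, 729),
   (1289, 1296, 1296), (1529, 1536, 1728), (1534, 1536, 1536), (5177, 5184, 8748),
   (6590, 6912, 6912), (15541, 15552, 16384)]

noncomputable def singleOk (C A B L N : ℕ) : Bool :=
  Bool.rec true (Bool.rec (Nat.beq N B) true (Nat.beq N A)) (Nat.beq (Nat.add L C) N)

noncomputable def all {α : Type} (f : α → Bool) (l : List α) : Bool :=
  fold (fun a b => Bool.rec false b (f a)) true l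

theorem of_all {α : Type} {f : α → Bool} {l : List α} (h : all f l = true) {a : α} (ha : a ∈ l) :
    f a = true := by
  induction l with
  | nil => simp at ha
  | cons b l ih =>
    rcases List.mem_cons.1 ha with rfl | ha
    · exact (and_of_rec h).1
    · exact ih (and_of_rec h).2 ha

noncomputable def runSingleOps (e : ℕ × ℕ × ℕ) : Bool :=
  runSingle (singleOk e.1 e.2.1 e.2.2) e.1 singleOps ⟨1, 1, 1, 0, 0⟩ [⟨0, 0, 0⟩]

set_option maxRecDepth 1000000 in
theorem all_runSingleOps : all runSingleOps singleValues = true := by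
  decide +kernel

theorem inCls_init (n x y : ℕ) : InCls ⟨1, 1, 1, 0, 0⟩ ⟨0, 0, 0⟩ n x y :=
  ⟨⟨Nat.one_pos, n, by simp⟩, Or.inr ⟨le_rfl, x, by simp⟩, Or.inr ⟨le_rfl, y, by simp⟩⟩

theorem singleValues_spec {C A B n x y : ℕ} (hC : 0 < C) (he : (C, A, B) ∈ singleValues)
    (h : lucas n + C = 2 ^ x * 3 ^ y) : 2 ^ x * 3 ^ y = A ∨ 2 ^ x * 3 ^ y = B := by
  have hr : runSingle (singleOk C A B) C singleOps ⟨1, 1, 1, 0, 0⟩ [⟨0, 0, 0⟩] = true := by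
    have h := of_all all_runSingleOps he
    rwa [runSingleOps] at h
  have hok := runSingle_spec hC h singleOps _ _ hr (List.mem_singleton_self _) (inCls_init n x y)
  have hl : ((lucas n).toNat : ℤ) = lucas n := Int.toNat_of_nonneg (lucas_pos n).le
  have e : (lucas n).toNat + C = 2 ^ x * 3 ^ y := by zify; rw [hl]; exact_mod_cast h
  have e' : Nat.beq (Nat.add (lucas n).toNat C) (2 ^ x * 3 ^ y) = true := by
    rw [beq_eq]; exact decide_eq_true e
  rw [singleOk, e'] at hok
  by_cases hA : 2 ^ x * 3 ^ y = A
  · exact Or.inl hA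
  · right
    simpa [beq_eq, hA] using hok

theorem mem_of_testBit_fold {l : List ℕ} {c : ℕ}
    (h : (fold (fun c ih => Nat.lor (Nat.shiftLeft 1 c) ih) 0 l).testBit c = true) : c ∈ l := by
  induction l with
  | nil => simp [fold] at h
  | cons a l ih =>
    have h' : ((1 <<< a) ||| fold (fun c ih => Nat.lor (Nat.shiftLeft 1 c) ih) 0 l).testBit c = true := h
    rw [Nat.testBit_or, Bool.or_eq_true] at h'
    rcases h' with h' | h'
    · rw [Nat.one_shiftLeft, Nat.testBit_two_pow] at h'
      simp_all
    · exact List.mem_cons_of_mem _ (ih h')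

theorem mem_mixedValues {n x y n' x' y' C : ℕ} (hC : 0 < C) (h : lucas n + C = 2 ^ x * 3 ^ y)
    (h' : lucas n' + C = 2 ^ x' * 3 ^ y') (hn : n % 2 = 0) (hn' : n' % 2 = 1) :
    C ∈ mixedValues := by
  have key : ∀ {n x y : ℕ}, lucas n + C = 2 ^ x * 3 ^ y →
      mixedOk (lucas n).toNat (2 ^ x * 3 ^ y) = true → C ∈ mixedValues := by
    intro n x y h hok
    have hl : ((lucas n).toNat : ℤ) = lucas n := Int.toNat_of_nonneg (lucas_pos n).le
    have e : (lucas n).toNat + C = 2 ^ x * 3 ^ y := by zify; rw [hl]; exact_mod_cast h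
    have e' : Nat.sub (2 ^ x * 3 ^ y) (lucas n).toNat = C := Nat.sub_eq_of_eq_add (by omega)
    have e'' : Nat.blt (lucas n).toNat (2 ^ x * 3 ^ y) = true := by
      rw [blt_eq]; exact decide_eq_true (by omega)
    rw [mixedOk, e', e'', bit_eq] at hok
    exact mem_of_testBit_fold hok
  rcases runPair_spec (n := n) (x := x) (y := y) (n' := n') (x' := x') (y' := y') (by omega)
      (by omega) pairOps _ _ runPair_pairOps (List.mem_singleton_self _)
      ⟨⟨by simp, n / 2, by simp; omega⟩, (inCls_init n x y).2⟩
      ⟨⟨by simp, n' / 2, by simp; omega⟩, (inCls_init n' x' y').2⟩ with hok | hok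
  · exact key h hok
  · exact key h' hok

end Sieve

theorem lucas_injective : Function.Injective lucas := by
  have hlt : ∀ {m n : ℕ}, 0 < m → m < n → lucas m < lucas n := by
    intro m n hm h
    refine (Sieve.lucas_mono hm (Nat.le_sub_one_of_lt h)).trans_lt ?_
    obtain ⟨k, rfl⟩ : ∃ k, n = k + 2 := ⟨n - 2, by omega⟩
    have := Sieve.lucas_pos k
    rw [lucas, Nat.add_sub_cancel_right (n := k + 1) (m := 1)]
    omega
  have h0 : ∀ {n : ℕ}, lucas n = 2 → n = 0 := by
    intro n h
    by_contra hn
    have h1 : n ≠ 1 := by rintro rfl; simp [lucas] at h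
    have := Sieve.lucas_mono (m := 2) (n := n) (by norm_num) (by omega)
    simp [lucas] at this
    omega
  intro m n h
  rcases Nat.eq_zero_or_pos m with rfl | hm
  · exact (h0 h.symm).symm
  rcases Nat.eq_zero_or_pos n with rfl | hn
  · exact h0 h
  rcases lt_trichotomy m n with h' | h' | h'
  · exact absurd h (hlt hm h').ne
  · exact h'
  · exact absurd h (hlt hn h').ne'

theorem two_pow_mul_three_pow_inj {x y x' y' : ℕ} (h : 2 ^ x * 3 ^ y = 2 ^ x' * 3 ^ y') :
    x = x' ∧ y = y' := by
  have h2 : ∀ x y : ℕ, padicValNat 2 (2 ^ x * 3 ^ y) = x := fun x y => by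
    rw [padicValNat.mul (by positivity) (by positivity), padicValNat.prime_pow,
      padicValNat.eq_zero_of_not_dvd (fun h => by
        have := Nat.Prime.dvd_of_dvd_pow Nat.prime_two h; omega), add_zero]
  have h3 : ∀ x y : ℕ, padicValNat 3 (2 ^ x * 3 ^ y) = y := fun x y => by
    rw [padicValNat.mul (by positivity) (by positivity), padicValNat.prime_pow,
      padicValNat.eq_zero_of_not_dvd (fun h => by
        have := Nat.Prime.dvd_of_dvd_pow Nat.prime_three h; omega), zero_add]
  exact ⟨by rw [← h2 x y, h, h2], by rw [← h3 x y, h, h3]⟩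

theorem solution_ext {s t : ℕ × ℕ × ℕ} {C : ℕ} (hs : lucas s.1 + C = 2 ^ s.2.1 * 3 ^ s.2.2)
    (ht : lucas t.1 + C = 2 ^ t.2.1 * 3 ^ t.2.2)
    (h : 2 ^ s.2.1 * 3 ^ s.2.2 = 2 ^ t.2.1 * 3 ^ t.2.2) : s = t := by
  obtain ⟨hx, hy⟩ := two_pow_mul_three_pow_inj h
  refine Prod.ext (lucas_injective ?_) (Prod.ext hx hy)
  rw [hx, hy] at hs
  omega

theorem mem_of_mixed_parity {C : ℕ} (hC : 0 < C) {s : Fin 3 → ℕ × ℕ × ℕ}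
    (hinj : Function.Injective s)
    (hs : ∀ i, lucas (s i).1 + C = 2 ^ (s i).2.1 * 3 ^ (s i).2.2) {i j : Fin 3}
    (hi : (s i).1 % 2 = 0) (hj : (s j).1 % 2 = 1) :
    (-C : ℤ) ∈ ({-133, -97, -61, -52, -25, -21, -20, -17, -14, -9, -7, -6, -5, -3,
        -2, -1} : Set ℤ) := by
  have hm := Sieve.mem_mixedValues hC (hs i) (hs j) hi hj
  by_cases hA : ∃ A B, (C, A, B) ∈ Sieve.singleValues
  · obtain ⟨A, B, hAB⟩ := hA
    exfalso
    have h := fun i => Sieve.singleValues_spec hC hAB (hs i)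
    have hne : ∀ i j, i ≠ j → 2 ^ (s i).2.1 * 3 ^ (s i).2.2 ≠ 2 ^ (s j).2.1 * 3 ^ (s j).2.2 :=
      fun i j hij he => hij (hinj (solution_ext (hs i) (hs j) he))
    have h01 := hne 0 1 (by decide)
    have h02 := hne 0 2 (by decide)
    have h12 := hne 1 2 (by decide)
    have := h 0
    have := h 1
    have := h 2
    omega
  · push Not at hA
    have : ∀ C ∈ Sieve.mixedValues, (Sieve.singleValues.any fun e => e.1 == C) = true ∨
        C ∈ [133, 97, 61, 52, 25, 21, 20, 17, 14, 9, 7, 6, 5, 3, 2, 1] := by decide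
    rcases this C hm with h | h
    · obtain ⟨⟨C', A, B⟩, he, he'⟩ := List.any_eq_true.1 h
      obtain rfl : C' = C := by simpa using he'
      exact absurd he (hA A B)
    · simp only [List.mem_cons, List.not_mem_nil, or_false] at h
      rcases h with h | h | h | h | h | h | h | h | h | h | h | h | h | h | h | h <;> subst h <;>
        simp

namespace Baker

open Finset

theorem iteratedDeriv_sub_mul {g : ℂ → ℂ} (hg : Differentiable ℂ g) (a : ℂ) (t : ℕ) :
    iteratedDeriv t (fun z => (z - a) * g z) =
      fun z => (z - a) * iteratedDeriv t g z + t * iteratedDeriv (t - 1) g z := by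
  have hd : ∀ t, Differentiable ℂ (iteratedDeriv t g) := fun t =>
    (hg.contDiff (n := t + 1)).differentiable_iteratedDeriv t (by exact_mod_cast Nat.lt_succ_self t)
  induction t with
  | zero => simp
  | succ t ih =>
    rw [iteratedDeriv_succ, ih]
    funext z
    have h1 : HasDerivAt (fun z => (z - a) * iteratedDeriv t g z)
        (1 * iteratedDeriv t g z + (z - a) * iteratedDeriv (t + 1) g z) z := by
      rw [iteratedDeriv_succ]
      exact ((hasDerivAt_id z).sub_const a).mul (hd t z).hasDerivAt
    have h2 : HasDerivAt (fun z => (t : ℂ) * iteratedDeriv (t - 1) g z)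
        (t * iteratedDeriv t g z) z := by
      rcases t with _ | t
      · simpa using hasDerivAt_const z (0 : ℂ)
      · rw [Nat.add_sub_cancel, iteratedDeriv_succ (n := t)]
        exact (hd t z).hasDerivAt.const_mul _
    rw [(h1.fun_add h2).deriv]
    push_cast
    simp
    ring

theorem iteratedDeriv_eq_dslope {f : ℂ → ℂ} (hf : Differentiable ℂ f) (a z : ℂ) (t : ℕ) :
    iteratedDeriv t f z = (if t = 0 then f a else 0) + ((z - a) * iteratedDeriv t (dslope f a) z +
      t * iteratedDeriv (t - 1) (dslope f a) z) := by
  have hg : Differentiable ℂ (dslope f a) := by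
    rw [← differentiableOn_univ] at hf ⊢
    exact (Complex.differentiableOn_dslope Filter.univ_mem).2 hf
  have e : f = fun z => f a + (z - a) * dslope f a z := by
    funext z
    have := sub_smul_dslope f a z
    rw [smul_eq_mul] at this
    rw [this]; ring
  have hm : ContDiff ℂ t fun z => (z - a) * dslope f a z :=
    ((contDiff_id.sub contDiff_const).mul hg.contDiff)
  conv_lhs => rw [e]
  rw [iteratedDeriv_fun_add contDiffAt_const hm.contDiffAt, iteratedDeriv_const,
    iteratedDeriv_sub_mul hg]

theorem norm_iteratedDeriv_dslope_le {f : ℂ → ℂ} (hf : Differentiable ℂ f) {a z : ℂ} {δ : ℝ}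
    (hz : 1 ≤ ‖z - a‖) {T : ℕ} (ha : ‖f a‖ ≤ δ) (h : ∀ t < T, ‖iteratedDeriv t f z‖ ≤ δ)
    {t : ℕ} (ht : t < T) : ‖iteratedDeriv t (dslope f a) z‖ ≤ 2 * (t + 1).factorial * δ := by
  have hδ : 0 ≤ δ := (norm_nonneg _).trans ha
  have key : ∀ t < T, ‖iteratedDeriv t (dslope f a) z‖ ≤ (if t = 0 then δ else 0) + δ +
      t * ‖iteratedDeriv (t - 1) (dslope f a) z‖ := by
    intro t ht
    have h1 : ‖iteratedDeriv t (dslope f a) z‖ ≤ ‖(z - a) * iteratedDeriv t (dslope f a) z‖ := by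
      rw [norm_mul]; exact le_mul_of_one_le_left (norm_nonneg _) hz
    have h2 : (z - a) * iteratedDeriv t (dslope f a) z = iteratedDeriv t f z -
        (if t = 0 then f a else 0) - t * iteratedDeriv (t - 1) (dslope f a) z := by
      rw [iteratedDeriv_eq_dslope hf a z t]; ring
    have h3 : ‖(if t = 0 then f a else 0)‖ ≤ (if t = 0 then δ else 0) := by
      split_ifs <;> simp [ha]
    have h4 := norm_sub_le (iteratedDeriv t f z - (if t = 0 then f a else 0))
      (t * iteratedDeriv (t - 1) (dslope f a) z)
    have h5 := norm_sub_le (iteratedDeriv t f z) (if t = 0 then f a else 0)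
    rw [h2] at h1
    rw [norm_mul, Complex.norm_natCast] at h4
    linarith [h t ht]
  induction t with
  | zero => simpa [two_mul] using key 0 ht
  | succ t ih =>
    have h1 := key (t + 1) ht
    have h2 := ih (by omega)
    simp only [Nat.add_eq_zero_iff, one_ne_zero, and_false, if_false, Nat.add_sub_cancel] at h1
    refine h1.trans ?_
    have h3 : (1 : ℝ) ≤ (t + 1).factorial := by exact_mod_cast Nat.succ_le_of_lt (Nat.factorial_pos _)
    have h4 : (((t + 1 : ℕ) : ℝ)) * ‖iteratedDeriv t (dslope f a) z‖ ≤
        ((t + 1 : ℕ) : ℝ) * (2 * (t + 1).factorial * δ) := by gcongr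
    rw [Nat.factorial_succ (t + 1)]
    push_cast at *
    nlinarith [mul_le_mul_of_nonneg_right h3 hδ]

/-- A Schwarz lemma for entire functions with almost vanishing derivatives at integers. -/
theorem norm_le_of_small_derivs {S T : ℕ} {r : ℝ} (hr : 0 < r) (hS : S ≤ r) (N : ℕ)
    {f : ℂ → ℂ} (hf : Differentiable ℂ f) {B δ : ℝ} (hδ : 0 ≤ δ) {τ : ℕ → ℕ}
    (hτ : ∀ s < S, τ s ≤ T) (hN : ∑ s ∈ range S, τ s = N)
    (hB : ∀ z : ℂ, ‖z‖ ≤ 7 * r → ‖f z‖ ≤ B)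
    (h : ∀ s < S, ∀ t < τ s, ‖iteratedDeriv t f s‖ ≤ δ) (z : ℂ) (hz : ‖z‖ ≤ r) :
    ‖f z‖ ≤ (1 / 3) ^ N * B + (2 + 2 * r * (2 * T.factorial)) ^ N * δ := by
  induction N generalizing f B δ τ z with
  | zero =>
    have := hB z (by linarith)
    simp only [pow_zero, one_mul]
    linarith
  | succ N ih =>
    obtain ⟨a, ha, hτa⟩ : ∃ a ∈ range S, τ a ≠ 0 := by
      by_contra! hc
      rw [sum_eq_zero hc] at hN
      omega
    have haS := mem_range.1 ha
    set K : ℝ := 2 * T.factorial with hK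
    have hK1 : 1 ≤ K := by
      have : (1 : ℝ) ≤ T.factorial := by exact_mod_cast Nat.succ_le_of_lt (Nat.factorial_pos _)
      linarith
    have hg : Differentiable ℂ (dslope f a) := by
      have hf' := hf
      rw [← differentiableOn_univ] at hf' ⊢
      exact (Complex.differentiableOn_dslope Filter.univ_mem).2 hf'
    have hfa : ‖f a‖ ≤ δ := by simpa using h a haS 0 (Nat.pos_of_ne_zero hτa)
    have haR : ‖(a : ℂ)‖ ≤ r := by
      rw [Complex.norm_natCast]
      exact le_trans (by exact_mod_cast haS.le) hS
    have hfz : ∀ z, f z = f a + (z - a) * dslope f a z := fun z => by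
      have := sub_smul_dslope f (a : ℂ) z
      rw [smul_eq_mul] at this
      rw [this]; ring
    have hgB : ∀ z : ℂ, ‖z‖ ≤ 7 * r → ‖dslope f a z‖ ≤ (B + δ) / (6 * r) := by
      intro z hz
      refine Complex.norm_le_of_forall_mem_frontier_norm_le (U := Metric.ball 0 (7 * r))
        Metric.isBounded_ball hg.diffContOnCl (fun w hw => ?_) ?_
      · rw [frontier_ball _ (by positivity), mem_sphere_zero_iff_norm] at hw
        have h1 : 6 * r ≤ ‖w - a‖ := by
          have := norm_sub_norm_le w a
          linarith
        rw [le_div_iff₀ (by positivity)]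
        have h2 : ‖(w - a) * dslope f a w‖ ≤ B + δ := by
          rw [show (w - a) * dslope f a w = f w - f a by rw [hfz w]; ring]
          exact (norm_sub_le _ _).trans (add_le_add (hB w hw.le) hfa)
        rw [norm_mul] at h2
        nlinarith [norm_nonneg (dslope f a w)]
      · rw [closure_ball _ (by positivity)]
        simpa using hz
    have hgd : ∀ s < S, ∀ t < Function.update τ a (τ a - 1) s,
        ‖iteratedDeriv t (dslope f a) s‖ ≤ K * δ := by
      intro s hs t ht
      by_cases hsa : s = a
      · subst hsa
        rw [Function.update_self] at ht
        have h1 := iteratedDeriv_eq_dslope hf s s (t + 1)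
        simp only [Nat.add_eq_zero_iff, one_ne_zero, and_false, if_false, Nat.add_sub_cancel,
          sub_self, zero_mul, zero_add] at h1
        have h2 := h s hs (t + 1) (by omega)
        rw [h1, norm_mul, Complex.norm_natCast] at h2
        push_cast at h2
        have : 0 ≤ (t : ℝ) := t.cast_nonneg
        nlinarith [norm_nonneg (iteratedDeriv t (dslope f s) s)]
      · rw [Function.update_of_ne hsa] at ht
        have h1 : (1 : ℝ) ≤ ‖(s : ℂ) - a‖ := by
          have : (1 : ℤ) ≤ |(s : ℤ) - a| :=
            Int.one_le_abs (sub_ne_zero.2 (Nat.cast_injective.ne hsa))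
          have e : (s : ℂ) - a = (((s : ℤ) - a : ℤ) : ℂ) := by push_cast; rfl
          rw [e, Complex.norm_intCast]
          exact_mod_cast this
        refine (norm_iteratedDeriv_dslope_le hf h1 hfa (h s hs) ht).trans ?_
        rw [hK]
        gcongr
        exact (Nat.succ_le_of_lt ht).trans (hτ s hs)
    have hsum : ∑ s ∈ range S, Function.update τ a (τ a - 1) s = N := by
      rw [sum_update_of_mem ha, sdiff_singleton_eq_erase]
      rw [← add_sum_erase _ _ ha] at hN
      omega
    have hmain := ih hg (by positivity : 0 ≤ K * δ) (τ := Function.update τ a (τ a - 1))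
      (fun s hs => by
        by_cases hsa : s = a
        · subst hsa; rw [Function.update_self]; exact (Nat.sub_le _ _).trans (hτ s hs)
        · rw [Function.update_of_ne hsa]; exact hτ s hs) hsum hgB hgd z hz
    set C := 2 + 2 * r * K with hC
    have hC1 : 1 ≤ C := by rw [hC]; nlinarith
    have hCN : 1 ≤ C ^ N := one_le_pow₀ hC1
    have hz2 : ‖z - a‖ ≤ 2 * r := (norm_sub_le _ _).trans (by linarith)
    have h3 : (1 / 3 : ℝ) ^ N ≤ 1 := pow_le_one₀ (by norm_num) (by norm_num)
    calc ‖f z‖ ≤ ‖f a‖ + ‖z - a‖ * ‖dslope f a z‖ := by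
          rw [hfz z, ← norm_mul]; exact norm_add_le _ _
      _ ≤ δ + 2 * r * ((1 / 3) ^ N * ((B + δ) / (6 * r)) + C ^ N * (K * δ)) := by gcongr
      _ = (1 / 3) ^ (N + 1) * B + (δ + (1 / 3) ^ N * (δ / 3) + 2 * r * K * C ^ N * δ) := by
          field_simp; ring
      _ ≤ (1 / 3) ^ (N + 1) * B + C ^ (N + 1) * δ := by
          have h4 : (1 / 3 : ℝ) ^ N * (δ / 3) ≤ 1 * (δ / 3) := by gcongr
          have h5 : δ ≤ C ^ N * δ := le_mul_of_one_le_left hδ hCN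
          have h6 : C ^ (N + 1) * δ = 2 * (C ^ N * δ) + 2 * r * K * C ^ N * δ := by
            rw [pow_succ]; nth_rw 2 [hC]; ring
          linarith

open Real in
theorem goldenRatio_pow_eq_fib (k : ℕ) :
    goldenRatio ^ k = k.fib * goldenRatio + ((k + 1).fib - k.fib) := by
  have h2 := goldenRatio_add_goldenConj
  have : goldenConj = 1 - goldenRatio := by linarith
  rw [← fib_succ_sub_goldenConj_mul_fib k, this]
  ring

open Real in
theorem goldenConj_pow_eq_fib (k : ℕ) :
    goldenConj ^ k = k.fib * goldenConj + ((k + 1).fib - k.fib) := by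
  have h2 := goldenRatio_add_goldenConj
  have : goldenRatio = 1 - goldenConj := by linarith
  rw [← fib_succ_sub_goldenRatio_mul_fib k, this]
  ring

open Real in
theorem golden_linear_eq_zero {U W : ℤ}
    (h : |(U * goldenRatio + W) * (U * goldenConj + W)| < 1) : U * goldenRatio + W = 0 := by
  have h1 : (U * goldenRatio + W) * (U * goldenConj + W) = ((-U ^ 2 + U * W + W ^ 2 : ℤ) : ℝ) := by
    push_cast
    linear_combination (U : ℝ) ^ 2 * goldenRatio_mul_goldenConj
      + (U : ℝ) * W * goldenRatio_add_goldenConj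
  rw [h1, ← Int.cast_abs] at h
  have h2 : -U ^ 2 + U * W + W ^ 2 = 0 := by
    have : |-U ^ 2 + U * W + W ^ 2| < 1 := by exact_mod_cast h
    exact Int.abs_lt_one_iff.mp this
  rw [h2, Int.cast_zero] at h1
  have key : ∀ x : ℝ, Irrational x → U * x + W = 0 → U = 0 := by
    intro x hx h0
    by_contra hU
    refine hx ⟨-W / U, ?_⟩
    push_cast
    have : (U : ℝ) ≠ 0 := by exact_mod_cast hU
    field_simp
    linarith
  rcases mul_eq_zero.mp h1 with h3 | h3
  · exact h3
  · have hU := key _ goldenConj_irrational h3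
    subst hU
    simpa using h3

/-- Liouville's inequality for integer combinations of powers of the golden ratio. -/
theorem sum_goldenRatio_pow_eq_zero {ι : Type*} [Fintype ι] {q : ι → ℤ} {k : ι → ℕ} {A D : ℝ}
    (hA : |∑ i, (q i : ℝ) * Real.goldenRatio ^ k i| ≤ A) (hD : ∑ i, |(q i : ℝ)| ≤ D)
    (h : A * D < 1) : ∑ i, (q i : ℝ) * Real.goldenRatio ^ k i = 0 := by
  set U : ℤ := ∑ i, q i * (k i).fib with hU
  set W : ℤ := ∑ i, q i * ((k i + 1).fib - (k i).fib) with hW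
  have e1 : ∑ i, (q i : ℝ) * Real.goldenRatio ^ k i = U * Real.goldenRatio + W := by
    simp only [hU, hW]
    push_cast
    rw [sum_mul, ← sum_add_distrib]
    refine sum_congr rfl fun i _ => ?_
    rw [goldenRatio_pow_eq_fib]
    ring
  have e2 : ∑ i, (q i : ℝ) * Real.goldenConj ^ k i = U * Real.goldenConj + W := by
    simp only [hU, hW]
    push_cast
    rw [sum_mul, ← sum_add_distrib]
    refine sum_congr rfl fun i _ => ?_
    rw [goldenConj_pow_eq_fib]
    ring
  have e3 : |∑ i, (q i : ℝ) * Real.goldenConj ^ k i| ≤ D := by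
    refine (abs_sum_le_sum_abs _ _).trans (le_trans (sum_le_sum fun i _ => ?_) hD)
    rw [abs_mul, abs_pow]
    refine mul_le_of_le_one_right (abs_nonneg _) (pow_le_one₀ (abs_nonneg _) ?_)
    rw [abs_le]
    constructor <;> linarith [Real.neg_one_lt_goldenConj, Real.goldenConj_neg]
  rw [e1] at hA ⊢
  rw [e2] at e3
  apply golden_linear_eq_zero
  rw [abs_mul]
  refine lt_of_le_of_lt (mul_le_mul hA e3 (abs_nonneg _) ((abs_nonneg _).trans hA)) h

/-- Exponents of the monomials of the auxiliary polynomial. -/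
abbrev Idx (L : ℕ) := Fin L × Fin L × Fin L

/-- The coefficient of `log 2` in `n * (a log 2 + b log 3 + c log φ)` once
`n log φ` is replaced by `x log 2 + y log 3`. -/
def mu (n x : ℕ) {L : ℕ} (i : Idx L) : ℕ := n * i.1 + x * i.2.2

/-- The coefficient of `log 3` in `n * (a log 2 + b log 3 + c log φ)` once
`n log φ` is replaced by `x log 2 + y log 3`. -/
def nu (n y : ℕ) {L : ℕ} (i : Idx L) : ℕ := n * i.2.1 + y * i.2.2

/-- The value `2 ^ a * 3 ^ b * φ ^ c` of a monomial. -/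
noncomputable def base {L : ℕ} (i : Idx L) : ℝ :=
  2 ^ (i.1 : ℕ) * 3 ^ (i.2.1 : ℕ) * Real.goldenRatio ^ (i.2.2 : ℕ)

/-- The perturbed frequency, close to `log (base i)`. -/
noncomputable def freq (n x y : ℕ) {L : ℕ} (i : Idx L) : ℝ :=
  (mu n x i * Real.log 2 + nu n y i * Real.log 3) / n

/-- The linear form in logarithms. -/
noncomputable def linForm (n x y : ℕ) : ℝ :=
  x * Real.log 2 + y * Real.log 3 - n * Real.log Real.goldenRatio

/-- Coefficients of the iterated partial derivatives of the auxiliary function. -/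
def auxCoeff (n x y : ℕ) {L : ℕ} (p : Idx L → ℤ) (m k : ℕ) (i : Idx L) : ℤ :=
  p i * mu n x i ^ m * nu n y i ^ k

/-- Values at integers of the iterated partial derivatives of the auxiliary function. -/
noncomputable def auxSum (n x y : ℕ) {L : ℕ} (p : Idx L → ℤ) (m k s : ℕ) : ℝ :=
  ∑ i, (auxCoeff n x y p m k i : ℝ) * base i ^ s

/-- The auxiliary function vanishes to order `M` at the integers below `S`. -/
def Vanishes (n x y : ℕ) {L : ℕ} (p : Idx L → ℤ) (M S : ℕ) : Prop :=
  ∀ m k s, m + k < M → s < S → auxSum n x y p m k s = 0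

variable {n x y L : ℕ}

theorem base_pos (i : Idx L) : 0 < base i := by
  have := Real.goldenRatio_pos
  unfold base
  positivity

theorem log_base (i : Idx L) : Real.log (base i) =
    (i.1 : ℕ) * Real.log 2 + (i.2.1 : ℕ) * Real.log 3
      + (i.2.2 : ℕ) * Real.log Real.goldenRatio := by
  have := Real.goldenRatio_pos
  unfold base
  rw [Real.log_mul (by positivity) (by positivity), Real.log_mul (by positivity) (by positivity),
    Real.log_pow, Real.log_pow, Real.log_pow]

theorem base_pow_eq (i : Idx L) (s : ℕ) : base i ^ s = Real.exp (s * Real.log (base i)) := by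
  rw [Real.exp_nat_mul, Real.exp_log (base_pos i)]

theorem freq_sub_log_base (hn : 0 < n) (i : Idx L) :
    freq n x y i - Real.log (base i) = (i.2.2 : ℕ) * linForm n x y / n := by
  have : (n : ℝ) ≠ 0 := by positivity
  rw [log_base]
  unfold freq linForm mu nu
  push_cast
  field_simp
  ring

theorem log_base_le (i : Idx L) : Real.log (base i) ≤ 3 * L := by
  have h1 : ((i.1 : ℕ) : ℝ) ≤ L := by exact_mod_cast i.1.2.le
  have h2 : ((i.2.1 : ℕ) : ℝ) ≤ L := by exact_mod_cast i.2.1.2.le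
  have h3 : ((i.2.2 : ℕ) : ℝ) ≤ L := by exact_mod_cast i.2.2.2.le
  have l2 : Real.log 2 ≤ 0.7 := by linarith [Real.log_two_lt_d9]
  have l3 : Real.log 3 ≤ 1.4 := by
    have : Real.log 3 ≤ Real.log (2 ^ 2) := Real.log_le_log (by norm_num) (by norm_num)
    rw [Real.log_pow] at this
    push_cast at this
    linarith
  have l4 : Real.log Real.goldenRatio ≤ 0.7 :=
    (Real.log_le_log Real.goldenRatio_pos Real.goldenRatio_lt_two.le).trans l2
  have hL : (0 : ℝ) ≤ L := by positivity
  rw [log_base]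
  have e1 := mul_le_mul h1 l2 (Real.log_nonneg (by norm_num)) hL
  have e2 := mul_le_mul h2 l3 (Real.log_nonneg (by norm_num)) hL
  have e3 := mul_le_mul h3 l4 (Real.log_nonneg Real.one_lt_goldenRatio.le) hL
  linarith

theorem freq_nonneg (i : Idx L) : 0 ≤ freq n x y i := by
  unfold freq
  have := Real.log_nonneg (x := 2) (by norm_num)
  have := Real.log_nonneg (x := 3) (by norm_num)
  positivity

theorem abs_freq_sub_log_base_le (hn : 0 < n) {lam : ℝ} (hlam : |linForm n x y| ≤ lam)
    (i : Idx L) : |freq n x y i - Real.log (base i)| ≤ L * lam := by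
  rw [freq_sub_log_base hn, abs_div, abs_mul, Nat.abs_cast, Nat.abs_cast]
  have h3 : ((i.2.2 : ℕ) : ℝ) ≤ L := by exact_mod_cast i.2.2.2.le
  have hn' : (1 : ℝ) ≤ n := by exact_mod_cast hn
  exact (div_le_self (by positivity) hn').trans
    (mul_le_mul h3 hlam (abs_nonneg _) (by positivity))

theorem freq_le (hn : 0 < n) {lam : ℝ} (hlam : |linForm n x y| ≤ lam) (hlam' : lam ≤ 1)
    (i : Idx L) : freq n x y i ≤ 4 * L := by
  have h1 := (abs_le.mp (abs_freq_sub_log_base_le hn hlam i)).2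
  have h2 := log_base_le i
  have : (L : ℝ) * lam ≤ L * 1 := by gcongr
  linarith

theorem abs_exp_freq_sub_le (hn : 0 < n) {lam : ℝ} (hlam : |linForm n x y| ≤ lam) {s S : ℕ}
    (hs : s ≤ S) (h1 : L * S * lam ≤ 1) (i : Idx L) :
    |Real.exp (s * freq n x y i) - base i ^ s| ≤ Real.exp (4 * L * S) * (2 * L * S * lam) := by
  have hl0 : 0 ≤ lam := (abs_nonneg _).trans hlam
  have hs' : (s : ℝ) ≤ S := by exact_mod_cast hs
  have e : Real.exp (s * freq n x y i) - base i ^ s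
      = base i ^ s * (Real.exp (s * (freq n x y i - Real.log (base i))) - 1) := by
    rw [base_pow_eq, mul_sub, ← Real.exp_add]
    ring_nf
  have h2 : |s * (freq n x y i - Real.log (base i))| ≤ L * S * lam := by
    rw [abs_mul, Nat.abs_cast]
    calc (s : ℝ) * |freq n x y i - Real.log (base i)| ≤ S * (L * lam) :=
          mul_le_mul hs' (abs_freq_sub_log_base_le hn hlam i) (abs_nonneg _) (by positivity)
      _ = _ := by ring
  have h3 : base i ^ s ≤ Real.exp (4 * L * S) := by
    rw [base_pow_eq, Real.exp_le_exp]
    calc (s : ℝ) * Real.log (base i) ≤ s * (3 * L) := by gcongr; exact log_base_le i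
      _ ≤ S * (4 * L) := by gcongr; norm_num
      _ = _ := by ring
  rw [e, abs_mul, abs_of_pos (pow_pos (base_pos i) s)]
  refine mul_le_mul h3 ?_ (abs_nonneg _) (Real.exp_pos _).le
  refine (Real.abs_exp_sub_one_le (h2.trans h1)).trans ?_
  linarith

theorem Vanishes.sum_freq_eq_zero {p : Idx L → ℤ} {M S : ℕ} (h : Vanishes n x y p M S)
    (t : ℕ) : ∀ m k s, m + k + t < M → s < S →
      ∑ i, (auxCoeff n x y p m k i : ℝ) * freq n x y i ^ t * base i ^ s = 0 := by
  induction t with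
  | zero =>
    intro m k s hm hs
    simpa [auxSum] using h m k s hm hs
  | succ t ih =>
    intro m k s hm hs
    have h1 := ih (m + 1) k s (by omega) hs
    have h2 := ih m (k + 1) s (by omega) hs
    have : ∑ i, (auxCoeff n x y p m k i : ℝ) * freq n x y i ^ (t + 1) * base i ^ s
        = Real.log 2 / n *
          ∑ i, (auxCoeff n x y p (m + 1) k i : ℝ) * freq n x y i ^ t * base i ^ s
        + Real.log 3 / n *
          ∑ i, (auxCoeff n x y p m (k + 1) i : ℝ) * freq n x y i ^ t * base i ^ s := by
      rw [mul_sum, mul_sum, ← sum_add_distrib]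
      refine sum_congr rfl fun i _ => ?_
      have e : freq n x y i = Real.log 2 / n * mu n x i + Real.log 3 / n * nu n y i := by
        unfold freq
        ring
      rw [pow_succ]
      nth_rewrite 2 [e]
      unfold auxCoeff
      push_cast
      ring
    rw [this, h1, h2]
    simp

theorem sum_abs_auxCoeff_le {p : Idx L → ℤ} {P H : ℝ} (hP : ∑ i, |(p i : ℝ)| ≤ P) (hH : 1 ≤ H)
    (hmu : ∀ i : Idx L, (mu n x i : ℝ) ≤ H) (hnu : ∀ i : Idx L, (nu n y i : ℝ) ≤ H)
    {m k M : ℕ} (h : m + k ≤ M) : ∑ i, |(auxCoeff n x y p m k i : ℝ)| ≤ P * H ^ M := by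
  calc ∑ i, |(auxCoeff n x y p m k i : ℝ)| ≤ ∑ i, |(p i : ℝ)| * H ^ M := by
        refine sum_le_sum fun i _ => ?_
        unfold auxCoeff
        push_cast
        rw [abs_mul, abs_mul, abs_pow, abs_pow, Nat.abs_cast, Nat.abs_cast, mul_assoc]
        refine mul_le_mul_of_nonneg_left ?_ (abs_nonneg _)
        calc (mu n x i : ℝ) ^ m * (nu n y i : ℝ) ^ k ≤ H ^ m * H ^ k :=
              mul_le_mul (pow_le_pow_left₀ (by positivity) (hmu i) m)
                (pow_le_pow_left₀ (by positivity) (hnu i) k) (by positivity) (by positivity)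
          _ = H ^ (m + k) := (pow_add _ _ _).symm
          _ ≤ H ^ M := pow_le_pow_right₀ hH h
    _ = (∑ i, |(p i : ℝ)|) * H ^ M := by rw [sum_mul]
    _ ≤ P * H ^ M := by gcongr

theorem auxSum_eq_zero_of_small {p : Idx L → ℤ} {m k s S : ℕ} (hs : s ≤ S) {A E : ℝ}
    (hE : ∑ i, |(auxCoeff n x y p m k i : ℝ)| ≤ E) (hA : |auxSum n x y p m k s| ≤ A)
    (h : A * (E * 6 ^ (L * S)) < 1) : auxSum n x y p m k s = 0 := by
  have e : auxSum n x y p m k s = ∑ i : Idx L,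
      (((auxCoeff n x y p m k i * 2 ^ ((i.1 : ℕ) * s) * 3 ^ ((i.2.1 : ℕ) * s) : ℤ)) : ℝ)
        * Real.goldenRatio ^ ((i.2.2 : ℕ) * s) := by
    unfold auxSum
    refine sum_congr rfl fun i _ => ?_
    unfold base
    push_cast
    rw [pow_mul, pow_mul, pow_mul]
    ring
  rw [e] at hA ⊢
  refine sum_goldenRatio_pow_eq_zero hA ?_ h
  calc _ ≤ ∑ i, |(auxCoeff n x y p m k i : ℝ)| * 6 ^ (L * S) := by
        refine sum_le_sum fun i _ => ?_
        push_cast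
        rw [abs_mul, abs_mul, abs_of_pos (show (0 : ℝ) < 2 ^ _ by positivity),
          abs_of_pos (show (0 : ℝ) < 3 ^ _ by positivity), mul_assoc]
        refine mul_le_mul_of_nonneg_left ?_ (abs_nonneg _)
        have h1 : (i.1 : ℕ) * s ≤ L * S := Nat.mul_le_mul i.1.2.le hs
        have h2 : (i.2.1 : ℕ) * s ≤ L * S := Nat.mul_le_mul i.2.1.2.le hs
        calc (2 : ℝ) ^ ((i.1 : ℕ) * s) * 3 ^ ((i.2.1 : ℕ) * s) ≤ 2 ^ (L * S) * 3 ^ (L * S) :=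
              mul_le_mul (pow_le_pow_right₀ (by norm_num) h1)
                (pow_le_pow_right₀ (by norm_num) h2) (by positivity) (by positivity)
          _ = 6 ^ (L * S) := by rw [← mul_pow]; norm_num
    _ = (∑ i, |(auxCoeff n x y p m k i : ℝ)|) * 6 ^ (L * S) := by rw [sum_mul]
    _ ≤ E * 6 ^ (L * S) := by gcongr

theorem iteratedDeriv_sum_exp {ι : Type*} [Fintype ι] (w : ι → ℂ) (t : ℕ) : ∀ c : ι → ℂ,
    iteratedDeriv t (fun z => ∑ i, c i * Complex.exp (w i * z))
      = fun z => ∑ i, c i * w i ^ t * Complex.exp (w i * z) := by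
  induction t with
  | zero => intro c; simp
  | succ t ih =>
    intro c
    have h : deriv (fun z => ∑ i, c i * Complex.exp (w i * z))
        = fun z => ∑ i, (c i * w i) * Complex.exp (w i * z) := by
      funext z
      refine HasDerivAt.deriv ?_
      refine HasDerivAt.fun_sum fun i _ => ?_
      have h1 : HasDerivAt (fun z : ℂ => w i * z) (w i) z := by
        simpa using (hasDerivAt_id z).const_mul (w i)
      exact (h1.cexp.const_mul (c i)).congr_deriv (by ring)
    rw [iteratedDeriv_succ', h, ih]
    funext z
    refine sum_congr rfl fun i _ => ?_
    ring

/-- The extrapolation step: fewer derivatives, more zeros. -/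
theorem Vanishes.extrapolate {p : Idx L → ℤ} {M S T S' : ℕ} (h : Vanishes n x y p (M + T) S)
    (hn : 0 < n) (hL : 0 < L) (hSS : S ≤ S') (hS' : 0 < S') {lam P H : ℝ}
    (hlam : |linForm n x y| ≤ lam) (hlam' : L * S' * lam ≤ 1)
    (hP : ∑ i, |(p i : ℝ)| ≤ P) (hH : 1 ≤ H)
    (hmu : ∀ i : Idx L, (mu n x i : ℝ) ≤ H) (hnu : ∀ i : Idx L, (nu n y i : ℝ) ≤ H)
    (hlt : ((1 / 3) ^ (S * T) * (P * H ^ M * Real.exp (28 * L * S'))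
      + ((2 + 2 * S' * (2 * T.factorial)) ^ (S * T) + 1)
        * (P * H ^ M * (4 * L) ^ T * (Real.exp (4 * L * S') * (2 * L * S' * lam))))
      * (P * H ^ M * 6 ^ (L * S')) < 1) :
    Vanishes n x y p M S' := by
  intro m k s hm hs
  set E := P * H ^ M with hEdef
  set ε := Real.exp (4 * L * S') * (2 * L * S' * lam) with hε
  have hE := sum_abs_auxCoeff_le hP hH hmu hnu hm.le
  have hE0 : 0 ≤ E := (sum_nonneg fun i _ => abs_nonneg _).trans hE
  have hl0 : 0 ≤ lam := (abs_nonneg _).trans hlam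
  have hε0 : 0 ≤ ε := by positivity
  have hL1 : (1 : ℝ) ≤ L := by exact_mod_cast hL
  have hS1 : (1 : ℝ) ≤ S' := by exact_mod_cast hS'
  have hlam1 : lam ≤ 1 := by
    refine le_trans ?_ hlam'
    have : 1 ≤ (L : ℝ) * S' := one_le_mul_of_one_le_of_one_le hL1 hS1
    exact le_mul_of_one_le_left hl0 this
  have h4L : (1 : ℝ) ≤ 4 * L := by linarith
  set f : ℂ → ℂ := fun z => ∑ i : Idx L, ((auxCoeff n x y p m k i : ℝ) : ℂ)
    * Complex.exp ((freq n x y i : ℂ) * z) with hf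
  have hfd : Differentiable ℂ f := by
    rw [hf]
    fun_prop
  have hB : ∀ z : ℂ, ‖z‖ ≤ 7 * S' → ‖f z‖ ≤ E * Real.exp (28 * L * S') := by
    intro z hz
    refine (norm_sum_le _ _).trans ?_
    calc _ ≤ ∑ i : Idx L, |(auxCoeff n x y p m k i : ℝ)| * Real.exp (28 * L * S') := by
          refine sum_le_sum fun i _ => ?_
          rw [norm_mul, Complex.norm_real, Real.norm_eq_abs, Complex.norm_exp]
          refine mul_le_mul_of_nonneg_left (Real.exp_le_exp.mpr ?_) (abs_nonneg _)
          rw [Complex.re_ofReal_mul]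
          calc freq n x y i * z.re ≤ freq n x y i * (7 * S') := by
                gcongr
                · exact freq_nonneg i
                · exact (Complex.re_le_norm z).trans hz
            _ ≤ 4 * L * (7 * S') := by gcongr; exact freq_le hn hlam hlam1 i
            _ = 28 * L * S' := by ring
      _ = (∑ i, |(auxCoeff n x y p m k i : ℝ)|) * Real.exp (28 * L * S') := by rw [sum_mul]
      _ ≤ _ := by gcongr
  have hdiff : ∀ t ≤ T, ∀ r ≤ S', |∑ i : Idx L, (auxCoeff n x y p m k i : ℝ) * freq n x y i ^ t
      * (Real.exp (r * freq n x y i) - base i ^ r)| ≤ E * (4 * L) ^ T * ε := by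
    intro t ht r hr
    refine (abs_sum_le_sum_abs _ _).trans ?_
    calc _ ≤ ∑ i : Idx L, |(auxCoeff n x y p m k i : ℝ)| * ((4 * L) ^ T * ε) := by
          refine sum_le_sum fun i _ => ?_
          rw [abs_mul, abs_mul, mul_assoc, abs_pow, abs_of_nonneg (freq_nonneg i)]
          refine mul_le_mul_of_nonneg_left ?_ (abs_nonneg _)
          refine mul_le_mul ?_ (abs_exp_freq_sub_le hn hlam hr hlam' i) (abs_nonneg _)
            (by positivity)
          exact (pow_le_pow_left₀ (freq_nonneg i) (freq_le hn hlam hlam1 i) t).trans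
            (pow_le_pow_right₀ h4L ht)
      _ = (∑ i, |(auxCoeff n x y p m k i : ℝ)|) * ((4 * L) ^ T * ε) := by rw [sum_mul]
      _ ≤ E * ((4 * L) ^ T * ε) := by gcongr
      _ = _ := by ring
  have hsmall : ∀ r < S, ∀ t < T, ‖iteratedDeriv t f r‖ ≤ E * (4 * L) ^ T * ε := by
    intro r hr t ht
    have h0 := h.sum_freq_eq_zero t m k r (by omega) hr
    have h1 := hdiff t ht.le r (by omega)
    simp only [mul_sub, sum_sub_distrib, h0, sub_zero] at h1
    rw [hf, iteratedDeriv_sum_exp]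
    have e : (∑ i : Idx L, ((auxCoeff n x y p m k i : ℝ) : ℂ) * (freq n x y i : ℂ) ^ t
        * Complex.exp ((freq n x y i : ℂ) * (r : ℂ)))
        = ((∑ i : Idx L, (auxCoeff n x y p m k i : ℝ) * freq n x y i ^ t
          * Real.exp (r * freq n x y i) : ℝ) : ℂ) := by
      push_cast
      refine sum_congr rfl fun i _ => ?_
      rw [mul_comm (r : ℂ)]
    simp only [e, Complex.norm_real, Real.norm_eq_abs]
    exact h1
  have hfs := norm_le_of_small_derivs (r := S') (by positivity) (by exact_mod_cast hSS) (S * T)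
    hfd (δ := E * (4 * L) ^ T * ε) (by positivity) (τ := fun _ => T) (fun _ _ => le_rfl)
    (by simp) hB hsmall s (by simpa using (by exact_mod_cast hs.le : (s : ℝ) ≤ S'))
  have e : f s = ((∑ i : Idx L, (auxCoeff n x y p m k i : ℝ) * Real.exp (s * freq n x y i) : ℝ)
      : ℂ) := by
    rw [hf]
    push_cast
    refine sum_congr rfl fun i _ => ?_
    rw [mul_comm (s : ℂ)]
  rw [e, Complex.norm_real, Real.norm_eq_abs] at hfs
  have hd := hdiff 0 (Nat.zero_le _) s hs.le
  simp only [pow_zero, mul_one, mul_sub, sum_sub_distrib] at hd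
  refine auxSum_eq_zero_of_small hs.le hE ?_ hlt
  have e2 : auxSum n x y p m k s
      = (∑ i : Idx L, (auxCoeff n x y p m k i : ℝ) * Real.exp (s * freq n x y i))
        - (∑ i : Idx L, (auxCoeff n x y p m k i : ℝ) * Real.exp (s * freq n x y i)
          - auxSum n x y p m k s) := by ring
  rw [e2]
  refine (abs_sub _ _).trans ?_
  have hd' : |∑ i : Idx L, (auxCoeff n x y p m k i : ℝ) * Real.exp (s * freq n x y i)
      - auxSum n x y p m k s| ≤ E * (4 * L) ^ T * ε := hd
  linarith

section Siegel

attribute [local instance] Matrix.seminormedAddCommGroup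

theorem exists_small_solution {α β : Type*} [Fintype α] [Fintype β] (A : Matrix α β ℤ)
    (h : 2 * Fintype.card α ≤ Fintype.card β) (hα : 0 < Fintype.card α) {R : ℝ} (hR : 1 ≤ R)
    (hA : ∀ i j, |(A i j : ℝ)| ≤ R) :
    ∃ t : β → ℤ, t ≠ 0 ∧ (∀ i, ∑ j, A i j * t j = 0) ∧
      ∀ j, |(t j : ℝ)| ≤ Fintype.card β * R := by
  obtain ⟨t, ht, h0, hb⟩ := Int.Matrix.exists_ne_zero_int_vec_norm_le A (by omega) hα
  refine ⟨t, ht, fun i => congrFun h0 i, fun j => ?_⟩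
  have hβ : (1 : ℝ) ≤ Fintype.card β := by
    exact_mod_cast (show 1 ≤ Fintype.card β by omega)
  have hα' : (1 : ℝ) ≤ Fintype.card α := by exact_mod_cast hα
  have h' : (2 : ℝ) * Fintype.card α ≤ Fintype.card β := by exact_mod_cast h
  have h1 : ‖A‖ ≤ R := by
    rw [Matrix.norm_le_iff (by linarith)]
    intro i j
    rw [Int.norm_eq_abs]
    exact hA i j
  have h2 : |(t j : ℝ)| ≤ ‖t‖ := by
    rw [← Int.norm_eq_abs]
    exact norm_le_pi_norm t j
  refine h2.trans (hb.trans ?_)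
  have h3 : (1 : ℝ) ≤ Fintype.card β * max 1 ‖A‖ :=
    one_le_mul_of_one_le_of_one_le hβ (le_max_left _ _)
  calc _ ≤ ((Fintype.card β : ℝ) * max 1 ‖A‖) ^ (1 : ℝ) := by
        refine Real.rpow_le_rpow_of_exponent_le h3 ?_
        rw [div_le_one (by linarith)]
        linarith
    _ = (Fintype.card β : ℝ) * max 1 ‖A‖ := Real.rpow_one _
    _ ≤ Fintype.card β * R := by gcongr; exact max_le hR h1

end Siegel

theorem fib_le_two_pow (k : ℕ) : Nat.fib k ≤ 2 ^ k := by
  induction k using Nat.twoStepInduction with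
  | zero => simp
  | one => simp
  | more k h1 h2 =>
    rw [Nat.fib_add_two, pow_succ, pow_succ]
    rw [pow_succ] at h2
    omega

/-- Integer coordinates of powers of the golden ratio. -/
def goldenCoord (e : Fin 2) (k : ℕ) : ℤ :=
  if e = 0 then Nat.fib k else Nat.fib (k + 1) - Nat.fib k

theorem abs_goldenCoord_le (e : Fin 2) (k : ℕ) : |(goldenCoord e k : ℝ)| ≤ 2 ^ k := by
  unfold goldenCoord
  have h : |(if e = 0 then (Nat.fib k : ℤ) else Nat.fib (k + 1) - Nat.fib k)| ≤ 2 ^ k := by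
    have h1 : (Nat.fib k : ℤ) ≤ 2 ^ k := by exact_mod_cast fib_le_two_pow k
    split_ifs
    · rw [Nat.abs_cast]
      exact h1
    · cases k with
      | zero => simp
      | succ k =>
        have h2 : (Nat.fib k : ℤ) ≤ 2 ^ k := by exact_mod_cast fib_le_two_pow k
        rw [Nat.fib_add_two]
        push_cast
        rw [add_sub_cancel_right, Nat.abs_cast, pow_succ]
        have : (0 : ℤ) ≤ 2 ^ k := by positivity
        linarith
  exact_mod_cast h

theorem exists_vanishes {M S : ℕ} (hM : 0 < M) (hS : 0 < S) (hcard : 4 * (M * M * S) ≤ L ^ 3)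
    {H : ℝ} (hH : 1 ≤ H)
    (hmu : ∀ i : Idx L, (mu n x i : ℝ) ≤ H) (hnu : ∀ i : Idx L, (nu n y i : ℝ) ≤ H) :
    ∃ p : Idx L → ℤ, p ≠ 0 ∧ Vanishes n x y p M S ∧
      ∑ i, |(p i : ℝ)| ≤ L ^ 6 * (H ^ (2 * M) * 12 ^ (L * S)) := by
  let A : Matrix (Fin M × Fin M × Fin S × Fin 2) (Idx L) ℤ := fun r i =>
    mu n x i ^ (r.1 : ℕ) * nu n y i ^ (r.2.1 : ℕ)
      * (2 ^ ((i.1 : ℕ) * r.2.2.1) * 3 ^ ((i.2.1 : ℕ) * r.2.2.1))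
      * goldenCoord r.2.2.2 (i.2.2 * r.2.2.1)
  have hc : Fintype.card (Idx L) = L ^ 3 := by
    simp only [Fintype.card_prod, Fintype.card_fin]
    ring
  have hA : ∀ r i, |(A r i : ℝ)| ≤ H ^ (2 * M) * 12 ^ (L * S) := by
    rintro ⟨m, k, s, e⟩ i
    have hs (a : Fin L) : (a : ℕ) * s ≤ L * S := Nat.mul_le_mul a.2.le s.2.le
    simp only [A]
    push_cast
    rw [abs_mul, abs_of_nonneg (by positivity)]
    have e1 : (mu n x i : ℝ) ^ (m : ℕ) * (nu n y i : ℝ) ^ (k : ℕ) ≤ H ^ (2 * M) := by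
      calc (mu n x i : ℝ) ^ (m : ℕ) * (nu n y i : ℝ) ^ (k : ℕ) ≤ H ^ (m : ℕ) * H ^ (k : ℕ) :=
            mul_le_mul (pow_le_pow_left₀ (by positivity) (hmu i) m)
              (pow_le_pow_left₀ (by positivity) (hnu i) k) (by positivity) (by positivity)
        _ = H ^ ((m : ℕ) + k) := (pow_add _ _ _).symm
        _ ≤ H ^ (2 * M) := pow_le_pow_right₀ hH (by omega)
    have e2 : (2 : ℝ) ^ ((i.1 : ℕ) * s) * 3 ^ ((i.2.1 : ℕ) * s) ≤ 2 ^ (L * S) * 3 ^ (L * S) :=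
      mul_le_mul (pow_le_pow_right₀ (by norm_num) (hs _))
        (pow_le_pow_right₀ (by norm_num) (hs _)) (by positivity) (by positivity)
    have e3 : |(goldenCoord e (i.2.2 * s) : ℝ)| ≤ 2 ^ (L * S) :=
      (abs_goldenCoord_le _ _).trans (pow_le_pow_right₀ (by norm_num) (hs _))
    calc _ ≤ H ^ (2 * M) * (2 ^ (L * S) * 3 ^ (L * S)) * 2 ^ (L * S) := by gcongr
      _ = H ^ (2 * M) * 12 ^ (L * S) := by
        rw [mul_assoc, ← mul_pow, ← mul_pow]
        norm_num
  have hR : (1 : ℝ) ≤ H ^ (2 * M) * 12 ^ (L * S) :=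
    one_le_mul_of_one_le_of_one_le (one_le_pow₀ hH) (one_le_pow₀ (by norm_num))
  obtain ⟨p, hp, h0, hb⟩ := exists_small_solution A
    (by
      rw [hc]
      simp only [Fintype.card_prod, Fintype.card_fin]
      refine le_trans (le_of_eq ?_) hcard
      ring)
    (by simp only [Fintype.card_prod, Fintype.card_fin]; positivity) hR hA
  refine ⟨p, hp, ?_, ?_⟩
  · intro m k s hm hs
    have h1 (e : Fin 2) := h0 ⟨⟨m, by omega⟩, ⟨k, by omega⟩, ⟨s, hs⟩, e⟩
    have e1 := congrArg (Int.cast : ℤ → ℝ) (h1 0)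
    have e2 := congrArg (Int.cast : ℤ → ℝ) (h1 1)
    simp only [A, goldenCoord] at e1 e2
    push_cast at e1 e2
    have e3 : auxSum n x y p m k s = (∑ i : Idx L, (mu n x i : ℝ) ^ m * nu n y i ^ k
          * (2 ^ ((i.1 : ℕ) * s) * 3 ^ ((i.2.1 : ℕ) * s)) * Nat.fib (i.2.2 * s) * p i)
            * Real.goldenRatio
        + ∑ i : Idx L, (mu n x i : ℝ) ^ m * nu n y i ^ k
          * (2 ^ ((i.1 : ℕ) * s) * 3 ^ ((i.2.1 : ℕ) * s))
            * (Nat.fib (i.2.2 * s + 1) - Nat.fib (i.2.2 * s)) * p i := by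
      unfold auxSum
      rw [sum_mul, ← sum_add_distrib]
      refine sum_congr rfl fun i _ => ?_
      unfold base auxCoeff
      rw [mul_pow, mul_pow, ← pow_mul, ← pow_mul, ← pow_mul, goldenRatio_pow_eq_fib]
      push_cast
      ring
    rw [e3, e1, e2]
    simp
  · calc ∑ i, |(p i : ℝ)| ≤ ∑ i : Idx L, (L : ℝ) ^ 3 * (H ^ (2 * M) * 12 ^ (L * S)) := by
          refine sum_le_sum fun i _ => ?_
          have := hb i
          rw [hc] at this
          exact_mod_cast this
      _ = _ := by
        rw [sum_const, card_univ, hc, nsmul_eq_mul]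
        push_cast
        ring

theorem two_pow_mul_three_pow_mul_goldenRatio_inj {a b c a' b' c' : ℕ}
    (h : (2 : ℝ) ^ a * 3 ^ b * Real.goldenRatio ^ c = 2 ^ a' * 3 ^ b' * Real.goldenRatio ^ c') :
    c = c' := by
  wlog hcc : c ≤ c' generalizing a b c a' b' c'
  · exact (this h.symm (by omega)).symm
  obtain ⟨d, rfl⟩ := Nat.exists_eq_add_of_le hcc
  have hφ := Real.goldenRatio_pos
  have h1 : (2 : ℝ) ^ a * 3 ^ b = 2 ^ a' * 3 ^ b' * Real.goldenRatio ^ d := by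
    rw [pow_add] at h
    have : Real.goldenRatio ^ c ≠ 0 := by positivity
    apply mul_right_cancel₀ this
    linarith
  rw [goldenRatio_pow_eq_fib] at h1
  by_contra hd
  have hfd : 0 < Nat.fib d := Nat.fib_pos.mpr (by omega)
  refine Real.goldenRatio_irrational ⟨((2 ^ a * 3 ^ b - 2 ^ a' * 3 ^ b'
    * ((d + 1).fib - d.fib)) / (2 ^ a' * 3 ^ b' * d.fib) : ℚ), ?_⟩
  push_cast
  rw [h1]
  have : (Nat.fib d : ℝ) ≠ 0 := by positivity
  field_simp
  ring

theorem base_injective : Function.Injective (base : Idx L → ℝ) := by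
  rintro ⟨a, b, c⟩ ⟨a', b', c'⟩ h
  have hc := two_pow_mul_three_pow_mul_goldenRatio_inj h
  unfold base at h
  simp only at h hc
  rw [hc] at h
  have h1 : (2 : ℝ) ^ (a : ℕ) * 3 ^ (b : ℕ) = 2 ^ (a' : ℕ) * 3 ^ (b' : ℕ) :=
    mul_right_cancel₀ (pow_pos Real.goldenRatio_pos _).ne' h
  have h2 : 2 ^ (a : ℕ) * 3 ^ (b : ℕ) = 2 ^ (a' : ℕ) * 3 ^ (b' : ℕ) := by exact_mod_cast h1
  obtain ⟨ha, hb⟩ := two_pow_mul_three_pow_inj h2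
  ext <;> assumption

theorem Vanishes.eq_zero {p : Idx L → ℤ} {M : ℕ} (hM : 0 < M)
    (h : Vanishes n x y p M (L ^ 3)) : p = 0 := by
  have hc : Fintype.card (Idx L) = L ^ 3 := by
    simp only [Fintype.card_prod, Fintype.card_fin]
    ring
  let e : Fin (L ^ 3) ≃ Idx L := (Fintype.equivFinOfCardEq hc).symm
  have h0 := Matrix.eq_zero_of_forall_pow_sum_mul_pow_eq_zero (f := base ∘ e)
    (v := fun j => (p (e j) : ℝ)) (base_injective.comp e.injective) (fun s => by
      have := h 0 0 s (by simpa using hM) s.2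
      unfold auxSum auxCoeff at this
      rw [← this, ← e.sum_comp]
      simp)
  funext i
  have := congrFun h0 (e.symm i)
  simpa using this

theorem step_bound {X Y a e f g c d k u lam : ℝ} (hX : 10 ≤ X) (hY : 10 ≤ Y)
    (ha : a ≤ Real.exp (-X)) (he : e ≤ Real.exp (X / 20)) (he0 : 0 ≤ e)
    (heY : e ≤ Real.exp Y) (hf : f ≤ Real.exp (X / 20)) (hf0 : 0 ≤ f)
    (hg : g ≤ Real.exp (X / 20)) (hg0 : 0 ≤ g) (hgY : g ≤ Real.exp Y)
    (hc : c ≤ Real.exp Y) (hd : d ≤ Real.exp Y) (hd0 : 0 ≤ d)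
    (hk : k ≤ Real.exp Y) (hk0 : 0 ≤ k) (hu : u ≤ Real.exp Y) (hu0 : 0 ≤ u)
    (hlam : lam ≤ Real.exp (-(10 * Y))) (hlam0 : 0 ≤ lam) :
    (a * (e * f) + (c + 1) * (e * d * (k * (u * lam)))) * (e * g) < 1 := by
  have h8 : Real.exp (-8) ≤ 1 / 8 := by
    rw [Real.exp_neg, inv_eq_one_div]
    exact one_div_le_one_div_of_le (by norm_num) (by linarith [Real.add_one_le_exp (8 : ℝ)])
  have hc1 : c + 1 ≤ 2 * Real.exp Y := by
    linarith [Real.one_le_exp (show 0 ≤ Y by linarith)]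
  have e1 : a * (e * f) * (e * g) ≤ Real.exp (-8) := by
    calc a * (e * f) * (e * g) ≤ Real.exp (-X) * (Real.exp (X / 20) * Real.exp (X / 20))
          * (Real.exp (X / 20) * Real.exp (X / 20)) := by gcongr
      _ = Real.exp (-X + (X / 20 + X / 20) + (X / 20 + X / 20)) := by
        simp only [Real.exp_add]
      _ ≤ Real.exp (-8) := Real.exp_le_exp.mpr (by linarith)
  have e2 : (c + 1) * (e * d * (k * (u * lam))) * (e * g) ≤ 2 * Real.exp (-8) := by
    calc (c + 1) * (e * d * (k * (u * lam))) * (e * g)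
        ≤ 2 * Real.exp Y * (Real.exp Y * Real.exp Y * (Real.exp Y
          * (Real.exp Y * Real.exp (-(10 * Y))))) * (Real.exp Y * Real.exp Y) := by gcongr
      _ = 2 * Real.exp (Y + (Y + Y + (Y + (Y + -(10 * Y)))) + (Y + Y)) := by
        simp only [Real.exp_add]
        ring
      _ ≤ 2 * Real.exp (-8) := by
        gcongr
        linarith
  rw [add_mul]
  linarith

theorem log_le_div {q : ℝ} (hq : 10 ^ 6 ≤ q) : Real.log q ≤ q / 60000 := by
  have hq' : 1000000 ≤ q := by linarith
  have h1 : Real.log q = Real.log 1000000 + Real.log (q / 1000000) := by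
    rw [← Real.log_mul (by norm_num) (by positivity)]
    congr 1
    field_simp
  have h2 : Real.log (1000000 : ℝ) ≤ 14 := by
    have h : Real.log (1000000 : ℝ) ≤ Real.log (2 ^ 20) :=
      Real.log_le_log (by norm_num) (by norm_num)
    have h' : Real.log ((2 : ℝ) ^ 20) = 20 * Real.log 2 := by
      rw [Real.log_pow]
      norm_num
    linarith [Real.log_two_lt_d9]
  have h3 := Real.log_le_sub_one_of_pos (show 0 < q / 1000000 by positivity)
  linarith

theorem pow_le_exp_div {q : ℝ} (hq : 10 ^ 6 ≤ q) (m : ℕ) : q ^ m ≤ Real.exp (m * (q / 60000)) := by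
  have hq0 : 0 < q := by linarith
  rw [← Real.exp_log (pow_pos hq0 m), Real.exp_le_exp, Real.log_pow]
  gcongr
  exact log_le_div hq

theorem natCast_pow_le_exp {b c : ℝ} (hb0 : 0 ≤ b) (hb : b ≤ Real.exp c) (m : ℕ) :
    b ^ m ≤ Real.exp (m * c) := by
  rw [Real.exp_nat_mul]
  exact pow_le_pow_left₀ hb0 hb m

theorem exp_two_gt : (7 : ℝ) < Real.exp 2 := by
  have h : Real.exp 2 = Real.exp 1 ^ 2 := by rw [← Real.exp_nat_mul]; norm_num
  rw [h]
  nlinarith [Real.exp_one_gt_d9]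

theorem exp_three_gt : (12 : ℝ) < Real.exp 3 := by
  have h : Real.exp 3 = Real.exp 1 * Real.exp 2 := by rw [← Real.exp_add]; norm_num
  rw [h]
  nlinarith [Real.exp_one_gt_d9, exp_two_gt]

/-- A lower bound for linear forms in `log 2`, `log 3` and `log φ`. -/
theorem lt_abs_linForm {q : ℕ} (hq : 10 ^ 6 ≤ q) (hqn : q ^ 36 ≤ n) (hnq : n ≤ q ^ 37)
    (hx : x ≤ n) (hy : y ≤ n) : Real.exp (-(n / 4)) < |linForm n x y| := by
  by_contra! hlam
  set lam := Real.exp (-((n : ℝ) / 4)) with hlamdef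
  have hqR : (10 : ℝ) ^ 6 ≤ q := by exact_mod_cast hq
  have hq0 : 0 < q := by omega
  have hq1 : (1 : ℝ) ≤ q := by linarith
  have hqpos : (0 : ℝ) < q := by linarith
  have hn : 0 < n := lt_of_lt_of_le (by positivity) hqn
  have hpp {i j : ℕ} (h : i ≤ j) : (q : ℝ) ^ i ≤ (q : ℝ) ^ j := pow_le_pow_right₀ hq1 h
  have hps (i j : ℕ) (h : j = i + 1) : (10 : ℝ) ^ 6 * (q : ℝ) ^ i ≤ (q : ℝ) ^ j := by
    rw [h, pow_succ' (q : ℝ) i]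
    gcongr
  have hone (i : ℕ) : (1 : ℝ) ≤ (q : ℝ) ^ i := one_le_pow₀ hq1
  set H : ℝ := (q : ℝ) ^ 44 with hH
  have hH1 : 1 ≤ H := hone 44
  have hbd {z : ℕ} (hz : z ≤ n) (a c : Fin (q ^ 6)) : ((n * a + z * c : ℕ) : ℝ) ≤ H := by
    have h1 : n * a + z * c ≤ 2 * (n * q ^ 6) := by
      have h2 : n * a ≤ n * q ^ 6 := Nat.mul_le_mul le_rfl a.2.le
      have h3 : z * c ≤ n * q ^ 6 := Nat.mul_le_mul hz c.2.le
      omega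
    have h4 : 2 * (n * q ^ 6) ≤ q ^ 44 := by
      calc 2 * (n * q ^ 6) ≤ q * (q ^ 37 * q ^ 6) := by gcongr; omega
        _ = q ^ 44 := by ring
    rw [hH]
    exact_mod_cast h1.trans h4
  have hmu (i : Idx (q ^ 6)) : (mu n x i : ℝ) ≤ H := hbd hx i.1 i.2.2
  have hnu (i : Idx (q ^ 6)) : (nu n y i : ℝ) ≤ H := hbd hy i.2.1 i.2.2
  obtain ⟨p, hp, hV, hP⟩ := exists_vanishes (n := n) (x := x) (y := y) (L := q ^ 6)
    (M := 18 * q ^ 8) (S := q) (by positivity) hq0 (by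
      calc 4 * (18 * q ^ 8 * (18 * q ^ 8) * q) = 1296 * q ^ 17 := by ring
        _ ≤ q * q ^ 17 := by gcongr; omega
        _ = (q ^ 6) ^ 3 := by ring) hH1 hmu hnu
  set P : ℝ := ((q ^ 6 : ℕ) : ℝ) ^ 6 * (H ^ (2 * (18 * q ^ 8)) * 12 ^ (q ^ 6 * q)) with hPdef
  have hP0 : 0 ≤ P := by positivity
  have hHpow (m : ℕ) (hm : m ≤ 36 * q ^ 8) : H ^ m ≤ Real.exp ((q : ℝ) ^ 9 * (1584 / 60000)) := by
    calc H ^ m ≤ H ^ (36 * q ^ 8) := pow_le_pow_right₀ hH1 hm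
      _ = (q : ℝ) ^ (1584 * q ^ 8) := by rw [hH, ← pow_mul]; ring_nf
      _ ≤ _ := pow_le_exp_div hqR _
      _ = _ := by push_cast; ring_nf
  have h18 := hps 8 9 rfl
  have h17 := hps 7 8 rfl
  have hPexp : P ≤ Real.exp ((q : ℝ) ^ 9 * (1600 / 60000)) := by
    have e1 : ((q ^ 6 : ℕ) : ℝ) ^ 6 ≤ Real.exp (36 * (q / 60000)) := by
      rw [Nat.cast_pow, ← pow_mul]
      exact pow_le_exp_div hqR 36
    have e2 : (12 : ℝ) ^ (q ^ 6 * q) ≤ Real.exp (3 * (q : ℝ) ^ 7) := by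
      refine (natCast_pow_le_exp (by norm_num) exp_three_gt.le _).trans (Real.exp_le_exp.mpr ?_)
      push_cast
      exact le_of_eq (by ring)
    calc P ≤ Real.exp (36 * (q / 60000)) * (Real.exp ((q : ℝ) ^ 9 * (1584 / 60000))
          * Real.exp (3 * (q : ℝ) ^ 7)) := by
          rw [hPdef]
          gcongr
          exact hHpow _ (by ring_nf; omega)
      _ = Real.exp (36 * (q / 60000) + ((q : ℝ) ^ 9 * (1584 / 60000) + 3 * (q : ℝ) ^ 7)) := by
        simp only [Real.exp_add]
      _ ≤ _ := by
        rw [Real.exp_le_exp]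
        have h1 : (q : ℝ) ≤ (q : ℝ) ^ 7 := by simpa using hpp (show 1 ≤ 7 by norm_num)
        have h2 := hone 7
        linarith
  have hlamY : lam ≤ Real.exp (-(10 * (q : ℝ) ^ 34)) := by
    rw [hlamdef, Real.exp_le_exp]
    have h1 : (q : ℝ) ^ 36 ≤ n := by exact_mod_cast hqn
    have h2 := hps 34 35 rfl
    have h3 := hps 35 36 rfl
    have h4 := hone 34
    linarith
  have hlam0 : 0 ≤ lam := (Real.exp_pos _).le
  have main : ∀ j ≤ 17, Vanishes n x y p ((18 - j) * q ^ 8) (q ^ (j + 1)) := by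
    intro j
    induction j with
    | zero => intro _; simpa using hV
    | succ j ih =>
      intro hj
      have ihj := ih (by omega)
      have hM : (18 - j) * q ^ 8 = (18 - (j + 1)) * q ^ 8 + q ^ 8 := by
        rw [show 18 - j = 18 - (j + 1) + 1 by omega]
        ring
      rw [hM] at ihj
      have hX9 := hpp (show 9 ≤ j + 9 by omega)
      have hX25 := hpp (show j + 9 ≤ 25 by omega)
      have hLS := hps (j + 8) (j + 9) rfl
      have hLS' : ((q ^ 6 : ℕ) : ℝ) * ((q ^ (j + 1 + 1) : ℕ) : ℝ) = (q : ℝ) ^ (j + 8) := by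
        push_cast
        rw [← pow_add]
        congr 1
        omega
      have hone8 := hone (j + 8)
      have h25 : (10 : ℝ) ^ 6 * (q : ℝ) ^ 25 ≤ (q : ℝ) ^ 34 :=
        (hps 25 26 rfl).trans (hpp (by norm_num))
      have hEX : P * H ^ ((18 - (j + 1)) * q ^ 8) ≤ Real.exp ((q : ℝ) ^ (j + 9) / 20) := by
        have h1 := hHpow ((18 - (j + 1)) * q ^ 8) (Nat.mul_le_mul (by omega) le_rfl)
        have h2 : H ^ ((18 - (j + 1)) * q ^ 8) ≤ Real.exp ((q : ℝ) ^ 9 * (800 / 60000)) := by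
          calc H ^ ((18 - (j + 1)) * q ^ 8) ≤ H ^ (18 * q ^ 8) :=
                pow_le_pow_right₀ hH1 (Nat.mul_le_mul (by omega) le_rfl)
            _ = (q : ℝ) ^ (792 * q ^ 8) := by rw [hH, ← pow_mul]; ring_nf
            _ ≤ _ := pow_le_exp_div hqR _
            _ ≤ _ := by
              rw [Real.exp_le_exp]
              push_cast
              have : 0 ≤ (q : ℝ) ^ 9 := by positivity
              calc 792 * (q : ℝ) ^ 8 * (q / 60000) = (q : ℝ) ^ 9 * (792 / 60000) := by ring
                _ ≤ _ := by gcongr; norm_num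
        calc _ ≤ Real.exp ((q : ℝ) ^ 9 * (1600 / 60000)) * Real.exp ((q : ℝ) ^ 9 * (800 / 60000)) := by
              gcongr
          _ = Real.exp ((q : ℝ) ^ 9 * (1600 / 60000) + (q : ℝ) ^ 9 * (800 / 60000)) := by
              rw [Real.exp_add]
          _ ≤ _ := by
              rw [Real.exp_le_exp]
              have : 0 ≤ (q : ℝ) ^ 9 := by positivity
              linarith
      have hX0 := hone (j + 9)
      have hYX : (q : ℝ) ^ (j + 9) / 20 ≤ (q : ℝ) ^ 34 := by linarith
      have h6 : (6 : ℝ) ^ (q ^ 6 * q ^ (j + 1 + 1)) ≤ Real.exp ((q : ℝ) ^ (j + 9) / 20) := by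
        refine (natCast_pow_le_exp (by norm_num) (by linarith [exp_two_gt]) _).trans
          (Real.exp_le_exp.mpr (?_ : _ * (2 : ℝ) ≤ _))
        rw [Nat.cast_mul, hLS']
        linarith
      have h19 : 0 ≤ (q : ℝ) ^ 9 := by positivity
      refine ihj.extrapolate hn (by positivity) (Nat.pow_le_pow_right hq0 (by omega))
        (by positivity) hlam ?_ hP hH1 hmu hnu ?_
      · rw [hLS']
        calc (q : ℝ) ^ (j + 8) * lam
            ≤ Real.exp (10 * (q : ℝ) ^ 34) * Real.exp (-(10 * (q : ℝ) ^ 34)) := by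
              gcongr
              have := Real.add_one_le_exp (10 * (q : ℝ) ^ 34)
              linarith
          _ = 1 := by rw [← Real.exp_add]; simp
      · refine step_bound (X := (q : ℝ) ^ (j + 9)) (Y := (q : ℝ) ^ 34) ?_ ?_ ?_
          hEX (by positivity) (hEX.trans (Real.exp_le_exp.mpr hYX)) (Real.exp_le_exp.mpr ?_)
          (Real.exp_pos _).le h6 (by positivity) (h6.trans (Real.exp_le_exp.mpr hYX)) ?_ ?_
          (by positivity) (Real.exp_le_exp.mpr ?_) (Real.exp_pos _).le ?_ (by positivity) hlamY hlam0
        · linarith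
        · linarith
        · have e : q ^ (j + 1) * q ^ 8 = q ^ (j + 9) := by rw [← pow_add]
          rw [e, one_div, inv_pow, Real.exp_neg]
          refine inv_anti₀ (Real.exp_pos _) ?_
          have h3 := natCast_pow_le_exp (b := Real.exp 1) (c := 1) (Real.exp_pos _).le le_rfl
            (q ^ (j + 9))
          calc Real.exp ((q : ℝ) ^ (j + 9)) = Real.exp 1 ^ (q ^ (j + 9)) := by
                rw [← Real.exp_nat_mul]
                simp
            _ ≤ 3 ^ (q ^ (j + 9)) := by
                gcongr
                linarith [Real.exp_one_lt_d9]
        · rw [mul_assoc, hLS']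
          linarith
        · have hC : (2 + 2 * ((q ^ (j + 1 + 1) : ℕ) : ℝ) * (2 * ((q ^ 8).factorial : ℝ)))
              ≤ Real.exp ((q : ℝ) ^ 9) := by
            have f1 : ((q ^ 8).factorial : ℝ) ≤ (q : ℝ) ^ (8 * q ^ 8) := by
              rw [pow_mul]
              exact_mod_cast Nat.factorial_le_pow (q ^ 8)
            have f2 : ((q ^ (j + 1 + 1) : ℕ) : ℝ) ≤ (q : ℝ) ^ 18 := by
              push_cast
              exact hpp (by omega)
            calc _ ≤ 2 * ((q : ℝ) ^ 18 * (q : ℝ) ^ (8 * q ^ 8))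
                  + 2 * (q : ℝ) ^ 18 * (2 * (q : ℝ) ^ (8 * q ^ 8)) := by
                  gcongr
                  linarith [one_le_mul_of_one_le_of_one_le (hone 18) (hone (8 * q ^ 8))]
              _ = 6 * ((q : ℝ) ^ 18 * (q : ℝ) ^ (8 * q ^ 8)) := by ring
              _ ≤ q * ((q : ℝ) ^ 18 * (q : ℝ) ^ (8 * q ^ 8)) := by
                  gcongr
                  linarith
              _ = (q : ℝ) ^ (19 + 8 * q ^ 8) := by ring
              _ ≤ _ := pow_le_exp_div hqR _
              _ ≤ _ := by
                  rw [Real.exp_le_exp]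
                  push_cast
                  have e : (19 + 8 * (q : ℝ) ^ 8) * (q / 60000)
                    = (19 * q + 8 * (q : ℝ) ^ 9) / 60000 := by ring
                  have : (q : ℝ) ≤ (q : ℝ) ^ 9 := by simpa using hpp (show 1 ≤ 9 by norm_num)
                  rw [e]
                  linarith
          refine (natCast_pow_le_exp (by positivity) hC _).trans (Real.exp_le_exp.mpr ?_)
          push_cast
          rw [← pow_add, ← pow_add]
          exact hpp (by omega)
        · have f : (4 * ((q ^ 6 : ℕ) : ℝ)) ≤ (q : ℝ) ^ 7 := by
            have := hps 6 7 rfl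
            push_cast
            have h0 := hone 6
            linarith
          calc _ ≤ ((q : ℝ) ^ 7) ^ (q ^ 8) := by gcongr
            _ = (q : ℝ) ^ (7 * q ^ 8) := by rw [pow_mul]
            _ ≤ _ := pow_le_exp_div hqR _
            _ ≤ _ := by
                rw [Real.exp_le_exp]
                push_cast
                have e : 7 * (q : ℝ) ^ 8 * (q / 60000) = (q : ℝ) ^ 9 * (7 / 60000) := by ring
                rw [e]
                linarith
        · rw [mul_assoc, hLS']
          linarith
        · rw [mul_assoc, hLS']
          have := Real.add_one_le_exp ((q : ℝ) ^ 34)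
          linarith
  have hfin := main 17 le_rfl
  refine hp (Vanishes.eq_zero (n := n) (x := x) (y := y) (M := (18 - 17) * q ^ 8)
    (by positivity) ?_)
  rwa [← pow_mul]

/-- The fixed-point partial sum of `∑ 1 / ((2 k + 1) m ^ k)` to `t` terms starting at `k = j`, where
`u` plays the role of the scaling factor divided by `m ^ j`. -/
def oddSum (m : ℕ) : ℕ → ℕ → ℕ → ℕ
  | 0, _, _ => 0
  | t + 1, u, d => u / d + oddSum m t (u / m) (d + 2)

theorem oddSum_eq (m D t : ℕ) : ∀ j, oddSum m t (D / m ^ j) (2 * j + 1)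
    = ∑ k ∈ range t, D / m ^ (j + k) / (2 * (j + k) + 1) := by
  induction t with
  | zero => intro j; simp [oddSum]
  | succ t ih =>
    intro j
    rw [oddSum, sum_range_succ', Nat.div_div_eq_div_mul D (m ^ j) m, ← pow_succ, add_comm]
    congr 1
    rw [show 2 * j + 1 + 2 = 2 * (j + 1) + 1 by ring, ih (j + 1)]
    refine sum_congr rfl fun k _ => ?_
    rw [show j + 1 + k = j + (k + 1) by ring]

theorem natCast_div_bounds (a b : ℕ) :
    ((a / b : ℕ) : ℝ) ≤ a / b ∧ (a : ℝ) / b ≤ ((a / b : ℕ) : ℝ) + 1 := by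
  refine ⟨Nat.cast_div_le, ?_⟩
  rcases Nat.eq_zero_or_pos b with rfl | hb
  · simp
  · have hb' : (0 : ℝ) < b := by exact_mod_cast hb
    rw [div_le_iff₀ hb']
    have h1 := Nat.lt_mul_div_succ a hb
    have h2 : a ≤ (a / b + 1) * b := by rw [mul_comm]; exact h1.le
    exact_mod_cast h2

theorem oddSum_bounds {m D t : ℕ} (hm : 2 ≤ m) (hD : D ≤ m ^ t) {T : ℝ}
    (hT : HasSum (fun k : ℕ => 1 / ((2 * k + 1 : ℝ) * m ^ k)) T) :
    (oddSum m t D 1 : ℝ) ≤ D * T ∧ D * T ≤ oddSum m t D 1 + (t + 2) := by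
  have hm2 : (2 : ℝ) ≤ m := by exact_mod_cast hm
  have hm0 : (0 : ℝ) < m := by linarith
  have e := oddSum_eq m D t 0
  simp only [pow_zero, Nat.div_one, mul_zero, zero_add] at e
  rw [e]
  have hterm (k : ℕ) : ((D / m ^ k / (2 * k + 1) : ℕ) : ℝ) ≤ D * (1 / ((2 * k + 1 : ℝ) * m ^ k)) ∧
      D * (1 / ((2 * k + 1 : ℝ) * m ^ k)) ≤ ((D / m ^ k / (2 * k + 1) : ℕ) : ℝ) + 1 := by
    rw [Nat.div_div_eq_div_mul]
    have h := natCast_div_bounds D (m ^ k * (2 * k + 1))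
    have e : (D : ℝ) * (1 / ((2 * k + 1 : ℝ) * m ^ k))
        = D / ((m ^ k * (2 * k + 1) : ℕ) : ℝ) := by
      push_cast
      field_simp
    rw [e]
    exact h
  have hsplit := hT.summable.sum_add_tsum_nat_add t
  rw [hT.tsum_eq] at hsplit
  have hnn (k : ℕ) : (0 : ℝ) ≤ 1 / ((2 * k + 1 : ℝ) * m ^ k) := by positivity
  have htail0 : 0 ≤ ∑' k : ℕ, 1 / ((2 * (k + t : ℕ) + 1 : ℝ) * m ^ (k + t)) :=
    tsum_nonneg fun k => hnn (k + t)
  have hgeo : HasSum (fun k : ℕ => (1 / (m : ℝ) ^ t) * (1 / 2) ^ k) ((1 / (m : ℝ) ^ t) * 2) :=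
    hasSum_geometric_two.mul_left _
  have htail : ∑' k : ℕ, 1 / ((2 * (k + t : ℕ) + 1 : ℝ) * m ^ (k + t)) ≤ (1 / (m : ℝ) ^ t) * 2 := by
    rw [← hgeo.tsum_eq]
    refine Summable.tsum_le_tsum (fun k => ?_) ((summable_nat_add_iff t).mpr hT.summable)
      hgeo.summable
    rw [one_div_pow, one_div_mul_one_div]
    refine one_div_le_one_div_of_le (by positivity) ?_
    have h1 : (2 : ℝ) ^ k ≤ m ^ k := pow_le_pow_left₀ (by norm_num) hm2 k
    calc (m : ℝ) ^ t * 2 ^ k ≤ m ^ t * m ^ k := by gcongr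
      _ = 1 * m ^ (k + t) := by rw [one_mul, pow_add, mul_comm]
      _ ≤ _ := by
        gcongr
        have : (0 : ℝ) ≤ ((k + t : ℕ) : ℝ) := by positivity
        linarith
  have hDt : (D : ℝ) * ((1 / (m : ℝ) ^ t) * 2) ≤ 2 := by
    have : (D : ℝ) ≤ m ^ t := by exact_mod_cast hD
    have h2 : (D : ℝ) / m ^ t ≤ 1 := div_le_one_of_le₀ this (by positivity)
    calc (D : ℝ) * ((1 / (m : ℝ) ^ t) * 2) = (D : ℝ) / m ^ t * 2 := by ring
      _ ≤ 2 := by linarith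
  have hDtail := (mul_le_mul_of_nonneg_left htail (Nat.cast_nonneg D : (0 : ℝ) ≤ D)).trans hDt
  have hD0 := mul_nonneg (Nat.cast_nonneg D : (0 : ℝ) ≤ D) htail0
  rw [← hsplit, mul_add, mul_sum]
  push_cast
  have hlow := sum_le_sum fun k (_ : k ∈ range t) => (hterm k).1
  have hup := sum_le_sum fun k (_ : k ∈ range t) => (hterm k).2
  rw [sum_add_distrib, sum_const, card_range, nsmul_eq_mul, mul_one] at hup
  push_cast at hDtail hD0
  constructor <;> linarith

theorem hasSum_oddSum {m : ℕ} (hm : 1 < m) {x : ℝ} (hx : 0 < x) (hxm : x ^ 2 * m = 1) :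
    HasSum (fun k : ℕ => 1 / ((2 * k + 1 : ℝ) * m ^ k))
      ((Real.log (1 + x) - Real.log (1 - x)) / (2 * x)) := by
  have hm' : (1 : ℝ) < m := by exact_mod_cast hm
  have hx1 : |x| < 1 := by
    rw [abs_of_pos hx]
    by_contra! h
    have : 1 ≤ x ^ 2 := one_le_pow₀ h
    nlinarith
  have h := (Real.hasSum_log_sub_log_of_abs_lt_one hx1).div_const (2 * x)
  refine h.congr_fun ?_
  intro k
  have : (m : ℝ) ^ k ≠ 0 := by positivity
  have e : x ^ (2 * k + 1) * (m : ℝ) ^ k = x := by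
    rw [pow_succ, pow_mul, mul_right_comm, ← mul_pow, hxm]
    simp
  field_simp
  linarith

theorem hasSum_log_two :
    HasSum (fun k : ℕ => 1 / ((2 * k + 1 : ℝ) * (9 : ℕ) ^ k)) (3 / 2 * Real.log 2) := by
  have h := hasSum_oddSum (m := 9) (by norm_num) (x := 1 / 3) (by norm_num) (by norm_num)
  convert h using 1
  rw [← Real.log_div (by norm_num) (by norm_num)]
  norm_num
  ring

theorem hasSum_log_three :
    HasSum (fun k : ℕ => 1 / ((2 * k + 1 : ℝ) * (25 : ℕ) ^ k))
      (5 / 2 * (Real.log 3 - Real.log 2)) := by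
  have h := hasSum_oddSum (m := 25) (by norm_num) (x := 1 / 5) (by norm_num) (by norm_num)
  convert h using 1
  rw [← Real.log_div (by norm_num) (by norm_num), ← Real.log_div (by norm_num) (by norm_num)]
  norm_num
  ring

theorem hasSum_log_goldenRatio :
    HasSum (fun k : ℕ => 1 / ((2 * k + 1 : ℝ) * (5 : ℕ) ^ k))
      (√5 * Real.log Real.goldenRatio) := by
  have h5 : (0 : ℝ) < √5 := by positivity
  have hs : (√5 : ℝ) ^ 2 = 5 := Real.sq_sqrt (by norm_num)
  have h := hasSum_oddSum (m := 5) (by norm_num) (x := 1 / √5) (by positivity) (by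
    rw [div_pow, hs]; norm_num)
  convert h using 1
  have h1 : (1 : ℝ) - 1 / √5 ≠ 0 := by
    have : 1 / √5 < 1 := by
      rw [div_lt_one h5]
      nlinarith
    linarith
  have h2 : (1 + 1 / √5) / (1 - 1 / √5) = Real.goldenRatio ^ 2 := by
    rw [div_eq_iff h1]
    unfold Real.goldenRatio
    field_simp
    nlinarith
  rw [← Real.log_div (by positivity) h1, h2, Real.log_pow]
  push_cast
  field_simp

/-- The scaling factor of the fixed-point computations. -/
def fixScale : ℕ := 2 ^ 2240

/-- A fixed-point approximation of `log φ` with scaling factor `15 * fixScale`. -/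
def fixLogPhi : ℕ := 1464258781621378674665767579631065334157466617744737894894741407179764959567922238695548937029544616140423203829451133270741383638392532380624081437740114800223671348434909273032599541331958319167396490580577131603493717291400777957461513832244209183004372719223259193234034927068853715202299195303348983475548671024719653717663279123234748706386163415788839558137834707916723598793535226333802083354717557912185973768739456104091611739376924839635358931998329782418817139871749520734199803131697879618165333930595874548062927307088993963598808052461243940656848450353947593360764679029181167800625256544291625651453549291782352539860763264235297627617653041844500051835749500

/-- A fixed-point approximation of `log 2` with scaling factor `15 * fixScale`. -/
def fixLogTwo : ℕ := 2109147766610446063802391491519210451242286653374772947782197530963957697969818603123112852581612050568218014165369870982876501522252674027399425526027617909989655237049211413467648507029551305558752266718252530012946659579189309970720495375853361765659239725320697567506661896700354450511713185567045006964574847477450278840675443051565318398646055906045194176959550219199478126860618781803747027506075229825435333742221590060129815216919460501522669157786276284836941248181033620542347497529156015014841382889213060476371578117863961646077994452726257852752752630955848763155909822803402279005504920808334566520837311313123836970500243032682355722890125076487935550251261210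

/-- A fixed-point approximation of `log 3` with scaling factor `15 * fixScale`. -/
def fixLogThree : ℕ := 3342920118557334068889869002706951143873470978775370994839923369851390657086657129581125787868005672803861865651518894672383409494443868741347633922885730651935909060983835804923913013775066701558551288901874687567185952042589248795814310004871426518384889299378646110145189755485389480495378502909267447058195230074917739564351670473124496827136462187759303545844678468202030413140174724175999238298002195305330777924948051794265312965965263506993405997637920811644816269609986539523863669252423866126360882983970893830167465902677801076619641026374290627437357605354607409838560222133795465484242330991463883969578941035398039597314844534294324218526035527646172040727624600

theorem abs_log_two_sub_le : |15 * fixScale * Real.log 2 - fixLogTwo| ≤ 20000 := by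
  have e : 10 * oddSum 9 1000 fixScale 1 = fixLogTwo := by decide +kernel
  have h := oddSum_bounds (m := 9) (D := fixScale) (t := 1000) (by norm_num)
    (by decide +kernel)
    hasSum_log_two
  rw [← e, abs_le]
  push_cast at h ⊢
  constructor <;> linarith [h.1, h.2]

theorem abs_log_three_sub_le : |15 * fixScale * Real.log 3 - fixLogThree| ≤ 20000 := by
  have e : 10 * oddSum 9 1000 fixScale 1 + 6 * oddSum 25 1000 fixScale 1 = fixLogThree := by
    decide +kernel
  have h := oddSum_bounds (m := 9) (D := fixScale) (t := 1000) (by norm_num)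
    (by decide +kernel)
    hasSum_log_two
  have h' := oddSum_bounds (m := 25) (D := fixScale) (t := 1000) (by norm_num)
    (by decide +kernel)
    hasSum_log_three
  rw [← e, abs_le]
  push_cast at h h' ⊢
  constructor <;> linarith [h.1, h.2, h'.1, h'.2]

theorem sqrt_five_mul_bounds {a s : ℕ} (h₁ : a ^ 2 ≤ 45 * s ^ 2) (h₂ : 45 * s ^ 2 ≤ (a + 3) ^ 2) :
    (a : ℝ) ≤ 3 * √5 * s ∧ 3 * √5 * s ≤ a + 3 := by
  have e : (3 * √5 * s : ℝ) ^ 2 = 45 * s ^ 2 := by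
    rw [mul_pow, mul_pow, Real.sq_sqrt (by norm_num)]
    norm_num
  constructor
  · refine (pow_le_pow_iff_left₀ (by positivity) (by positivity) two_ne_zero).mp ?_
    rw [e]
    exact_mod_cast h₁
  · refine (pow_le_pow_iff_left₀ (by positivity) (by positivity) two_ne_zero).mp ?_
    rw [e]
    exact_mod_cast h₂

theorem abs_log_goldenRatio_sub_le :
    |15 * fixScale * Real.log Real.goldenRatio - fixLogPhi| ≤ 20000 := by
  have e := sqrt_five_mul_bounds (a := fixLogPhi) (s := oddSum 5 1000 fixScale 1)
    (by decide +kernel) (by decide +kernel)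
  have h := oddSum_bounds (m := 5) (D := fixScale) (t := 1000) (by norm_num) (by decide +kernel)
    hasSum_log_goldenRatio
  have hs : (√5 : ℝ) ^ 2 = 5 := Real.sq_sqrt (by norm_num)
  have hs0 : (0 : ℝ) ≤ √5 := Real.sqrt_nonneg 5
  have hs3 : √5 ≤ 3 := by nlinarith
  have g1 := mul_le_mul_of_nonneg_left h.1 (show 0 ≤ 3 * √5 by positivity)
  have g2 := mul_le_mul_of_nonneg_left h.2 (show 0 ≤ 3 * √5 by positivity)
  have g3 : 3 * √5 * (fixScale * (√5 * Real.log Real.goldenRatio))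
      = 15 * fixScale * Real.log Real.goldenRatio := by
    linear_combination 3 * fixScale * Real.log Real.goldenRatio * hs
  rw [g3] at g1 g2
  push_cast at g1 g2
  rw [abs_le]
  constructor <;> linarith [e.1, e.2]

/-- Integer vectors nearly proportional to `(log φ, log 2, log 3)`, for large exponents. -/
def coarseVec : Fin 3 → ℤ × ℤ × ℤ := ![
  (4710785294887953867753962764647020753168405780524143032189474528356528841454283699152859454529845346058507869300523158868092638494851880077818797588195779517198739358365731843099551352534407837513201469120904451520291216668221334986528923659121158529260924548573380434335098441918594374479105878263178770317019126234704308010871032008906807294828035304567327788120032964799972755449877556530718454546524845101638277492457976011216504624358170300, 6785509780376648044772643436666257751431422585245129507900474375873879563828617999719165936393026689439188625485141710165342052574573606834854579094894835861846655519559784178354059591876936826898263706511919821926059751196397815011143313249293720138638686716067264658404930770608234319274851817745950117713226827599107385459082404474802429038609231718089859909601536975585821770382286879468978286771025356834560117353141709081990762373731514777, 1075477855017363534909638316043218072132440540832920544384315022170937874142037115090363943458131092363688987465014244520330894298382783819424702693780724068082411817130608351046662777923513728955686910000453655708033836765727261991416267632123036567848028313888695934303318291544035154387434518393792815497467644601488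7533105544257043515408839984131354470900683067392335260985691616604920318885928158858489775274405609969481081895137434027508038),
  (9523412229564175073928890481460098207681927740653755811355957155802234945293746568302623615558198802782243731178412883605327979585193918230544888313149988576681116527071490786831728463070063613742863683689973630747947236997204698360997456117188273044706230459112419774212886164029256969887765243444383379665197494151348054771320229336577306015869212969576201276574437089045804340420580629697134093295915433259513380055660554174712562047225037981, 13717714304744875138426095019766818460024090853397505130919579462931484442541740709406608911831614795270503600987622421861094527579993254288634070896217157288297494843614454496233355507673147516330341942979939577937474804353417616149246606314185797061269719247695765942641310643527755299348990106829108064620529267161728656362809447040205685678766777545830430852097639221067416462577395342599574758328162623293365562009630392075000394062301848850, 21742062768626813627870815163929170649108378802219318004505140399883535174210042773568018158021049466767529543389964991867031228257019635138072447956332725612792558173513904604997349540658225092266422241082790589943840922398384810239853063295131631457435004934668111151416845063222181354083246551329806961548770353029504314493639236654805034394926370586511367801626626882245106035828739719337396363044974693930994495159551452215935456038883887416),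
  (10549183875976029776885076155752588117473509535133402034287286893556515297009989510620617456571490704333902464132347961386362053195813745655455117710943301220366525484484645177554638220599587809814092221741450245741515727939795795806099729856944990617019368836357615234962415954548120258218007130824265620820259190598503170456919118178437985719645175035478247200546323509517169994435292731014772952024295653438379185792628135811272825153491456338, 15195256392412075805444878845528352357187499916320765505545617067393907506707167633592316005612612781272776377365902983592653477576426494453641627205023719414726724965553030594764039595528054577194855305396246973310180411261961888803564521292606901478661860398143206902486011614219057583132738783774056309168142171125273650110481960074856600651846533371009099011858101044248317038483728164679994543515468558545591828385782627820003290923545526604, 24083911570816577774949838341852222367142407443870351905376333564213313550866424054855190920415343989380166070540015640511816386757811484913955244734257081535843261392517253286864512748645788698194536329003082782868841425353926339285073064674156648698708713732776394831179158312521148137357334267257645607790521150287206139407255426336223779225247573996122757358551259541574490873234029952334148163790080826568750544169481185039084738780679741771)]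

/-- Integer vectors nearly proportional to `(log φ, log 2, log 3)`, for moderate exponents. -/
def fineVec : Fin 3 → ℤ × ℤ × ℤ := ![
  (14066486888, 20261650315, 32113955952),
  (-11566934295, -16661244543, -26407447816),
  (-15823036759, -22791820039, -36124180085)]

/-- A linear form which is small enough forces an exact linear relation. -/
theorem relation_of_small {l₀ l₁ l₂ : ℝ} {D a₀ a₁ a₂ A B C e m G X : ℤ} {n x y : ℕ} (hD : 0 ≤ D)
    (h₀ : |D * l₀ - a₀| ≤ e) (h₁ : |D * l₁ - a₁| ≤ e) (h₂ : |D * l₂ - a₂| ≤ e)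
    (hn : n ≤ X) (hx : x ≤ X) (hy : y ≤ X) (hG : 0 < G)
    (hΛ : |x * l₁ + y * l₂ - n * l₀| * G ≤ 1)
    (hm₀ : |A * a₁ - B * a₀| ≤ m) (hm₂ : |C * a₁ - B * a₂| ≤ m)
    (hlt : D * |B| + 3 * X * (|B| * e + m) * G < G * a₁) : x * B + y * C - n * A = 0 := by
  set Λ := x * l₁ + y * l₂ - n * l₀ with hΛdef
  have hGR : (0 : ℝ) < G := by exact_mod_cast hG
  have hDR : (0 : ℝ) ≤ D := by exact_mod_cast hD
  have hnX : (n : ℝ) ≤ X := by exact_mod_cast hn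
  have hxX : (x : ℝ) ≤ X := by exact_mod_cast hx
  have hyX : (y : ℝ) ≤ X := by exact_mod_cast hy
  have hX0 : (0 : ℝ) ≤ X := le_trans (by positivity) hnX
  have hm₀' : |(A * a₁ - B * a₀ : ℝ)| ≤ m := by exact_mod_cast hm₀
  have hm₂' : |(C * a₁ - B * a₂ : ℝ)| ≤ m := by exact_mod_cast hm₂
  have hlt' : (D * |(B : ℝ)| + 3 * X * (|(B : ℝ)| * e + m) * G : ℝ) < G * a₁ := by exact_mod_cast hlt
  have hB : (0 : ℝ) ≤ |(B : ℝ)| := abs_nonneg _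
  have hm0 : (0 : ℝ) ≤ m := (abs_nonneg _).trans hm₀'
  have t₀ : |(A * a₁ - B * a₀) - B * (D * l₀ - a₀)| ≤ |(B : ℝ)| * e + m := by
    refine (abs_sub _ _).trans ?_
    rw [abs_mul, add_comm]
    gcongr
  have t₁ : |B * (D * l₁ - a₁)| ≤ |(B : ℝ)| * e + m := by
    rw [abs_mul]
    have := mul_le_mul_of_nonneg_left h₁ hB
    linarith
  have t₂ : |(C * a₁ - B * a₂) - B * (D * l₂ - a₂)| ≤ |(B : ℝ)| * e + m := by
    refine (abs_sub _ _).trans ?_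
    rw [abs_mul, add_comm]
    gcongr
  have key : (a₁ : ℝ) * ((x * B + y * C - n * A : ℤ) : ℝ) = D * B * Λ - x * (B * (D * l₁ - a₁))
      + y * ((C * a₁ - B * a₂) - B * (D * l₂ - a₂))
      - n * ((A * a₁ - B * a₀) - B * (D * l₀ - a₀)) := by
    rw [hΛdef]
    push_cast
    ring
  have hbd : |(a₁ : ℝ) * ((x * B + y * C - n * A : ℤ) : ℝ)|
      ≤ D * |(B : ℝ)| * |Λ| + 3 * X * (|(B : ℝ)| * e + m) := by
    rw [key]
    have s₁ : |(x : ℝ) * (B * (D * l₁ - a₁))| ≤ X * (|(B : ℝ)| * e + m) := by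
      rw [abs_mul, Nat.abs_cast]
      gcongr
    have s₂ : |(y : ℝ) * ((C * a₁ - B * a₂) - B * (D * l₂ - a₂))| ≤ X * (|(B : ℝ)| * e + m) := by
      rw [abs_mul, Nat.abs_cast]
      gcongr
    have s₀ : |(n : ℝ) * ((A * a₁ - B * a₀) - B * (D * l₀ - a₀))| ≤ X * (|(B : ℝ)| * e + m) := by
      rw [abs_mul, Nat.abs_cast]
      gcongr
    have s₃ : |D * B * Λ| = D * |(B : ℝ)| * |Λ| := by
      rw [abs_mul, abs_mul, abs_of_nonneg hDR]
    have := abs_le.mp s₁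
    have := abs_le.mp s₂
    have := abs_le.mp s₀
    have := abs_le.mp s₃.le
    rw [abs_le]
    constructor <;> linarith
  have ha₁ : (0 : ℝ) < a₁ := by
    by_contra! h
    have : (G : ℝ) * a₁ ≤ 0 := mul_nonpos_of_nonneg_of_nonpos hGR.le h
    have he : (0 : ℝ) ≤ e := (abs_nonneg _).trans h₀
    have : (0 : ℝ) ≤ D * |(B : ℝ)| + 3 * X * (|(B : ℝ)| * e + m) * G := by positivity
    linarith
  have hfin : (a₁ : ℝ) * |((x * B + y * C - n * A : ℤ) : ℝ)| * G < a₁ * G := by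
    rw [abs_mul, abs_of_pos ha₁] at hbd
    have hΛ' := mul_le_mul_of_nonneg_left hΛ (mul_nonneg hDR hB)
    have := mul_le_mul_of_nonneg_right hbd hGR.le
    linarith
  have h1 : |((x * B + y * C - n * A : ℤ) : ℝ)| < 1 := by
    by_contra! h
    have : (a₁ : ℝ) * 1 * G ≤ a₁ * |((x * B + y * C - n * A : ℤ) : ℝ)| * G := by gcongr
    linarith
  exact Int.abs_lt_one_iff.mp (by exact_mod_cast h1)

/-- The integer inequalities making a vector usable for the reduction. -/
def Admissible (G X : ℤ) (v : ℤ × ℤ × ℤ) : Prop :=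
  15 * fixScale * |v.2.1| + 3 * X * (|v.2.1| * 20000
    + max |v.1 * fixLogTwo - v.2.1 * fixLogPhi| |v.2.2 * fixLogTwo - v.2.1 * fixLogThree|) * G
    < G * fixLogTwo

theorem eq_zero_of_admissible {G X : ℤ} {v : Fin 3 → ℤ × ℤ × ℤ} (hv : ∀ i, Admissible G X (v i))
    (hdet : (v 0).1 * ((v 1).2.1 * (v 2).2.2 - (v 2).2.1 * (v 1).2.2)
      - (v 0).2.1 * ((v 1).1 * (v 2).2.2 - (v 2).1 * (v 1).2.2)
      + (v 0).2.2 * ((v 1).1 * (v 2).2.1 - (v 2).1 * (v 1).2.1) ≠ 0)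
    {n x y : ℕ} (hn : n ≤ X) (hx : x ≤ X) (hy : y ≤ X) (hG : 0 < G)
    (hΛ : |linForm n x y| * G ≤ 1) : n = 0 := by
  have h (i : Fin 3) : (x : ℤ) * (v i).2.1 + y * (v i).2.2 - n * (v i).1 = 0 :=
    relation_of_small (D := 15 * fixScale) (by positivity)
      (by have := abs_log_goldenRatio_sub_le; push_cast; exact this)
      (by have := abs_log_two_sub_le; push_cast; exact this)
      (by have := abs_log_three_sub_le; push_cast; exact this)
      hn hx hy hG hΛ (le_max_left _ _) (le_max_right _ _) (hv i)
  have h0 := h 0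
  have h1 := h 1
  have h2 := h 2
  have : (n : ℤ) * ((v 0).1 * ((v 1).2.1 * (v 2).2.2 - (v 2).2.1 * (v 1).2.2)
      - (v 0).2.1 * ((v 1).1 * (v 2).2.2 - (v 2).1 * (v 1).2.2)
      + (v 0).2.2 * ((v 1).1 * (v 2).2.1 - (v 2).1 * (v 1).2.1)) = 0 := by
    linear_combination -((v 1).2.1 * (v 2).2.2 - (v 2).2.1 * (v 1).2.2) * h0
      + ((v 0).2.1 * (v 2).2.2 - (v 2).2.1 * (v 0).2.2) * h1
      - ((v 0).2.1 * (v 1).2.2 - (v 1).2.1 * (v 0).2.2) * h2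
  rcases mul_eq_zero.mp this with h | h
  · exact_mod_cast h
  · exact absurd h hdet

instance (G X : ℤ) (v : ℤ × ℤ × ℤ) : Decidable (Admissible G X v) :=
  inferInstanceAs (Decidable (_ < _))

theorem eq_zero_of_coarse {n x y : ℕ} (hn : n ≤ 10 ^ 216) (hx : x ≤ n) (hy : y ≤ n)
    (hΛ : |linForm n x y| * 2 ^ 1500 ≤ 1) : n = 0 :=
  eq_zero_of_admissible (G := 2 ^ 1500) (X := 10 ^ 216) (v := coarseVec) (by decide +kernel)
    (by decide +kernel) (by exact_mod_cast hn) (by exact_mod_cast hx.trans hn)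
    (by exact_mod_cast hy.trans hn) (by norm_num) (by exact_mod_cast hΛ)

theorem eq_zero_of_fine {n x y : ℕ} (hn : n ≤ 4200) (hx : x ≤ n) (hy : y ≤ n)
    (hΛ : |linForm n x y| * 2 ^ 40 ≤ 1) : n = 0 :=
  eq_zero_of_admissible (G := 2 ^ 40) (X := 4200) (v := fineVec) (by decide +kernel)
    (by decide +kernel) (by exact_mod_cast hn) (by exact_mod_cast hx.trans hn)
    (by exact_mod_cast hy.trans hn) (by norm_num) (by exact_mod_cast hΛ)

theorem lucas_eq_goldenRatio_pow_add (n : ℕ) :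
    (lucas n : ℝ) = Real.goldenRatio ^ n + Real.goldenConj ^ n := by
  rw [lucas_eq_fib, goldenRatio_pow_eq_fib, goldenConj_pow_eq_fib]
  push_cast
  linear_combination -(n.fib : ℝ) * Real.goldenRatio_add_goldenConj

theorem abs_log_le_of_abs_sub_one_le {r ε : ℝ} (hε : ε ≤ 1 / 2) (h : |r - 1| ≤ ε) :
    |Real.log r| ≤ 2 * ε := by
  obtain ⟨h1, h2⟩ := abs_le.mp h
  have hr : 0 < r := by linarith
  have h3 := Real.log_le_sub_one_of_pos hr
  have h4 := Real.one_sub_inv_le_log_of_pos hr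
  have h5 : r⁻¹ - 1 ≤ 2 * ε := by
    have : r⁻¹ - 1 = (1 - r) / r := by field_simp
    rw [this, div_le_iff₀ hr]
    nlinarith
  rw [abs_le]
  constructor <;> linarith

theorem exp_quarter_mul_pow_le {n : ℕ} (hn : 112 ≤ n) :
    Real.exp (n / 4) * (290 * n ^ 4) ≤ Real.goldenRatio ^ n := by
  have h1 : Real.exp (1 / 4) ≤ 1.29 := by
    refine (pow_le_pow_iff_left₀ (Real.exp_pos _).le (by norm_num) (n := 4) (by norm_num)).mp ?_
    rw [← Real.exp_nat_mul]
    norm_num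
    linarith [Real.exp_one_lt_d9]
  have h2 : (1.29 : ℝ) * 1.25 ≤ Real.goldenRatio := by
    have : (2.23 : ℝ) ≤ √5 := Real.le_sqrt_of_sq_le (by norm_num)
    unfold Real.goldenRatio
    linarith
  have h3 : (290 * n ^ 4 : ℝ) ≤ 1.25 ^ n := by
    induction n, hn using Nat.le_induction with
    | base => norm_num
    | succ n hn ih =>
      have hn' : (112 : ℝ) ≤ n := by exact_mod_cast hn
      have h4 : ((n : ℝ) + 1) ≤ 1.01 * n := by linarith
      push_cast
      calc 290 * ((n : ℝ) + 1) ^ 4 ≤ 290 * (1.01 * n) ^ 4 := by gcongr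
        _ = 1.01 ^ 4 * (290 * (n : ℝ) ^ 4) := by ring
        _ ≤ 1.25 * 1.25 ^ n := by gcongr; norm_num
        _ = 1.25 ^ (n + 1) := by ring
  calc Real.exp (n / 4) * (290 * n ^ 4) ≤ 1.29 ^ n * 1.25 ^ n := by
        refine mul_le_mul ?_ h3 (by positivity) (by positivity)
        rw [show (n : ℝ) / 4 = n * (1 / 4) by ring, Real.exp_nat_mul]
        exact pow_le_pow_left₀ (Real.exp_pos _).le h1 n
    _ = (1.29 * 1.25) ^ n := (mul_pow _ _ _).symm
    _ ≤ _ := pow_le_pow_left₀ (by norm_num) h2 n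

theorem abs_linForm_le {n x y : ℕ} (hn : 112 ≤ n) (h1 : lucas n < 2 ^ x * 3 ^ y)
    (h2 : 2 ^ x * 3 ^ y ≤ lucas n + 144 * (n : ℤ) ^ 4) :
    |linForm n x y| ≤ Real.exp (-(n / 4)) := by
  have hφ := Real.goldenRatio_pos
  have hφn : 0 < Real.goldenRatio ^ n := by positivity
  have h1' : (lucas n : ℝ) < 2 ^ x * 3 ^ y := by exact_mod_cast h1
  have h2' : (2 ^ x * 3 ^ y : ℝ) ≤ lucas n + 144 * (n : ℝ) ^ 4 := by exact_mod_cast h2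
  have hψ : |Real.goldenConj ^ n| ≤ 1 := by
    rw [abs_pow]
    refine pow_le_one₀ (abs_nonneg _) ?_
    rw [abs_le]
    constructor <;> linarith [Real.neg_one_lt_goldenConj, Real.goldenConj_neg]
  have hψ' := abs_le.mp hψ
  have hn4 : (1 : ℝ) ≤ (n : ℝ) ^ 4 := one_le_pow₀ (by exact_mod_cast (by omega : 1 ≤ n))
  rw [lucas_eq_goldenRatio_pow_add] at h1' h2'
  have hlog : linForm n x y = Real.log (2 ^ x * 3 ^ y / Real.goldenRatio ^ n) := by
    rw [Real.log_div (by positivity) hφn.ne', Real.log_mul (by positivity) (by positivity),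
      Real.log_pow, Real.log_pow, Real.log_pow]
    rfl
  have hexp := exp_quarter_mul_pow_le hn
  have hexp' : 145 * (n : ℝ) ^ 4 / Real.goldenRatio ^ n ≤ Real.exp (-(n / 4)) / 2 := by
    rw [Real.exp_neg, div_le_div_iff₀ hφn (by norm_num), ← div_eq_inv_mul,
      le_div_iff₀ (Real.exp_pos _)]
    linarith
  have hexp1 : Real.exp (-((n : ℝ) / 4)) ≤ 1 := Real.exp_le_one_iff.mpr (by simp; positivity)
  have hr : |(2 ^ x * 3 ^ y / Real.goldenRatio ^ n : ℝ) - 1|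
      ≤ 145 * (n : ℝ) ^ 4 / Real.goldenRatio ^ n := by
    rw [div_sub_one hφn.ne', abs_div, abs_of_pos hφn]
    gcongr
    rw [abs_le]
    constructor <;> linarith
  rw [hlog]
  refine (abs_log_le_of_abs_sub_one_le (by linarith) hr).trans ?_
  linarith

theorem le_of_abs_linForm_le {n x y : ℕ} (hn : 112 ≤ n) (h : |linForm n x y| ≤ 1) :
    x ≤ n ∧ y ≤ n := by
  have hφ : Real.log Real.goldenRatio ≤ 3 / 4 * Real.log 2 := by
    have h1 : Real.goldenRatio ^ 4 ≤ 2 ^ 3 := by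
      have h2 : (√5 : ℝ) ^ 2 = 5 := Real.sq_sqrt (by norm_num)
      have h3 : Real.goldenRatio ^ 4 = 3 * Real.goldenRatio + 2 := by
        linear_combination (Real.goldenRatio ^ 2 + Real.goldenRatio + 2) * Real.goldenRatio_sq
      rw [h3]
      linarith [Real.goldenRatio_lt_two]
    have h2 := Real.log_le_log (pow_pos Real.goldenRatio_pos 4) h1
    rw [Real.log_pow, Real.log_pow] at h2
    push_cast at h2
    linarith
  have h2 := Real.log_two_gt_d9
  have h3 : Real.log 2 ≤ Real.log 3 := Real.log_le_log (by norm_num) (by norm_num)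
  have hn' : (112 : ℝ) ≤ n := by exact_mod_cast hn
  have h4 := (abs_le.mp h).2
  unfold linForm at h4
  have h5 : (n : ℝ) * Real.log Real.goldenRatio ≤ n * (3 / 4 * Real.log 2) := by gcongr
  have h6 : (y : ℝ) * Real.log 2 ≤ y * Real.log 3 := by gcongr
  have h7 : (0 : ℝ) ≤ x * Real.log 2 := by positivity
  have h8 : (0 : ℝ) ≤ y * Real.log 2 := by positivity
  have h9 : 112 * Real.log 2 ≤ n * Real.log 2 := by gcongr
  constructor
  · by_contra! hx
    have hx' : (n : ℝ) ≤ x := by exact_mod_cast hx.le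
    have : (n : ℝ) * Real.log 2 ≤ x * Real.log 2 := by gcongr
    linarith
  · by_contra! hy
    have hy' : (n : ℝ) ≤ y := by exact_mod_cast hy.le
    have : (n : ℝ) * Real.log 2 ≤ y * Real.log 2 := by gcongr
    linarith

theorem exists_pow_le_lt_succ_pow {k : ℕ} (hk : 0 < k) (n : ℕ) :
    ∃ q : ℕ, q ^ k ≤ n ∧ n < (q + 1) ^ k := by
  induction n with
  | zero => exact ⟨0, by simp [hk.ne'], by simp⟩
  | succ n ih =>
    obtain ⟨q, h1, h2⟩ := ih
    rcases Nat.lt_or_ge (n + 1) ((q + 1) ^ k) with h | h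
    · exact ⟨q, by omega, h⟩
    · exact ⟨q + 1, h, lt_of_le_of_lt h2 (Nat.pow_lt_pow_left (by omega) hk.ne')⟩

/-- A product of powers of `2` and `3` slightly above `L_n` occurs only for small `n`. -/
theorem lt_of_lucas_window {n x y : ℕ} (h1 : lucas n < 2 ^ x * 3 ^ y)
    (h2 : 2 ^ x * 3 ^ y ≤ lucas n + 144 * (n : ℤ) ^ 4) : n < 112 := by
  by_contra! hn
  have hΛ := abs_linForm_le hn h1 h2
  obtain ⟨hx, hy⟩ := le_of_abs_linForm_le hn
    (hΛ.trans (Real.exp_le_one_iff.mpr (by simp; positivity)))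
  have h7 : (2 : ℝ) ^ 10 ≤ Real.exp 7 := by
    have e : Real.exp 7 = Real.exp 1 ^ 7 := by rw [← Real.exp_nat_mul]; norm_num
    calc (2 : ℝ) ^ 10 ≤ 2.7182 ^ 7 := by norm_num
      _ ≤ Real.exp 1 ^ 7 := by gcongr; linarith [Real.exp_one_gt_d9]
      _ = _ := e.symm
  have key (k : ℕ) (hk : 28 * k ≤ n) : |linForm n x y| * 2 ^ (10 * k) ≤ 1 := by
    have hk' : (28 * k : ℝ) ≤ n := by exact_mod_cast hk
    have e : (2 : ℝ) ^ (10 * k) ≤ Real.exp (n / 4) := by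
      calc (2 : ℝ) ^ (10 * k) = ((2 : ℝ) ^ 10) ^ k := pow_mul _ _ _
        _ ≤ Real.exp 7 ^ k := by gcongr
        _ = Real.exp (k * 7) := by rw [Real.exp_nat_mul]
        _ ≤ _ := Real.exp_le_exp.mpr (by linarith)
    calc _ ≤ Real.exp (-(n / 4)) * Real.exp (n / 4) := by gcongr
      _ = 1 := by rw [← Real.exp_add]; simp
  rcases Nat.lt_or_ge 4200 n with hn1 | hn1
  · rcases Nat.lt_or_ge (10 ^ 216) n with hn2 | hn2
    · obtain ⟨q, hq1, hq2⟩ := exists_pow_le_lt_succ_pow (k := 36) (by norm_num) n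
      have hq : 10 ^ 6 ≤ q := by
        by_contra! hq
        have : (q + 1) ^ 36 ≤ (10 ^ 6) ^ 36 := Nat.pow_le_pow_left hq 36
        norm_num at this hn2
        omega
      refine absurd hΛ (not_le.mpr (lt_abs_linForm hq hq1 (hq2.le.trans ?_) hx hy))
      have e : 10 ^ 6 * (q + 1) ≤ (10 ^ 6 + 1) * q := by omega
      have e2 := Nat.pow_le_pow_left e 36
      rw [mul_pow, mul_pow] at e2
      have e3 : (10 ^ 6 + 1) ^ 36 ≤ (10 ^ 6) ^ 36 * 2 := by norm_num
      have e4 : (10 ^ 6) ^ 36 * (q + 1) ^ 36 ≤ (10 ^ 6) ^ 36 * q ^ 37 :=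
        calc _ ≤ (10 ^ 6 + 1) ^ 36 * q ^ 36 := e2
          _ ≤ (10 ^ 6) ^ 36 * 2 * q ^ 36 := by gcongr
          _ ≤ (10 ^ 6) ^ 36 * q * q ^ 36 := by gcongr; omega
          _ = (10 ^ 6) ^ 36 * q ^ 37 := by rw [mul_assoc, ← pow_succ']
      exact Nat.le_of_mul_le_mul_left e4 (by positivity)
    · exact absurd (eq_zero_of_coarse hn2 hx hy (key 150 (by omega))) (by omega)
  · exact absurd (eq_zero_of_fine hn1 hx hy (key 4 (by omega))) (by omega)

end Baker

theorem dvd_of_dvd_fib {M T m : ℕ} (hT : M ∣ Nat.fib T)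
    (hmin : ∀ d ∈ T.divisors, M ∣ Nat.fib d → d = T) (h0 : T ≠ 0) (h : M ∣ Nat.fib m) : T ∣ m := by
  have h' := Nat.dvd_gcd h hT
  rw [← Nat.fib_gcd] at h'
  rw [← hmin _ (Nat.mem_divisors.2 ⟨Nat.gcd_dvd_right m T, h0⟩) h']
  exact Nat.gcd_dvd_left m T

theorem two_pow_dvd_four_mul {a m : ℕ} (h : 2 ^ a ∣ Nat.fib m) : 2 ^ a ∣ 4 * m := by
  induction m using Nat.strong_induction_on generalizing a with
  | _ m ih =>
    rcases Nat.even_or_odd' m with ⟨k, rfl | rfl⟩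
    · rcases Nat.eq_zero_or_pos k with rfl | hk0
      · simp
      rcases Nat.even_or_odd k with hpar | hpar
      · obtain ⟨j, hj⟩ := hpar
        rcases a with - | a
        · simp
        have hu : ¬ 4 ∣ 2 * Nat.fib (k + 1) - Nat.fib k := by
          intro h4
          have hle := Nat.fib_le_fib_succ (n := k)
          have h3 : 3 ∣ k := dvd_of_dvd_fib (M := 2) (by decide) (by decide) (by decide) (by omega)
          have h8 : 8 ∣ Nat.fib k := Nat.fib_dvd 6 k (by omega)
          have := Nat.dvd_gcd (show 2 ∣ Nat.fib k by omega) (show 2 ∣ Nat.fib (k + 1) by omega)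
          rw [(Nat.fib_coprime_fib_succ k).gcd_eq_one] at this
          omega
        rw [Nat.fib_two_mul] at h
        have : 2 ^ a ∣ Nat.fib k := by
          obtain ⟨b, c, hb, hc, hbc⟩ := (Nat.dvd_mul).1 h
          obtain ⟨i, -, rfl⟩ := (Nat.dvd_prime_pow Nat.prime_two).1 (Dvd.intro_left _ hbc)
          obtain ⟨i', -, rfl⟩ := (Nat.dvd_prime_pow Nat.prime_two).1 (Dvd.intro _ hbc)
          have hi : i < 2 := by
            by_contra hi
            exact hu (((pow_dvd_pow 2 (not_lt.1 hi) : 2 ^ 2 ∣ 2 ^ i)).trans hc)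
          rw [← pow_add] at hbc
          have := Nat.pow_right_injective le_rfl hbc
          exact (pow_dvd_pow 2 (by omega)).trans hb
        have := ih k (by omega) this
        rw [pow_succ, show 4 * (2 * k) = 4 * k * 2 by ring]
        exact mul_dvd_mul_right this 2
      · have : a ≤ 3 := by
          by_contra ha
          have h16 : 16 ∣ Nat.fib (2 * k) := (pow_dvd_pow 2 (by omega : 4 ≤ a)).trans h
          have : 12 ∣ 2 * k := dvd_of_dvd_fib (by decide) (by decide) (by decide) h16
          obtain ⟨j, rfl⟩ := hpar
          omega
        exact (pow_dvd_pow 2 this).trans ⟨k, by ring⟩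
    · have : a ≤ 1 := by
        by_contra ha
        have h4 : 4 ∣ Nat.fib (2 * k + 1) := (pow_dvd_pow 2 (by omega : 2 ≤ a)).trans h
        have : 6 ∣ 2 * k + 1 := dvd_of_dvd_fib (by decide) (by decide) (by decide) h4
        omega
      exact (pow_dvd_pow 2 (by omega : a ≤ 2)).trans ⟨2 * k + 1, by ring⟩

theorem fib_three_mul {r : ℕ} (hr : Even r) :
    Nat.fib (3 * r) = Nat.fib r * (5 * Nat.fib r ^ 2 + 3) := by
  obtain ⟨k, rfl⟩ := hr
  rcases k with - | k
  · simp
  have cassini : ∀ k, (Nat.fib (k + 1 + (k + 1)) : ℤ) ^ 2 + 1 =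
      Nat.fib (k + 1 + (k + 1) + 1) * Nat.fib (k + k + 1) := fun k => by
    induction k with
    | zero => norm_num [Nat.fib]
    | succ k ih =>
      rw [show k + 1 + (k + 1) = k + k + 2 by ring] at *
      rw [show k + 1 + 1 + (k + 1 + 1) = k + k + 4 by ring]
      simp only [Nat.fib_add_two, Nat.cast_add] at *
      linarith
  have h := cassini k
  rw [show 3 * (k + 1 + (k + 1)) = 2 * (k + 1 + (k + 1)) + (k + k + 1) + 1 by ring, Nat.fib_add,
    Nat.fib_two_mul_add_one, Nat.fib_two_mul]
  rw [show k + 1 + (k + 1) = k + k + 2 by ring] at *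
  have hle := Nat.fib_le_fib_succ (n := k + k + 2)
  zify [show Nat.fib (k + k + 2) ≤ 2 * Nat.fib (k + k + 2 + 1) by omega]
  simp only [Nat.fib_add_two, Nat.cast_add] at *
  grind

theorem three_pow_dvd_three_mul {b m : ℕ} (h : 3 ^ b ∣ Nat.fib m) : 3 ^ b ∣ 3 * m := by
  induction m using Nat.strong_induction_on generalizing b with
  | _ m ih =>
    rcases Nat.lt_or_ge b 2 with hb | hb
    · exact (pow_dvd_pow 3 (by omega : b ≤ 1)).trans ⟨m, by ring⟩
    obtain ⟨b, rfl⟩ : ∃ d, b = d + 1 := ⟨b - 1, by omega⟩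
    have h9 : 9 ∣ Nat.fib m := (pow_dvd_pow 3 hb).trans h
    have h12 : 12 ∣ m := dvd_of_dvd_fib (by decide) (by decide) (by decide) h9
    obtain ⟨k, rfl⟩ := h12
    rcases Nat.eq_zero_or_pos k with rfl | hk
    · simp
    rw [show 12 * k = 3 * (4 * k) by ring] at h ⊢
    have h3 : 3 ∣ Nat.fib (4 * k) := Nat.fib_dvd 4 _ ⟨k, rfl⟩
    rw [fib_three_mul ⟨2 * k, by ring⟩] at h
    obtain ⟨g, hg⟩ := h3
    have e : 5 * Nat.fib (4 * k) ^ 2 + 3 = 3 * (15 * g ^ 2 + 1) := by rw [hg]; ring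
    rw [e, ← mul_assoc, mul_comm _ 3, mul_assoc, pow_succ', Nat.mul_dvd_mul_iff_left three_pos] at h
    have hco : Nat.Coprime (3 ^ b) (15 * g ^ 2 + 1) := by
      refine Nat.Coprime.pow_left _ ((Nat.Prime.coprime_iff_not_dvd Nat.prime_three).2 ?_)
      omega
    rw [pow_succ']
    exact mul_dvd_mul_left 3 (ih (4 * k) (by omega) (hco.dvd_of_dvd_mul_right h))

theorem lucas_add_two_mul_sub_dvd (j k : ℕ) :
    lucas (j + 2 * k) - lucas j ∣ 5 * Nat.fib (2 * j + 2 * k) * Nat.fib (2 * k) := by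
  have h2 : ∀ n, (Nat.fib (2 * n) : ℤ) = Nat.fib n * lucas n := fun n => by
    have := Nat.fib_le_fib_succ (n := n)
    rw [lucas_eq_fib, Nat.fib_two_mul]
    push_cast [show Nat.fib n ≤ 2 * Nat.fib (n + 1) by omega]
    ring
  have hsub : (lucas (j + 2 * k) - lucas j = 5 * Nat.fib (j + k) * Nat.fib k) ∨
      (lucas (j + 2 * k) - lucas j = lucas (j + k) * lucas k) := by
    have hc : (Nat.fib (k + 1) : ℤ) ^ 2 - Nat.fib (k + 1) * Nat.fib k - (Nat.fib k : ℤ) ^ 2 = 1 ∨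
        (Nat.fib (k + 1) : ℤ) ^ 2 - Nat.fib (k + 1) * Nat.fib k - (Nat.fib k : ℤ) ^ 2 = -1 := by
      induction k with
      | zero => norm_num
      | succ k ih =>
        rw [Nat.fib_add_two]
        push_cast
        rcases ih with ih | ih
        · right; linarith
        · left; linarith
    have ha : ∀ i, (Nat.fib (i + k) : ℤ) =
        Nat.fib i * (Nat.fib (k + 1) - Nat.fib k) + Nat.fib (i + 1) * Nat.fib k := fun i => by
      rcases i with - | i
      · simp
      · rw [show i + 1 + k = i + k + 1 by ring, Nat.fib_add, Nat.fib_add_two]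
        push_cast
        ring
    have hb : ∀ i, (Nat.fib (i + 1 + k) : ℤ) =
        Nat.fib (i + 1) * Nat.fib (k + 1) + Nat.fib i * Nat.fib k := fun i => by
      rw [ha, Nat.fib_add_two]
      push_cast
      ring
    have e1 := ha j
    have e2 := hb j
    have e3 := ha (j + k)
    have e4 := hb (j + k)
    rw [show j + k + 1 = j + 1 + k by ring] at e3 e4
    simp only [lucas_eq_fib]
    rw [show j + 2 * k = j + k + k by ring, show j + k + k + 1 = j + 1 + k + k by ring,
      show j + k + 1 = j + 1 + k by ring, e3, e4, e1, e2]
    generalize (Nat.fib (k + 1) : ℤ) = q at *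
    generalize (Nat.fib k : ℤ) = p at *
    generalize (Nat.fib j : ℤ) = u at *
    generalize (Nat.fib (j + 1) : ℤ) = v at *
    rcases hc with hc | hc
    · left; linear_combination (2 * v - u) * hc
    · right; linear_combination (u - 2 * v) * hc
  rw [show 2 * j + 2 * k = 2 * (j + k) by ring, h2, h2]
  rcases hsub with h | h <;> rw [h]
  · exact ⟨lucas (j + k) * lucas k, by ring⟩
  · exact ⟨5 * Nat.fib (j + k) * Nat.fib k, by ring⟩

theorem prime_pow_le_of_dvd_lucas_sub {p a c i j : ℕ} (hp : p.Prime) (hp5 : p ≠ 5) (hc : 0 < c)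
    (hfib : ∀ {a m : ℕ}, p ^ a ∣ Nat.fib m → p ^ a ∣ c * m) (hji : j < i) (hpar : i % 2 = j % 2)
    (h : (p : ℤ) ^ a ∣ lucas i - lucas j) : p ^ a ≤ c ^ 2 * i ^ 2 := by
  obtain ⟨k, rfl⟩ : ∃ k, i = j + 2 * k := ⟨(i - j) / 2, by omega⟩
  have h := h.trans (lucas_add_two_mul_sub_dvd j k)
  have hco : Nat.Coprime (p ^ a) 5 :=
    Nat.Coprime.pow_left _ ((Nat.coprime_primes hp Nat.prime_five).2 hp5)
  have h : p ^ a ∣ Nat.fib (2 * j + 2 * k) * Nat.fib (2 * k) := by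
    refine hco.dvd_of_dvd_mul_left ?_
    rw [← mul_assoc]
    exact_mod_cast h
  obtain ⟨u, v, hu, hv, huv⟩ := (Nat.dvd_mul).1 h
  obtain ⟨s, -, rfl⟩ := (Nat.dvd_prime_pow hp).1 (Dvd.intro _ huv)
  obtain ⟨t, -, rfl⟩ := (Nat.dvd_prime_pow hp).1 (Dvd.intro_left _ huv)
  rw [← huv]
  calc p ^ s * p ^ t ≤ (c * (2 * j + 2 * k)) * (c * (2 * k)) :=
        Nat.mul_le_mul (Nat.le_of_dvd (Nat.mul_pos hc (by omega)) (hfib hu))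
          (Nat.le_of_dvd (Nat.mul_pos hc (by omega)) (hfib hv))
    _ = c ^ 2 * ((2 * j + 2 * k) * (2 * k)) := by ring
    _ ≤ c ^ 2 * (j + 2 * k) ^ 2 := Nat.mul_le_mul_left _ (by nlinarith)

theorem two_pow_min_le {i j x y x' y' C : ℕ} (hji : j < i) (hpar : i % 2 = j % 2)
    (h : lucas i + C = 2 ^ x * 3 ^ y) (h' : lucas j + C = 2 ^ x' * 3 ^ y') :
    2 ^ min x x' ≤ 16 * i ^ 2 ∧ 3 ^ min y y' ≤ 9 * i ^ 2 := by
  have e : lucas i - lucas j = 2 ^ x * 3 ^ y - 2 ^ x' * 3 ^ y' := by rw [← h, ← h']; ring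
  constructor
  · refine prime_pow_le_of_dvd_lucas_sub (c := 4) Nat.prime_two (by norm_num) (by norm_num)
      two_pow_dvd_four_mul hji hpar ?_
    rw [e]
    exact dvd_sub ((pow_dvd_pow _ (min_le_left _ _)).mul_right _)
      ((pow_dvd_pow _ (min_le_right _ _)).mul_right _)
  · refine prime_pow_le_of_dvd_lucas_sub (c := 3) Nat.prime_three (by norm_num) (by norm_num)
      three_pow_dvd_three_mul hji hpar ?_
    rw [e]
    exact dvd_sub ((pow_dvd_pow _ (min_le_left _ _)).mul_left _)
      ((pow_dvd_pow _ (min_le_right _ _)).mul_left _)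

theorem le_of_three_same_parity {C n : ℕ} {s : Fin 3 → ℕ × ℕ × ℕ}
    (hs : ∀ i, lucas (s i).1 + C = 2 ^ (s i).2.1 * 3 ^ (s i).2.2)
    (hne : ∀ i j, i ≠ j → (s i).1 ≠ (s j).1) (hpar : ∀ i j, (s i).1 % 2 = (s j).1 % 2)
    (hn : ∀ i, (s i).1 ≤ n) : C ≤ 144 * n ^ 4 := by
  have hmin : ∀ i j, i ≠ j → 2 ^ min (s i).2.1 (s j).2.1 ≤ 16 * n ^ 2 ∧
      3 ^ min (s i).2.2 (s j).2.2 ≤ 9 * n ^ 2 := by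
    have key : ∀ i j, (s j).1 < (s i).1 → 2 ^ min (s i).2.1 (s j).2.1 ≤ 16 * n ^ 2 ∧
        3 ^ min (s i).2.2 (s j).2.2 ≤ 9 * n ^ 2 := fun i j hij => by
      have hle := Nat.pow_le_pow_left (hn i) 2
      have := two_pow_min_le hij (hpar i j) (hs i) (hs j)
      omega
    intro i j hij
    rcases lt_or_gt_of_ne (hne i j hij) with h | h
    · rw [min_comm (s i).2.1, min_comm (s i).2.2]
      exact key j i h
    · exact key i j h
  have hx : ∀ i j, i ≠ j → 2 ^ (s i).2.1 ≤ 16 * n ^ 2 ∨ 2 ^ (s j).2.1 ≤ 16 * n ^ 2 :=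
    fun i j hij => by
      have h := (hmin i j hij).1
      rcases min_choice (s i).2.1 (s j).2.1 with e | e <;> rw [e] at h
      exacts [Or.inl h, Or.inr h]
  have hy : ∀ i j, i ≠ j → 3 ^ (s i).2.2 ≤ 9 * n ^ 2 ∨ 3 ^ (s j).2.2 ≤ 9 * n ^ 2 :=
    fun i j hij => by
      have h := (hmin i j hij).2
      rcases min_choice (s i).2.2 (s j).2.2 with e | e <;> rw [e] at h
      exacts [Or.inl h, Or.inr h]
  obtain ⟨i, h2, h3⟩ : ∃ i, 2 ^ (s i).2.1 ≤ 16 * n ^ 2 ∧ 3 ^ (s i).2.2 ≤ 9 * n ^ 2 := by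
    by_contra! hcon
    have h := fun i h => (hcon i h).not_ge
    have := h 0; have := h 1; have := h 2
    have := hx 0 1 (by decide); have := hx 0 2 (by decide); have := hx 1 2 (by decide)
    have := hy 0 1 (by decide); have := hy 0 2 (by decide); have := hy 1 2 (by decide)
    tauto
  have hC : (C : ℤ) ≤ (2 ^ (s i).2.1 * 3 ^ (s i).2.2 : ℕ) := by
    push_cast
    rw [← hs i]
    have := Sieve.lucas_pos (s i).1
    omega
  calc C ≤ 2 ^ (s i).2.1 * 3 ^ (s i).2.2 := by exact_mod_cast hC
    _ ≤ 16 * n ^ 2 * (9 * n ^ 2) := Nat.mul_le_mul h2 h3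
    _ = 144 * n ^ 4 := by ring

namespace Sieve

/-- The entries `b` of `l` for which `b + C` divides `6 ^ 80`. -/
noncomputable def smoothShifts (C : ℕ) (l : List ℕ) : List ℕ :=
  fold (fun b ih => Bool.rec ih (List.cons b ih)
    (Nat.beq (Nat.mod (Nat.pow 6 80) (Nat.add b C)) 0)) [] l

theorem mem_smoothShifts {C b : ℕ} {l : List ℕ} (hb : b ∈ l) (h : b + C ∣ 6 ^ 80) :
    b ∈ smoothShifts C l := by
  refine fold_mem (b ∈ ·) (fun a t ht => ?_) (fun t => ?_) [] hb
  · cases Nat.beq (Nat.mod (Nat.pow 6 80) (Nat.add a C)) 0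
    · exact ht
    · exact List.mem_cons_of_mem _ ht
  · have e : Nat.beq (Nat.mod (Nat.pow 6 80) (Nat.add b C)) 0 = true := by
      rw [beq_eq]
      exact decide_eq_true (Nat.mod_eq_zero_of_dvd h)
    rw [e]
    exact List.mem_cons_self

noncomputable def hasTwo (l : List ℕ) : Bool :=
  List.rec false (fun _ t _ => Bool.rec true false (isNil t)) l

theorem hasTwo_of_mem {l : List ℕ} {a b : ℕ} (ha : a ∈ l) (hb : b ∈ l) (hab : a ≠ b) :
    hasTwo l = true := by
  rcases l with - | ⟨c, - | ⟨d, t⟩⟩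
  · simp at ha
  · simp_all
  · rfl

def smallValues : List ℕ := [133, 97, 61, 52, 25, 21, 20, 17, 14, 9, 7, 6, 5, 3, 2, 1]

noncomputable def cellOk (W a : ℕ) (l : List ℕ) (x y : ℕ) (acc : Bool) : Bool :=
  force (Nat.mul (Nat.pow 2 x) (Nat.pow 3 y)) fun N =>
    Bool.rec acc (Bool.rec acc
      (force (Nat.sub N a) fun C =>
        Bool.rec acc (Bool.rec false acc (decide (C ∈ smallValues))) (hasTwo (smoothShifts C l)))
      (Nat.ble N W)) (Nat.blt a N)

theorem acc_of_cellOk {W a : ℕ} {l : List ℕ} {x y : ℕ} {acc : Bool}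
    (h : cellOk W a l x y acc = true) : acc = true := by
  rw [cellOk, force_eq, force_eq] at h
  revert h
  cases Nat.blt a (Nat.mul (Nat.pow 2 x) (Nat.pow 3 y))
  · exact id
  cases Nat.ble (Nat.mul (Nat.pow 2 x) (Nat.pow 3 y)) W
  · exact id
  cases hasTwo (smoothShifts (Nat.sub (Nat.mul (Nat.pow 2 x) (Nat.pow 3 y)) a) l)
  · exact id
  cases decide (Nat.sub (Nat.mul (Nat.pow 2 x) (Nat.pow 3 y)) a ∈ smallValues)
  · exact fun h => nomatch h
  · exact id

theorem cellOk_spec {W a : ℕ} {l : List ℕ} {x y C : ℕ} {acc : Bool}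
    (hok : cellOk W a l x y acc = true) (h : a + C = 2 ^ x * 3 ^ y) (hC : 0 < C) (hC' : a + C ≤ W)
    (ht : hasTwo (smoothShifts C l) = true) : C ∈ smallValues := by
  have e : Nat.mul (Nat.pow 2 x) (Nat.pow 3 y) = a + C := h.symm
  have e1 : Nat.blt a (a + C) = true := by rw [blt_eq]; exact decide_eq_true (by omega)
  have e3 : Nat.sub (a + C) a = C := Nat.add_sub_cancel_left a C
  rw [cellOk, force_eq, force_eq, e, e1, Nat.ble_eq_true_of_le hC', e3, ht] at hok
  by_contra hn
  rw [decide_eq_false hn] at hok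
  exact nomatch hok

/-- Tests that every `C ≤ 144 n ^ 4` for which `a + C` and two of the `b + C`, `b ∈ l`, are of the
form `2 ^ x * 3 ^ y` belongs to `smallValues`. -/
noncomputable def windowOk (n a : ℕ) (l : List ℕ) : Bool :=
  force (Nat.add a (Nat.mul 144 (Nat.pow n 4))) fun W =>
    sweep 1 50 0 (fun y acc =>
      force (Nat.log2 (Nat.div a (Nat.pow 3 y))) fun lo =>
      force (Nat.log2 (Nat.div W (Nat.pow 3 y))) fun hi =>
        sweep 1 (Nat.sub (Nat.succ hi) lo) lo (fun x acc => cellOk W a l x y acc) acc) true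

theorem windowOk_spec {n a : ℕ} {l : List ℕ} (hok : windowOk n a l = true) {x y C b b' : ℕ}
    (h : a + C = 2 ^ x * 3 ^ y) (hy : y < 50) (hC : 0 < C) (hC' : C ≤ 144 * n ^ 4)
    (hb : b ∈ l) (hb' : b' ∈ l) (hbb : b ≠ b') (hd : b + C ∣ 6 ^ 80) (hd' : b' + C ∣ 6 ^ 80) :
    C ∈ smallValues := by
  have ht := hasTwo_of_mem (mem_smoothShifts hb hd) (mem_smoothShifts hb' hd') hbb
  have hmono : ∀ (q r y : ℕ) {acc : Bool},
      sweep 1 q r (fun x acc => cellOk (a + 144 * n ^ 4) a l x y acc) acc = true → acc = true :=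
    fun q r y {acc} h => sweep_acc (P := fun b : Bool => b = true → acc = true)
      (fun _ _ hP hb => hP (acc_of_cellOk hb)) (acc := acc) id 1 q r h
  rw [windowOk, force_eq] at hok
  refine sweep_mem (P := fun b : Bool => b = true → C ∈ smallValues) (fun y' b hP hb => hP ?_)
    (T := 1) (q := 50) (r := 0) (i := y) hy (fun acc hacc => ?_) true hok
  · rw [force_eq, force_eq] at hb
    exact hmono _ _ _ hb
  · rw [force_eq, force_eq, Nat.zero_add, Nat.mul_one] at hacc
    change sweep 1 (Nat.log2 ((a + 144 * n ^ 4) / 3 ^ y) + 1 - Nat.log2 (a / 3 ^ y))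
      (Nat.log2 (a / 3 ^ y)) (fun x acc => cellOk (a + 144 * n ^ 4) a l x y acc) acc = true at hacc
    have h3 : 0 < 3 ^ y := by positivity
    have hlo : Nat.log2 (a / 3 ^ y) ≤ x := by
      rw [Nat.log2_eq_log_two]
      refine (Nat.log_mono_right ((Nat.div_lt_iff_lt_mul h3).2 (?_ : a < 2 ^ x * 3 ^ y)).le).trans
        (Nat.log_pow one_lt_two x).le
      omega
    have hhi : x ≤ Nat.log2 ((a + 144 * n ^ 4) / 3 ^ y) := by
      rw [Nat.log2_eq_log_two, ← Nat.log_pow one_lt_two x]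
      refine Nat.log_mono_right ((Nat.le_div_iff_mul_le h3).2 ?_)
      omega
    refine sweep_mem (P := fun b : Bool => b = true → C ∈ smallValues)
      (fun _ _ hP hb => hP (acc_of_cellOk hb)) (i := x - Nat.log2 (a / 3 ^ y)) (by omega)
      (fun acc hc => cellOk_spec hc ?_ hC (by omega) ht) acc hacc
    rw [h, Nat.mul_one, Nat.add_sub_cancel' hlo]

/-- Runs `windowOk` on `fuel` consecutive indices from `n`, where `a = L n`, `b = L (n + 1)`, and
`l`, `l'` list the earlier Lucas numbers with index of the parity of `n`, `n + 1`. -/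
noncomputable def scan (fuel : ℕ) : ℕ → ℕ → ℕ → List ℕ → List ℕ → Bool :=
  Nat.rec (fun _ _ _ _ _ => true) (fun _ ih n a b l l' => Bool.rec false
    (force (Nat.succ n) fun n => force (Nat.add a b) fun c => ih n b c l' (List.cons a l))
    (windowOk n a l)) fuel

theorem scan_spec {fuel n a b : ℕ} {l l' : List ℕ} (h : scan fuel n a b l l' = true)
    (ha : (a : ℤ) = lucas n) (hb : (b : ℤ) = lucas (n + 1))
    (hl : ∀ m < n, m % 2 = n % 2 → (lucas m).toNat ∈ l)
    (hl' : ∀ m < n + 1, m % 2 = (n + 1) % 2 → (lucas m).toNat ∈ l') {k : ℕ} (hk : n ≤ k)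
    (hk' : k < n + fuel) :
    ∃ t, (∀ m < k, m % 2 = k % 2 → (lucas m).toNat ∈ t) ∧ windowOk k (lucas k).toNat t = true := by
  induction fuel generalizing n a b l l' with
  | zero => omega
  | succ fuel ih =>
    obtain ⟨h1, h2⟩ := and_of_rec h
    have ha' : (lucas n).toNat = a := by omega
    rcases hk.eq_or_lt with rfl | hk
    · exact ⟨l, hl, by rwa [ha']⟩
    · rw [force_eq, force_eq] at h2
      refine ih h2 hb ?_ hl' ?_ hk (by omega)
      · rw [lucas, ← ha, ← hb, add_comm]
        rfl
      · intro m hm hp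
        rcases eq_or_ne m n with rfl | hmn
        · rw [ha']
          exact List.mem_cons_self
        · exact List.mem_cons_of_mem _ (hl m (by omega) (by omega))

set_option maxRecDepth 1000000 in
theorem scan_eq_true : scan 112 0 2 1 [] [] = true := by
  decide +kernel

theorem mem_smallValues {n x y C : ℕ} (hn : n < 112) (h : lucas n + C = 2 ^ x * 3 ^ y) (hC : 0 < C)
    (hC' : C ≤ 144 * n ^ 4) {m u v m' u' v' : ℕ} (hm : m < n) (hp : m % 2 = n % 2)
    (he : lucas m + C = 2 ^ u * 3 ^ v) (hm' : m' < n) (hp' : m' % 2 = n % 2)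
    (he' : lucas m' + C = 2 ^ u' * 3 ^ v') (hmm : lucas m ≠ lucas m') : C ∈ smallValues := by
  obtain ⟨t, ht, hok⟩ := scan_spec scan_eq_true (by rfl) (by rfl) (fun m hm => absurd hm (by omega))
    (fun m hm hp => absurd hp (by omega)) (Nat.zero_le n) (by omega)
  have hnat : ∀ {k u v : ℕ}, lucas k + C = 2 ^ u * 3 ^ v → (lucas k).toNat + C = 2 ^ u * 3 ^ v :=
    fun {k u v} h => by
      zify
      rw [Int.toNat_of_nonneg (lucas_pos k).le]
      exact_mod_cast h
  have hlt : ∀ {k u v : ℕ}, k ≤ n → lucas k + C = 2 ^ u * 3 ^ v → u < 79 ∧ v < 50 := by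
    intro k u v hk h
    have h1 : lucas k ≤ lucas 111 := by
      rcases Nat.eq_zero_or_pos k with rfl | hk0
      · exact (show lucas 0 ≤ lucas 2 by decide).trans (lucas_mono (by norm_num) (by norm_num))
      · exact lucas_mono hk0 (by omega)
    have h2 : lucas 111 = 157626077284798815290324 := by
      rw [lucas_eq_fib]; norm_num [Nat.fib_add_two]
    have h3 : n ^ 4 ≤ 111 ^ 4 := Nat.pow_le_pow_left (by omega) 4
    have h4 : 2 ^ u * 3 ^ v < 2 ^ 79 := by have := hnat h; omega
    constructor
    · by_contra hu
      have := Nat.mul_le_mul (Nat.pow_le_pow_right two_pos (not_lt.1 hu)) (Nat.one_le_pow v 3 three_pos)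
      omega
    · by_contra hv
      have := Nat.mul_le_mul (Nat.one_le_pow u 2 two_pos) (Nat.pow_le_pow_right three_pos (not_lt.1 hv))
      omega
  have hdvd : ∀ {k u v : ℕ}, k ≤ n → lucas k + C = 2 ^ u * 3 ^ v → (lucas k).toNat + C ∣ 6 ^ 80 := by
    intro k u v hk h
    rw [hnat h, show (6 : ℕ) = 2 * 3 by norm_num, mul_pow]
    have := hlt hk h
    exact Nat.mul_dvd_mul (pow_dvd_pow 2 (by omega)) (pow_dvd_pow 3 (by omega))
  have := hlt le_rfl h
  have := lucas_pos m
  have := lucas_pos m'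
  exact windowOk_spec hok (hnat h) (by omega) hC hC' (ht m hm hp) (ht m' hm' hp')
    (by omega) (hdvd hm.le he) (hdvd hm'.le he')

end Sieve

theorem mem_of_three_solutions {C : ℕ} (hC : 0 < C) {s : Fin 3 → ℕ × ℕ × ℕ}
    (hinj : Function.Injective s)
    (hs : ∀ i, lucas (s i).1 + C = 2 ^ (s i).2.1 * 3 ^ (s i).2.2) :
    (-C : ℤ) ∈ ({-133, -97, -61, -52, -25, -21, -20, -17, -14, -9, -7, -6, -5, -3,
        -2, -1} : Set ℤ) := by
  by_cases hmix : ∃ i j, (s i).1 % 2 = 0 ∧ (s j).1 % 2 = 1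
  · obtain ⟨i, j, hi, hj⟩ := hmix
    exact mem_of_mixed_parity hC hinj hs hi hj
  have hpar : ∀ i j, (s i).1 % 2 = (s j).1 % 2 := fun i j => by
    have h1 : ¬ _ := fun h => hmix ⟨i, j, h⟩
    have h2 : ¬ _ := fun h => hmix ⟨j, i, h⟩
    omega
  have hne : ∀ i j, i ≠ j → (s i).1 ≠ (s j).1 := fun i j hij he => hij <| hinj <| by
    refine solution_ext (hs i) (hs j) ?_
    zify
    rw [← hs, ← hs, he]
  obtain ⟨k, hk⟩ := Finite.exists_max fun i => (s i).1
  have hC' := le_of_three_same_parity hs hne hpar hk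
  have hC'' : (C : ℤ) ≤ 144 * ((s k).1 : ℤ) ^ 4 := by exact_mod_cast hC'
  have hlt : (s k).1 < 112 :=
    Baker.lt_of_lucas_window (x := (s k).2.1) (y := (s k).2.2) (by rw [← hs]; omega)
      (by rw [← hs]; omega)
  obtain ⟨i, j, hij, hik, hjk⟩ : ∃ i j, i ≠ j ∧ i ≠ k ∧ j ≠ k := by
    clear * -
    revert k
    decide
  have hm := Sieve.mem_smallValues hlt (hs k) hC hC' (lt_of_le_of_ne (hk i) (hne i k hik))
    (hpar i k) (hs i) (lt_of_le_of_ne (hk j) (hne j k hjk)) (hpar j k) (hs j)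
    (lucas_injective.ne (hne i j hij))
  simp only [Sieve.smallValues, List.mem_cons, List.not_mem_nil, or_false] at hm
  rcases hm with h | h | h | h | h | h | h | h | h | h | h | h | h | h | h | h <;> subst h <;> simp

theorem lucas_pillai_neg (c : ℤ) (hc : c < 0) :
    (∃ s₁ s₂ s₃ : ℕ × ℕ × ℕ,
        s₁ ≠ s₂ ∧ s₁ ≠ s₃ ∧ s₂ ≠ s₃ ∧
        lucas s₁.1 - 2 ^ s₁.2.1 * 3 ^ s₁.2.2 = c ∧
        lucas s₂.1 - 2 ^ s₂.2.1 * 3 ^ s₂.2.2 = c ∧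
        lucas s₃.1 - 2 ^ s₃.2.1 * 3 ^ s₃.2.2 = c) ↔
      c ∈ ({-133, -97, -61, -52, -25, -21, -20, -17, -14, -9, -7, -6, -5, -3,
        -2, -1} : Set ℤ) := by
  constructor
  · rintro ⟨s₁, s₂, s₃, h12, h13, h23, e1, e2, e3⟩
    obtain ⟨C, rfl⟩ : ∃ C : ℕ, c = -C := ⟨c.natAbs, by omega⟩
    refine mem_of_three_solutions (by omega) (s := ![s₁, s₂, s₃]) ?_ ?_
    · intro i j hij
      fin_cases i <;> fin_cases j <;> simp_all
    · intro i
      fin_cases i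
      · change lucas s₁.1 + C = 2 ^ s₁.2.1 * 3 ^ s₁.2.2
        linarith
      · change lucas s₂.1 + C = 2 ^ s₂.2.1 * 3 ^ s₂.2.2
        linarith
      · change lucas s₃.1 + C = 2 ^ s₃.2.1 * 3 ^ s₃.2.2
        linarith
  · intro h
    simp only [Set.mem_insert_iff, Set.mem_singleton_iff] at h
    rcases h with rfl | rfl | rfl | rfl | rfl | rfl | rfl | rfl | rfl | rfl | rfl | rfl | rfl |
      rfl | rfl | rfl
    · exact ⟨(5, 4, 2), (7, 1, 4), (10, 8, 0), by decide⟩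
    · exact ⟨(5, 2, 3), (8, 4, 2), (16, 8, 2), by decide⟩
    · exact ⟨(2, 6, 0), (5, 3, 2), (8, 2, 3), by decide⟩
    · exact ⟨(0, 1, 3), (7, 0, 4), (9, 7, 0), by decide⟩
    · exact ⟨(0, 0, 3), (4, 5, 0), (5, 2, 2), by decide⟩
    · exact ⟨(2, 3, 1), (5, 5, 0), (10, 4, 2), by decide⟩
    · exact ⟨(3, 3, 1), (4, 0, 3), (9, 5, 1), by decide⟩
    · exact ⟨(1, 1, 2), (4, 3, 1), (8, 6, 0), by decide⟩
    · exact ⟨(0, 4, 0), (3, 1, 2), (6, 5, 0), by decide⟩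
    · exact ⟨(2, 2, 1), (4, 4, 0), (6, 0, 3), by decide⟩
    · exact ⟨(0, 0, 2), (1, 3, 0), (5, 1, 2), by decide⟩
    · exact ⟨(0, 3, 0), (2, 0, 2), (6, 3, 1), by decide⟩
    · exact ⟨(1, 1, 1), (2, 3, 0), (3, 0, 2), by decide⟩
    · exact ⟨(1, 2, 0), (2, 1, 1), (7, 5, 0), by decide⟩
    · exact ⟨(0, 2, 0), (1, 0, 1), (3, 1, 1), by decide⟩
    · exact ⟨(0, 0, 1), (1, 1, 0), (2, 2, 0), by decide⟩
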